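/- Let f ∈ ℬ be convenient and Newton nondegenerate. For every α ∈ ℚ, multiplication by u₁⋯uₙ maps W_α ℬ into 𝒩_α ℬ ∩ u₁⋯uₙ·ℬ and induces a well-defined ℂ-linear isomorphism λ_α : W_α ℬ / (ℐ ∩ W_α ℬ + W_{<α} ℬ) ⟶ (𝒩_α ℬ ∩ u₁⋯uₙ·ℬ) / (ℒ ∩ 𝒩_α ℬ ∩ u₁⋯uₙ·ℬ + 𝒩_{<α} ℬ ∩ u₁⋯uₙ·ℬ). In particular gr^W_α(ℬ/ℐ) is isomorphic to gr^𝒩_α((ℬ·u₁⋯uₙ + ℒ)/ℒ) for every α ∈ ℚ. -/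

import Mathlib

open MvPolynomial

namespace ToricNewton

section
variable {σ : Type*} [Fintype σ] [DecidableEq σ]

/-- Coercion of a lattice point of `ℕ^σ` into `ℝ^σ`. -/
def natToR (v : σ → ℕ) : σ → ℝ := fun i => (v i : ℝ)

/-- Coercion of an exponent (finitely supported) into `ℝ^σ`. -/
def toR (m : σ →₀ ℕ) : σ → ℝ := fun i => (m i : ℝ)

/-- The Newton polytope of a polynomial: the convex hull of `{0} ∪ supp f`. -/
noncomputable def newtonPolytope (f : MvPolynomial σ ℂ) : Set (σ → ℝ) :=
  convexHull ℝ ({0} ∪ (toR '' (f.support : Set (σ →₀ ℕ))))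

/-- The Newton function `ν`, which for a convenient polynomial is the gauge
(Minkowski functional) of the Newton polytope. -/
noncomputable def nu (f : MvPolynomial σ ℂ) (x : σ → ℝ) : ℝ :=
  gauge (newtonPolytope f) x

/-- `f` is convenient if for each variable `i` some pure power `uᵢ^k`, `k ≥ 1`,
occurs in `f` with nonzero coefficient. -/
def Convenient (f : MvPolynomial σ ℂ) : Prop :=
  ∀ i : σ, ∃ k : ℕ, 1 ≤ k ∧ f.coeff (Finsupp.single i k) ≠ 0

/-- `Δ` is a (nonempty exposed) closed face of `P`. -/
def IsFace (P Δ : Set (σ → ℝ)) : Prop :=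
  Δ.Nonempty ∧ ∃ (l : (σ → ℝ) →ₗ[ℝ] ℝ) (c : ℝ),
    (∀ x ∈ P, l x ≤ c) ∧ Δ = {x ∈ P | l x = c}

/-- A face of the Newton boundary: a closed face of the Newton polytope not
containing the origin. -/
def NBFace (f : MvPolynomial σ ℂ) (Δ : Set (σ → ℝ)) : Prop :=
  IsFace (newtonPolytope f) Δ ∧ (0 : σ → ℝ) ∉ Δ

open Classical in
/-- The truncation `g_Δ` of `g` to the monomials whose exponents lie in `Δ`. -/
noncomputable def faceRestrict (Δ : Set (σ → ℝ)) (g : MvPolynomial σ ℂ) : MvPolynomial σ ℂ :=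
  ∑ m ∈ g.support, if toR m ∈ Δ then monomial m (g.coeff m) else 0

/-- `f` is Newton nondegenerate: for every closed face `Δ` of the Newton boundary
the system `(u₁ ∂f/∂u₁)_Δ = ⋯ = (uₙ ∂f/∂uₙ)_Δ = 0` has no solution in `(ℂ*)ⁿ`. -/
def Nondegenerate (f : MvPolynomial σ ℂ) : Prop :=
  ∀ Δ : Set (σ → ℝ), NBFace f Δ →
    ¬ ∃ x : σ → ℂ, (∀ i, x i ≠ 0) ∧
        ∀ i, eval x (faceRestrict Δ (X i * pderiv i f)) = 0

/-- The ideal `ℒ` generated by the `uᵢ ∂f/∂uᵢ`. -/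
noncomputable def LIdeal (f : MvPolynomial σ ℂ) : Ideal (MvPolynomial σ ℂ) :=
  Ideal.span (Set.range fun i => X i * pderiv i f)

/-- The Jacobian ideal `ℐ` generated by the `∂f/∂uᵢ`. -/
noncomputable def IIdeal (f : MvPolynomial σ ℂ) : Ideal (MvPolynomial σ ℂ) :=
  Ideal.span (Set.range fun i => pderiv i f)

/-- The Newton filtration `𝒩_α ℬ`: the span of the monomials `u^m` with `ν(m) ≤ α`. -/
noncomputable def Nle (f : MvPolynomial σ ℂ) (α : ℝ) : Submodule ℂ (MvPolynomial σ ℂ) where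
  carrier := {g | ∀ m ∈ g.support, nu f (toR m) ≤ α}
  zero_mem' := by simp
  add_mem' := by
    intro a b ha hb m hm
    rcases Finset.mem_union.mp (MvPolynomial.support_add hm) with h | h
    · exact ha m h
    · exact hb m h
  smul_mem' := by
    intro c a ha m hm
    exact ha m (MvPolynomial.support_smul hm)

/-- The filtration `𝒩_{<α} ℬ`. -/
noncomputable def Nlt (f : MvPolynomial σ ℂ) (α : ℝ) : Submodule ℂ (MvPolynomial σ ℂ) where
  carrier := {g | ∀ m ∈ g.support, nu f (toR m) < α}
  zero_mem' := by simp
  add_mem' := by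
    intro a b ha hb m hm
    rcases Finset.mem_union.mp (MvPolynomial.support_add hm) with h | h
    · exact ha m h
    · exact hb m h
  smul_mem' := by
    intro c a ha m hm
    exact ha m (MvPolynomial.support_smul hm)

/-- The twisted filtration `W_α ℬ`: the span of the monomials `u^m` with
`ν(m + (1,…,1)) ≤ α`. -/
noncomputable def Wle (f : MvPolynomial σ ℂ) (α : ℝ) : Submodule ℂ (MvPolynomial σ ℂ) where
  carrier := {g | ∀ m ∈ g.support, nu f (toR m + 1) ≤ α}
  zero_mem' := by simp
  add_mem' := by
    intro a b ha hb m hm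
    rcases Finset.mem_union.mp (MvPolynomial.support_add hm) with h | h
    · exact ha m h
    · exact hb m h
  smul_mem' := by
    intro c a ha m hm
    exact ha m (MvPolynomial.support_smul hm)

/-- The twisted filtration `W_{<α} ℬ`. -/
noncomputable def Wlt (f : MvPolynomial σ ℂ) (α : ℝ) : Submodule ℂ (MvPolynomial σ ℂ) where
  carrier := {g | ∀ m ∈ g.support, nu f (toR m + 1) < α}
  zero_mem' := by simp
  add_mem' := by
    intro a b ha hb m hm
    rcases Finset.mem_union.mp (MvPolynomial.support_add hm) with h | h
    · exact ha m h
    · exact hb m h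
  smul_mem' := by
    intro c a ha m hm
    exact ha m (MvPolynomial.support_smul hm)

/-- The graded piece `gr^𝒩_α(ℬ/ℒ) = (𝒩_α ℬ + ℒ)/(𝒩_{<α} ℬ + ℒ)`, realized as the
image of `𝒩_α ℬ + ℒ` in `ℬ/(𝒩_{<α} ℬ + ℒ)`. -/
noncomputable def grN (f : MvPolynomial σ ℂ) (α : ℝ) :
    Submodule ℂ (MvPolynomial σ ℂ ⧸ (Nlt f α ⊔ (LIdeal f).restrictScalars ℂ)) :=
  Submodule.map (Nlt f α ⊔ (LIdeal f).restrictScalars ℂ).mkQ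
    (Nle f α ⊔ (LIdeal f).restrictScalars ℂ)

/-- `dim_ℂ gr^𝒩_α(ℬ/ℒ)`. -/
noncomputable def grDim (f : MvPolynomial σ ℂ) (α : ℝ) : ℕ :=
  Module.finrank ℂ (grN f α)

/-- The graded piece `gr^W_α(ℬ/ℐ) = (W_α ℬ + ℐ)/(W_{<α} ℬ + ℐ)`. -/
noncomputable def grW (f : MvPolynomial σ ℂ) (α : ℝ) :
    Submodule ℂ (MvPolynomial σ ℂ ⧸ (Wlt f α ⊔ (IIdeal f).restrictScalars ℂ)) :=
  Submodule.map (Wlt f α ⊔ (IIdeal f).restrictScalars ℂ).mkQ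
    (Wle f α ⊔ (IIdeal f).restrictScalars ℂ)

/-- `dim_ℂ gr^W_α(ℬ/ℐ)`. -/
noncomputable def grWDim (f : MvPolynomial σ ℂ) (α : ℝ) : ℕ :=
  Module.finrank ℂ (grW f α)

/-- The dimension of a face, i.e. of the direction of its affine span. -/
noncomputable def faceDim (Δ : Set (σ → ℝ)) : ℕ :=
  Module.finrank ℝ (affineSpan ℝ Δ).direction

/-- `Δ` is a simplex: the convex hull of an affinely independent family. -/
def IsSimplex (Δ : Set (σ → ℝ)) : Prop :=
  ∃ (k : ℕ) (p : Fin (k + 1) → (σ → ℝ)), AffineIndependent ℝ p ∧ Δ = convexHull ℝ (Set.range p)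

/-- The union of the coordinate hyperplanes. -/
def coordHyperplanes (σ : Type*) : Set (σ → ℝ) := ⋃ i : σ, {x : σ → ℝ | x i = 0}

/-- `Box(Δ)`: the set of combinations `Σ q_ℓ b_ℓ`, `q_ℓ ∈ [0,1)`, of the vertices
(extreme points) of `Δ`. -/
def Box (Δ : Set (σ → ℝ)) : Set (σ → ℝ) :=
  {x | ∃ s : Finset (σ → ℝ), ↑s ⊆ Δ.extremePoints ℝ ∧
      ∃ q : (σ → ℝ) → ℝ, (∀ b ∈ s, 0 ≤ q b ∧ q b < 1) ∧ x = ∑ b ∈ s, q b • b}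

/-- `Δ ∈ ℱ(P)`: a closed face of the Newton polytope of `f` not contained in the
union of the coordinate hyperplanes. -/
def FcalMem (f : MvPolynomial σ ℂ) (Δ : Set (σ → ℝ)) : Prop :=
  IsFace (newtonPolytope f) Δ ∧ ¬ Δ ⊆ coordHyperplanes σ

/-- `Box(P)`: the union of `Box(Δ)` over the closed faces of the Newton boundary
not contained in the union of the coordinate hyperplanes. -/
def BoxP (f : MvPolynomial σ ℂ) : Set (σ → ℝ) :=
  ⋃ Δ ∈ {Δ : Set (σ → ℝ) | NBFace f Δ ∧ ¬ Δ ⊆ coordHyperplanes σ}, Box Δ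

/-- The cone `ℝ₊·Δ` over `Δ`. -/
def cone0 (Δ : Set (σ → ℝ)) : Set (σ → ℝ) :=
  {x | ∃ t : ℝ, 0 ≤ t ∧ ∃ y ∈ Δ, x = t • y}

/-- The restriction of `f` obtained by setting the variables in `S` to zero. -/
noncomputable def restrictZero (S : Finset σ) (f : MvPolynomial σ ℂ) :
    MvPolynomial {j : σ // j ∉ S} ℂ :=
  aeval (fun j : σ => if h : j ∉ S then X (⟨j, h⟩ : {j : σ // j ∉ S}) else 0) f

end

end ToricNewton

namespace ToricNewton

/-- The monomial `u₁⋯uₙ`. -/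
noncomputable def uProd (n : ℕ) : MvPolynomial (Fin n) ℂ := ∏ i, X i

/-- The submodule `u₁⋯uₙ·ℬ ⊆ ℬ`. -/
noncomputable def uB (n : ℕ) : Submodule ℂ (MvPolynomial (Fin n) ℂ) :=
  LinearMap.range (LinearMap.mulLeft ℂ (uProd n))

/-- The submodule `𝒩_α ℬ ∩ u₁⋯uₙ·ℬ`. -/
noncomputable def NcapU {n : ℕ} (f : MvPolynomial (Fin n) ℂ) (α : ℝ) :
    Submodule ℂ (MvPolynomial (Fin n) ℂ) :=
  Nle f α ⊓ uB n

/-- The denominator `ℐ ∩ W_α ℬ + W_{<α} ℬ`, viewed inside `W_α ℬ`. -/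
noncomputable def D1 {n : ℕ} (f : MvPolynomial (Fin n) ℂ) (α : ℝ) :
    Submodule ℂ ↥(Wle f α) :=
  (((IIdeal f).restrictScalars ℂ ⊓ Wle f α) ⊔ Wlt f α).comap (Wle f α).subtype

/-- The denominator `ℒ ∩ 𝒩_α ℬ ∩ u₁⋯uₙ·ℬ + 𝒩_{<α} ℬ ∩ u₁⋯uₙ·ℬ`, viewed inside
`𝒩_α ℬ ∩ u₁⋯uₙ·ℬ`. -/
noncomputable def D2 {n : ℕ} (f : MvPolynomial (Fin n) ℂ) (α : ℝ) :
    Submodule ℂ ↥(NcapU f α) :=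
  (((LIdeal f).restrictScalars ℂ ⊓ Nle f α ⊓ uB n) ⊔ (Nlt f α ⊓ uB n)).comap
    (NcapU f α).subtype

end ToricNewton

/-!
Multiplication by `u = u₁⋯uₙ` identifies `W_α` with `𝒩_α ∩ uℬ`, so what has to be shown is
strictness: if `u g ∈ 𝒩_α` lies in `𝒩_{<α} + ℒ`, then modulo terms of lower order `g` is a
combination `∑ qᵢ ∂f/∂uᵢ` with `u qᵢ ∂f/∂uᵢ` again of order at most `α`.

In the associated graded module of the Newton filtration, the logarithmic derivatives
`uᵢ ∂f/∂uᵢ` act through their symbols. For a set `U` of variables consider the submodule spanned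
by the monomials divisible by every variable in `U`. A generically shifted simplicial subdivision of
the Newton fan decomposes these monomials into translates of simplicial semigroups, which makes the
submodule free over `n` power symbols, hence Cohen–Macaulay. By nondegeneracy the logarithmic
symbols `Fᵢ` vanish together only at the origin (any other common zero in the support of the
module would come from a point of the torus violating nondegeneracy on some face), so they are a
system of parameters and therefore a regular sequence on every such submodule.

Regularity for all `U` at once is what allows division: if `∑ Fᵢ xᵢ` is divisible by `u`, then the
`xᵢ` can be rechosen divisible by all the variables except `uᵢ`, and `uᵢ ∂f/∂uᵢ · xᵢ` becomes
`u ∂f/∂uᵢ` times a polynomial.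
-/

namespace ToricNewton

/-! ### Systems of parameters of Cohen–Macaulay modules -/

section CohenMacaulay

open RingTheory.Sequence IsLocalRing Pointwise CategoryTheory

variable {R : Type*} [CommRing R] [IsNoetherianRing R] [IsLocalRing R]
  {M : Type*} [AddCommGroup M] [Module R M] [Module.Finite R M]

theorem exists_notMem_smul_top_of_ne_zero {x : R} (hx : x ∈ maximalIdeal R)
    {P : Ideal R} {a : M} (ha : a ≠ 0) (hP : ∀ r ∈ P, r • a = 0) (hreg : IsSMulRegular M x) :
    ∃ b : M, b ∉ x • (⊤ : Submodule R M) ∧ ∀ r ∈ P, r • b = 0 := by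
  have hdiv : ∃ k, ¬ ∃ b : M, x ^ k • b = a := by
    by_contra! h
    refine ha ((Submodule.mem_bot R).mp ?_)
    rw [← Ideal.iInf_pow_smul_eq_bot_of_isLocalRing (M := M) (maximalIdeal R)
      (Ideal.IsPrime.ne_top inferInstance), Submodule.mem_iInf]
    intro k
    obtain ⟨b, rfl⟩ := h k
    exact Submodule.smul_mem_smul (Ideal.pow_mem_pow hx k) trivial
  classical
  obtain ⟨k, hk⟩ : ∃ k, Nat.find hdiv = k + 1 :=
    Nat.exists_eq_succ_of_ne_zero fun h => Nat.find_spec hdiv ⟨a, by rw [h, pow_zero, one_smul]⟩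
  obtain ⟨b, hb⟩ := not_not.mp (Nat.find_min hdiv (m := k) (by omega))
  refine ⟨b, fun hmem => ?_, fun r hr => hreg.pow k ?_⟩
  · obtain ⟨c, -, rfl⟩ := Submodule.mem_smul_pointwise_iff_exists _ _ _ |>.mp hmem
    exact Nat.find_spec hdiv ⟨c, by rw [hk, pow_succ, mul_smul, hb]⟩
  · simp only [smul_zero]
    rw [smul_comm, hb, hP r hr]

theorem length_le_coheight_of_isWeaklyRegular (rs : List R) (hrs : ∀ r ∈ rs, r ∈ maximalIdeal R)
    (hreg : IsWeaklyRegular M rs) (P : PrimeSpectrum R) {a : M} (ha : a ≠ 0)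
    (hP : ∀ r ∈ P.asIdeal, r • a = 0) : (rs.length : ℕ∞) ≤ Order.coheight P := by
  induction rs generalizing M P with
  | nil => simp
  | cons x rs ih =>
    obtain ⟨hx, hreg⟩ := (isWeaklyRegular_cons_iff M x rs).mp hreg
    obtain ⟨b, hb, hbP⟩ := exists_notMem_smul_top_of_ne_zero (hrs x (by simp)) ha hP hx
    have hb' : (Submodule.Quotient.mk b : QuotSMulTop x M) ≠ 0 := by
      rwa [Ne, Submodule.Quotient.mk_eq_zero]
    obtain ⟨Q, hQ, hQb⟩ := exists_le_isAssociatedPrime_of_isNoetherianRing R _ hb'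
    obtain ⟨hQp, c, hQc⟩ := isAssociatedPrime_iff.mp hQ
    have hc : c ≠ 0 := by
      rintro rfl
      exact hQp.ne_top (by simp [hQc])
    have hPQ : P < ⟨Q, hQp⟩ := by
      refine lt_of_le_of_ne (fun r hr => hQb ?_) fun h => ha (hx ?_)
      · rw [Submodule.mem_colon_singleton, ← Submodule.Quotient.mk_smul, hbP r hr]
        simp
      · have : x ∈ Q := hQb (by
          rw [Submodule.mem_colon_singleton, Submodule.mem_bot, ← Submodule.Quotient.mk_smul,
            Submodule.Quotient.mk_eq_zero]
          exact Submodule.smul_mem_pointwise_smul b x ⊤ trivial)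
        simpa using hP x (h ▸ this)
    have := ih (fun r hr => hrs r (by simp [hr])) hreg ⟨Q, hQp⟩ hc fun r hr => by
      change r ∈ Q at hr
      rwa [hQc, Submodule.mem_colon_singleton] at hr
    calc ((x :: rs).length : ℕ∞) = rs.length + 1 := by simp
      _ ≤ Order.coheight (⟨Q, hQp⟩ : PrimeSpectrum R) + 1 := by gcongr
      _ ≤ Order.coheight P := Order.coheight_add_one_le hPQ

omit [Module.Finite R M] in
theorem coheight_le_length_of_maximalIdeal_le_radical (gs : List R)
    (P : PrimeSpectrum R) (hrad : maximalIdeal R ≤ (Ideal.ofList gs ⊔ P.asIdeal).radical)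
    (hgs : ∀ g ∈ gs, g ∈ maximalIdeal R) :
    Order.coheight P ≤ gs.length := by
  classical
  let π := Ideal.Quotient.mk P.asIdeal
  have hloc : IsLocalRing (R ⧸ P.asIdeal) := .of_surjective' π Ideal.Quotient.mk_surjective
  have hπ : IsLocalHom π := .of_surjective π Ideal.Quotient.mk_surjective
  have hmin : maximalIdeal (R ⧸ P.asIdeal) ∈
      (Ideal.span ((gs.map π).toFinset : Set (R ⧸ P.asIdeal))).minimalPrimes := by
    refine ⟨⟨inferInstance, ?_⟩, fun Q ⟨hQ, hle⟩ _ => ?_⟩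
    · rw [Ideal.span_le]
      intro y hy
      obtain ⟨g, hg, rfl⟩ := List.mem_map.mp (List.mem_toFinset.mp hy)
      exact map_nonunit π g (hgs g hg)
    · have hcomap : maximalIdeal R ≤ Q.comap π := by
        refine hrad.trans ((Ideal.IsPrime.radical_le_iff inferInstance).mpr (sup_le ?_ ?_))
        · exact Ideal.span_le.mpr fun g hg =>
            hle (Ideal.subset_span (List.mem_toFinset.mpr (List.mem_map_of_mem hg)))
        · intro p hp
          rw [Ideal.mem_comap, Ideal.Quotient.eq_zero_iff_mem.mpr hp]
          exact Q.zero_mem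
      intro y hy
      obtain ⟨x, rfl⟩ := Ideal.Quotient.mk_surjective y
      exact hcomap fun hx => hy (hx.map π)
  have hdim : ringKrullDim (R ⧸ P.asIdeal) = Order.coheight P := by
    rw [ringKrullDim_quotient, Order.coheight_eq_krullDim_Ici]
    congr
  rw [← WithBot.coe_le_coe, ← hdim, ← maximalIdeal_height_eq_ringKrullDim, WithBot.coe_le_coe]
  refine (Ideal.height_le_card_of_mem_minimalPrimes_span_finset hmin).trans ?_
  exact_mod_cast (List.toFinset_card_le _).trans_eq (List.length_map _)

theorem isSMulRegular_of_maximalIdeal_le_radical {g : R} {gs rs : List R}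
    (hgs : ∀ r ∈ g :: gs, r ∈ maximalIdeal R)
    (hrad : maximalIdeal R ≤ (Ideal.ofList (g :: gs) ⊔ Module.annihilator R M).radical)
    (hlen : gs.length < rs.length) (hrs : ∀ r ∈ rs, r ∈ maximalIdeal R)
    (hreg : IsWeaklyRegular M rs) : IsSMulRegular M g := by
  by_contra hg
  have : g ∈ ⋃ p ∈ associatedPrimes R M, (p : Set R) := by
    rw [biUnion_associatedPrimes_eq_compl_regular]
    exact hg
  simp only [Set.mem_iUnion] at this
  obtain ⟨P, hP, hgP⟩ := this
  obtain ⟨hPp, a, hPa⟩ := isAssociatedPrime_iff.mp hP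
  have ha : a ≠ 0 := by
    rintro rfl
    exact hPp.ne_top (by simp [hPa])
  have hann : Module.annihilator R M ≤ P := fun r hr => by
    rw [hPa, Submodule.mem_colon_singleton, Module.mem_annihilator.mp hr a]
    exact zero_mem _
  have hle := length_le_coheight_of_isWeaklyRegular rs hrs hreg ⟨P, hPp⟩ ha fun r hr => by
    change r ∈ P at hr
    rwa [hPa, Submodule.mem_colon_singleton] at hr
  have hge := coheight_le_length_of_maximalIdeal_le_radical gs ⟨P, hPp⟩
    (hrad.trans (Ideal.radical_mono ?_)) fun r hr => hgs r (by simp [hr])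
  · exact absurd (hle.trans hge) (by exact_mod_cast hlen.not_ge)
  · rw [Ideal.ofList_cons]
    refine sup_le (sup_le ?_ le_sup_left) (hann.trans le_sup_right)
    exact ((Ideal.span_singleton_le_iff_mem _).mpr hgP).trans le_sup_right

universe u

theorem exists_isRegular_quotSMulTop {R M : Type u} [CommRing R] [IsNoetherianRing R]
    [IsLocalRing R] [AddCommGroup M] [Module R M] [Module.Finite R M] [Nontrivial M] {g : R}
    (hg : IsSMulRegular M g) (hgm : g ∈ maximalIdeal R) {n : ℕ} {rs : List R}
    (hlen : rs.length = n + 1) (hrs : ∀ r ∈ rs, r ∈ maximalIdeal R) (hreg : IsWeaklyRegular M rs) :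
    ∃ rs' : List R, rs'.length = n ∧ (∀ r ∈ rs', r ∈ maximalIdeal R) ∧
      IsRegular (QuotSMulTop g M) rs' := by
  have hlt (N : Type u) [AddCommGroup N] [Module R N] [Module.Finite R N] [Nontrivial N] :
      maximalIdeal R • (⊤ : Submodule R N) < ⊤ :=
    (Submodule.top_ne_ideal_smul_of_le_jacobson_annihilator
      (maximalIdeal_le_jacobson _)).symm.lt_top
  let k := ModuleCat.of R (R ⧸ maximalIdeal R)
  have hsupp : Module.support R k = PrimeSpectrum.zeroLocus (maximalIdeal R) := by
    rw [Module.support_eq_zeroLocus, Ideal.annihilator_quotient]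
  have hext := ModuleCat.subsingleton_ext_of_exists_isRegular (maximalIdeal R) k hsupp.le
    (ModuleCat.of R M) (hlt M) rs hrs
    (.of_isWeaklyRegular_of_mem_maximalIdeal M hrs hreg)
  have : Nontrivial (QuotSMulTop g M) := nontrivial_quotSMulTop_of_mem_maximalIdeal M hgm
  refine ModuleCat.exists_isRegular_of_exists_subsingleton_ext (maximalIdeal R) n
    (ModuleCat.of R (QuotSMulTop g M)) (hlt _) k hsupp fun i hi => ?_
  have hgM : IsSMulRegular (ModuleCat.of R M) g := hg
  have hsrc := AddCommGrpCat.isZero_of_iff_subsingleton.mpr (hext i (by omega))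
  have htgt := AddCommGrpCat.isZero_of_iff_subsingleton.mpr (hext (i + 1) (by omega))
  exact AddCommGrpCat.subsingleton_of_isZero <| ShortComplex.Exact.isZero_of_both_zeros
    (Abelian.Ext.covariant_sequence_exact₃' k hgM.smulShortComplex_shortExact i (i + 1) rfl)
    (hsrc.eq_zero_of_src _) (htgt.eq_zero_of_tgt _)

theorem isWeaklyRegular_of_subsingleton {R M : Type*} [CommRing R] [AddCommGroup M] [Module R M]
    [Subsingleton M] (rs : List R) : IsWeaklyRegular M rs := by
  induction rs generalizing M with
  | nil => exact .nil R M
  | cons r rs ih =>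
    have : Subsingleton (QuotSMulTop r M) := (Submodule.mkQ_surjective _).subsingleton
    exact .cons (Function.injective_of_subsingleton _) ih

theorem exists_isWeaklyRegular_quotSMulTop {R M : Type u} [CommRing R] [IsNoetherianRing R]
    [IsLocalRing R] [AddCommGroup M] [Module R M] [Module.Finite R M] {g : R}
    (hg : IsSMulRegular M g) (hgm : g ∈ maximalIdeal R) {n : ℕ} {rs : List R}
    (hlen : rs.length = n + 1) (hrs : ∀ r ∈ rs, r ∈ maximalIdeal R)
    (hreg : IsWeaklyRegular M rs) :
    ∃ rs' : List R, rs'.length = n ∧ (∀ r ∈ rs', r ∈ maximalIdeal R) ∧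
      IsWeaklyRegular (QuotSMulTop g M) rs' := by
  rcases subsingleton_or_nontrivial M with hM | hM
  · refine ⟨rs.tail, by simp [hlen], fun r hr => hrs r (List.mem_of_mem_tail hr), ?_⟩
    exact isWeaklyRegular_of_subsingleton _
  · obtain ⟨rs', h1, h2, h3⟩ := exists_isRegular_quotSMulTop hg hgm hlen hrs hreg
    exact ⟨rs', h1, h2, h3.toIsWeaklyRegular⟩

/-- `rs` witnesses that `M` is Cohen–Macaulay, and `gs` is a system of parameters. -/
theorem isWeaklyRegular_of_maximalIdeal_le_radical {R M : Type u} [CommRing R] [IsNoetherianRing R]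
    [IsLocalRing R] [AddCommGroup M] [Module R M] [Module.Finite R M] (gs rs : List R)
    (hlen : rs.length = gs.length) (hgs : ∀ g ∈ gs, g ∈ maximalIdeal R)
    (hrad : maximalIdeal R ≤ (Ideal.ofList gs ⊔ Module.annihilator R M).radical)
    (hrs : ∀ r ∈ rs, r ∈ maximalIdeal R) (hreg : IsWeaklyRegular M rs) :
    IsWeaklyRegular M gs := by
  induction gs generalizing M rs with
  | nil => simp
  | cons g gs ih =>
    have hg : IsSMulRegular M g :=
      isSMulRegular_of_maximalIdeal_le_radical hgs hrad (by simp [hlen]) hrs hreg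
    obtain ⟨rs', hlen', hrs', hreg'⟩ :=
      exists_isWeaklyRegular_quotSMulTop hg (hgs g (by simp)) hlen hrs hreg
    refine (isWeaklyRegular_cons_iff M g gs).mpr ⟨hg, ih rs' hlen'
      (fun r hr => hgs r (by simp [hr])) (hrad.trans (Ideal.radical_mono ?_)) hrs' hreg'⟩
    rw [Ideal.ofList_cons]
    have hquot : Module.annihilator R M ≤ Module.annihilator R (QuotSMulTop g M) :=
      (Submodule.mkQ (g • (⊤ : Submodule R M))).annihilator_le_of_surjective
        (Submodule.mkQ_surjective _)
    refine sup_le (sup_le ?_ le_sup_left) (hquot.trans le_sup_right)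
    exact (Ideal.span_singleton_le_iff_mem _).mpr
      (Ideal.mem_sup_right (QuotSMulTop.mem_annihilator M g))

end CohenMacaulay

section Twist

open Pointwise

variable {R M ι : Type*} [CommRing R] [AddCommGroup M] [Module R M]
  {F : ι → R}

theorem iSup_smul_smul_mem {T : Finset ι} {r : R} {N N' : Submodule R M} (h : ∀ x ∈ N, r • x ∈ N')
    {x : M} (hx : x ∈ ⨆ i ∈ T, F i • N) : r • x ∈ ⨆ i ∈ T, F i • N' := by
  suffices ⨆ i ∈ T, F i • N ≤ (⨆ i ∈ T, F i • N').comap (LinearMap.lsmul R M r) from this hx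
  refine iSup₂_le fun i hi => ?_
  rintro _ ⟨y, hy, rfl⟩
  refine Submodule.mem_iSup_of_mem i (Submodule.mem_iSup_of_mem hi ?_)
  exact ⟨r • y, h y hy, smul_comm _ _ _⟩

theorem mem_iSup_smul_erase [DecidableEq ι] {J : Finset ι → Submodule R M} (hJ : Antitone J)
    (hF : ∀ k U, ∀ x ∈ J U, F k • x ∈ J (insert k U))
    (hreg : ∀ (U T : Finset ι), ∀ j ∉ T, ∀ x ∈ J U,
      F j • x ∈ ⨆ i ∈ T, F i • J U → x ∈ ⨆ i ∈ T, F i • J U)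
    (T V : Finset ι) {x : M} (hxV : x ∈ J V) (hxT : x ∈ ⨆ i ∈ T, F i • J ∅) :
    x ∈ ⨆ i ∈ T, F i • J (V.erase i) := by
  induction h : T.card + V.card using Nat.strong_induction_on generalizing T V x with
  | _ d ih =>
  subst h
  by_cases hTV : ∃ j ∈ T, j ∈ V
  · obtain ⟨j, hjT, hjV⟩ := hTV
    have hx := ih _ (by simp [Finset.card_erase_lt_of_mem hjV]) T (V.erase j)
      (hJ (Finset.erase_subset _ _) hxV) hxT rfl
    rw [← Finset.insert_erase hjT, Finset.iSup_insert] at hx ⊢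
    obtain ⟨_, ⟨b, hb, rfl⟩, z, hz, rfl⟩ := Submodule.mem_sup.mp hx
    rw [Finset.erase_idem] at hb
    have hbV : F j • b ∈ J V := by
      simpa only [Finset.insert_erase hjV] using hF j _ b hb
    refine Submodule.add_mem_sup ⟨b, hb, rfl⟩
      (ih _ (by simp [Finset.card_erase_lt_of_mem hjT]) (T.erase j) V ?_ ?_ rfl)
    · exact (Submodule.add_mem_iff_right _ hbV).mp hxV
    · have hle : ⨆ i ∈ T.erase j, F i • J ((V.erase j).erase i) ≤ ⨆ i ∈ T.erase j, F i • J ∅ :=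
        iSup₂_mono fun i _ => Submodule.map_mono (hJ (Finset.empty_subset _))
      exact hle hz
  · have herase : ∀ i ∈ T, V.erase i = V := fun i hi =>
      Finset.erase_eq_of_notMem fun hiV => hTV ⟨i, hi, hiV⟩
    rw [biSup_congr fun i hi => congrArg (F i • J ·) (herase i hi)]
    obtain rfl | ⟨v, hv⟩ := V.eq_empty_or_nonempty
    · exact hxT
    have hx := ih _ (by simp [Finset.card_erase_lt_of_mem hv]) T (V.erase v)
      (hJ (Finset.erase_subset _ _) hxV) hxT rfl
    rw [biSup_congr fun i hi => congrArg (F i • J ·)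
      (show (V.erase v).erase i = V.erase v by rw [Finset.erase_right_comm, herase i hi])] at hx
    refine hreg V T v (fun h => hTV ⟨v, h, hv⟩) x hxV (iSup_smul_smul_mem (fun y hy => ?_) hx)
    simpa only [Finset.insert_erase hv] using hF v _ y hy

end Twist

section Triangular

open Module

variable {K ι α M N : Type*} [CommRing K] [LinearOrder α] [AddCommGroup M] [Module K M]
  [AddCommGroup N] [Module K N] (b : Basis ι K N) (e : Basis ι K M) (wt : ι → α) (Ψ : N →ₗ[K] M)

theorem injective_of_sub_mem_span_lt
    (hΨ : ∀ i, Ψ (b i) - e i ∈ Submodule.span K (e '' {j | wt j < wt i})) :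
    Function.Injective Ψ := by
  classical
  refine (injective_iff_map_eq_zero Ψ).mpr fun x hx => by_contra fun hx0 => ?_
  have hne : (b.repr x).support.Nonempty := by simpa using hx0
  obtain ⟨i, hi, hmax⟩ := Finset.exists_max_image _ wt hne
  have hcoeff (j) (hj : wt j ≤ wt i) : e.repr (Ψ (b j)) i = e.repr (e j) i := by
    rw [← sub_eq_zero, ← Finsupp.sub_apply, ← map_sub]
    by_contra h
    exact hj.not_gt ((e.mem_span_image.mp (hΨ j)) (Finsupp.mem_support_iff.mpr h))
  refine Finsupp.mem_support_iff.mp hi ?_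
  calc b.repr x i = ∑ j ∈ (b.repr x).support, b.repr x j * e.repr (e j) i := by
        simp only [Basis.repr_self, Finsupp.single_apply, mul_ite, mul_one, mul_zero,
          Finset.sum_ite_eq', if_pos hi]
    _ = ∑ j ∈ (b.repr x).support, b.repr x j * e.repr (Ψ (b j)) i :=
        Finset.sum_congr rfl fun j hj => by rw [hcoeff j (hmax j hj)]
    _ = e.repr (Ψ x) i := by
        conv_rhs => rw [← b.linearCombination_repr x, Finsupp.linearCombination_apply, Finsupp.sum]
        simp
    _ = 0 := by simp [hx]

variable {e wt} in
theorem eq_top_of_sub_mem_span_lt {P : Submodule K M} (hfin : ∀ i, {j | wt j < wt i}.Finite)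
    (hP : ∀ i, ∃ y ∈ P, y - e i ∈ Submodule.span K (e '' {j | wt j < wt i})) : P = ⊤ := by
  have hmem (i) : e i ∈ P := by
    induction h : {j | wt j < wt i}.ncard using Nat.strong_induction_on generalizing i with
    | _ d ih =>
    have hlower : Submodule.span K (e '' {j | wt j < wt i}) ≤ P := by
      rw [Submodule.span_le]
      rintro _ ⟨j, hj, rfl⟩
      have hssub : {k | wt k < wt j} ⊂ {k | wt k < wt i} :=
        ⟨fun k hk => lt_trans hk hj, fun hle => lt_irrefl _ (hle hj)⟩
      exact ih _ (h ▸ Set.ncard_lt_ncard hssub (hfin i)) j rfl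
    obtain ⟨y, hy, hyi⟩ := hP i
    exact (Submodule.sub_mem_iff_right _ hy).mp (hlower hyi)
  rw [← top_le_iff, ← e.span_eq, Submodule.span_le]
  rintro _ ⟨i, rfl⟩
  exact hmem i

end Triangular

section Regular

open RingTheory.Sequence
open scoped TensorProduct

variable (K : Type*) {σ : Type*} [CommRing K]

theorem isWeaklyRegular_map_X {l : List σ} (hl : l.Nodup) :
    IsWeaklyRegular (MvPolynomial σ K) (l.map (MvPolynomial.X (R := K))) := by
  refine (isWeaklyRegular_iff _ _).mpr fun k hk => ?_
  rw [List.length_map] at hk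
  have hideal : Ideal.ofList ((l.map (MvPolynomial.X (R := K))).take k) =
      Ideal.span (MvPolynomial.X '' {j | j ∈ l.take k}) := by
    refine congrArg Ideal.span (Set.ext fun p => ?_)
    simp only [← List.map_take, List.mem_map, Set.mem_ofPred_eq, Set.mem_image]
  have hnotMem : l[k] ∉ l.take k := fun hmem => by
    obtain ⟨j, hj, hjk⟩ := List.mem_take_iff_getElem.mp hmem
    have := (List.Nodup.getElem_inj_iff hl).mp hjk
    omega
  refine (isSMulRegular_quotient_iff_mem_of_smul_mem _ _).mpr fun q hq => ?_
  rw [smul_eq_mul, Ideal.mul_top, hideal, MvPolynomial.mem_ideal_span_X_image] at hq ⊢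
  intro m hm
  obtain ⟨j, hj, hmj⟩ := hq (Finsupp.single l[k] 1 + m) <| by
    simpa only [MvPolynomial.mem_support_iff, List.getElem_map, smul_eq_mul,
      MvPolynomial.coeff_X_mul] using hm
  refine ⟨j, hj, ?_⟩
  have hne : j ≠ l[k] := fun h => hnotMem (h ▸ hj)
  rwa [Finsupp.add_apply, Finsupp.single_eq_of_ne hne, zero_add] at hmj

theorem isWeaklyRegular_of_flat {R M : Type*} [CommRing R] [AddCommGroup M] [Module R M]
    [Module.Flat R M] {rs : List R} (h : IsWeaklyRegular R rs) : IsWeaklyRegular M rs :=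
  (TensorProduct.lid R M).isWeaklyRegular_congr rs |>.mp h.isWeaklyRegular_rTensor

variable {K}

theorem exists_basis_prod_pow [Fintype σ] {ι : Type*} [Fintype ι] (h : Module.Basis ι K (σ → K)) :
    ∃ 𝓑 : Module.Basis (ι →₀ ℕ) K (MvPolynomial σ K),
      ∀ k, 𝓑 k = ∏ i, (∑ j, h i j • MvPolynomial.X j) ^ k i := by
  classical
  let φ := (SymmetricAlgebra.equivMvPolynomial h).symm.trans
    (SymmetricAlgebra.equivMvPolynomial (Pi.basisFun K σ))
  have hX (i : ι) : φ (MvPolynomial.X i) = ∑ j, h i j • MvPolynomial.X j := by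
    have hsum : h i = ∑ j, h i j • Pi.basisFun K σ j := ((Pi.basisFun K σ).sum_repr (h i)).symm
    rw [AlgEquiv.trans_apply, SymmetricAlgebra.equivMvPolynomial_symm_X]
    conv_lhs => rw [hsum]
    simp only [map_sum, map_smul, SymmetricAlgebra.equivMvPolynomial_ι_apply]
  refine ⟨(MvPolynomial.basisMonomials ι K).map φ.toLinearEquiv, fun k => ?_⟩
  rw [Module.Basis.map_apply, MvPolynomial.coe_basisMonomials]
  change φ (MvPolynomial.monomial k 1) = _
  rw [MvPolynomial.monomial_eq, map_one, one_mul, Finsupp.prod_fintype _ _ fun i => pow_zero _]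
  simp only [map_prod, map_pow, hX]

variable {A M I : Type*} {β : Type*} [CommRing A] [Algebra K A] [AddCommGroup M] [Module K M]
  [Module A M] [IsScalarTower K A M]

theorem isWeaklyRegular_of_sub_mem_span_lt {θ : σ → A} {α : Type*} [LinearOrder α] {wt : I → α}
    (hfin : ∀ i, {j | wt j < wt i}.Finite) (e : Module.Basis I K M)
    (𝓑 : β → Module.Basis (σ →₀ ℕ) K (MvPolynomial σ K)) (idx : (Σ _ : β, σ →₀ ℕ) ≃ I)
    (start : β → M)
    (hΨ : ∀ p, MvPolynomial.aeval θ (𝓑 p.1 p.2) • start p.1 - e (idx p) ∈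
      Submodule.span K (e '' {j | wt j < wt (idx p)}))
    {l : List σ} (hl : l.Nodup) : IsWeaklyRegular M (l.map θ) := by
  let : Algebra (MvPolynomial σ K) A := (MvPolynomial.aeval θ).toAlgebra
  let : Module (MvPolynomial σ K) M := Module.compHom M (MvPolynomial.aeval θ).toRingHom
  have : IsScalarTower (MvPolynomial σ K) A M :=
    ⟨fun p s x => mul_smul (MvPolynomial.aeval θ p) s x⟩
  have : IsScalarTower K (MvPolynomial σ K) M := ⟨fun c p x => by
    change MvPolynomial.aeval θ (c • p) • x = c • MvPolynomial.aeval θ p • x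
    rw [map_smul, smul_assoc]⟩
  let Ψ := Finsupp.linearCombination (MvPolynomial σ K) start
  let b := (Finsupp.basis 𝓑).reindex idx
  have hb (i : I) : Ψ.restrictScalars K (b i) - e i ∈
      Submodule.span K (e '' {j | wt j < wt i}) := by
    obtain ⟨p, rfl⟩ := idx.surjective i
    rw [Module.Basis.reindex_apply, Equiv.symm_apply_apply, Finsupp.coe_basis]
    rw [LinearMap.restrictScalars_apply, Finsupp.linearCombination_single]
    exact hΨ p
  have hbij : Function.Bijective Ψ :=
    ⟨injective_of_sub_mem_span_lt b e wt _ hb,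
      LinearMap.range_eq_top.mp <| (Submodule.restrictScalars_eq_top_iff K _ _).mp <|
        eq_top_of_sub_mem_span_lt hfin fun i => ⟨_, LinearMap.mem_range_self Ψ (b i), hb i⟩⟩
  have : Module.Free (MvPolynomial σ K) M := .of_equiv (.ofBijective Ψ hbij)
  have hX : (l.map MvPolynomial.X).map (algebraMap (MvPolynomial σ K) A) = l.map θ := by
    rw [List.map_map]
    exact List.map_congr_left fun i _ => MvPolynomial.aeval_X θ i
  rw [← hX, isWeaklyRegular_map_algebraMap_iff]
  exact isWeaklyRegular_of_flat (isWeaklyRegular_map_X K hl)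

end Regular

section Localization

open RingTheory.Sequence IsLocalRing

theorem exists_smul_mem_of_isWeaklyRegular_localizedModule {R M : Type*} [CommRing R]
    [AddCommGroup M] [Module R M] {S : Submonoid R} {l l' : List R} {g : R}
    (hreg : IsWeaklyRegular (LocalizedModule S M) (l ++ g :: l')) {x : M}
    (hx : g • x ∈ Ideal.ofList l • (⊤ : Submodule R M)) :
    ∃ s ∈ S, s • x ∈ Ideal.ofList l • (⊤ : Submodule R M) := by
  let φ := LocalizedModule.mkLinearMap S M
  have hle : Ideal.ofList l • (⊤ : Submodule R (LocalizedModule S M)) ≤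
      Submodule.localized₀ S φ (Ideal.ofList l • ⊤) := by
    refine Submodule.smul_le.mpr fun r hr y _ => ?_
    obtain ⟨⟨m, s⟩, rfl⟩ := IsLocalizedModule.mk'_surjective S φ y
    exact (Submodule.mem_localized₀ ..).mpr ⟨r • m, Submodule.smul_mem_smul hr trivial, s,
      IsLocalizedModule.mk'_smul ..⟩
  have hg : IsSMulRegular
      (LocalizedModule S M ⧸ Ideal.ofList l • (⊤ : Submodule R (LocalizedModule S M))) g :=
    ((isWeaklyRegular_cons_iff _ g l').mp ((isWeaklyRegular_append_iff _ l _).mp hreg).2).1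
  have hφx : φ x ∈ Ideal.ofList l • (⊤ : Submodule R (LocalizedModule S M)) := by
    refine (isSMulRegular_quotient_iff_mem_of_smul_mem _ g).mp hg _ ?_
    rw [← map_smul]
    have h := Submodule.mem_map_of_mem (f := φ) hx
    rw [Submodule.map_smul''] at h
    exact Submodule.smul_mono le_rfl le_top h
  obtain ⟨m, hm, s, hs⟩ := (Submodule.mem_localized₀ ..).mp (hle hφx)
  rw [IsLocalizedModule.mk'_eq_iff, Submonoid.smul_def, ← map_smul] at hs
  obtain ⟨t, ht⟩ := (IsLocalizedModule.eq_iff_exists S φ).mp hs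
  rw [Submonoid.smul_def, Submonoid.smul_def, ← mul_smul] at ht
  exact ⟨t * s, (t * s).2, ht ▸ Submodule.smul_mem _ _ hm⟩

theorem isWeaklyRegular_localizedModule_of_le_radical {R M : Type u} [CommRing R]
    [IsNoetherianRing R] [AddCommGroup M] [Module R M] [Module.Finite R M] {𝔭 : Ideal R}
    [𝔭.IsPrime] {gs rs : List R} (hlen : rs.length = gs.length) (hgs : ∀ g ∈ gs, g ∈ 𝔭)
    (hrad : 𝔭 ≤ (Ideal.ofList gs ⊔ Module.annihilator R M).radical)
    (hrs : ∀ r ∈ rs, r ∈ 𝔭) (hreg : IsWeaklyRegular M rs) :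
    IsWeaklyRegular (LocalizedModule 𝔭.primeCompl M) gs := by
  let A := Localization.AtPrime 𝔭
  let φ := LocalizedModule.mkLinearMap 𝔭.primeCompl M
  have hfin : Module.Finite A (LocalizedModule 𝔭.primeCompl M) :=
    .of_isLocalizedModule 𝔭.primeCompl φ
  have hmem {r : R} (hr : r ∈ 𝔭) : algebraMap R A r ∈ maximalIdeal A :=
    Localization.AtPrime.map_eq_maximalIdeal (I := 𝔭) ▸ Ideal.mem_map_of_mem _ hr
  have hann : (Module.annihilator R M).map (algebraMap R A) ≤
      Module.annihilator A (LocalizedModule 𝔭.primeCompl M) := by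
    refine Ideal.map_le_iff_le_comap.mpr fun r hr => Module.mem_annihilator.mpr fun y => ?_
    obtain ⟨⟨m, s⟩, rfl⟩ := IsLocalizedModule.mk'_surjective 𝔭.primeCompl φ y
    rw [algebraMap_smul, Function.uncurry_apply_pair, ← IsLocalizedModule.mk'_smul,
      Module.mem_annihilator.mp hr, IsLocalizedModule.mk'_zero]
  have hregA : IsWeaklyRegular (LocalizedModule 𝔭.primeCompl M) (rs.map (algebraMap R A)) :=
    hreg.of_isLocalizedModule A 𝔭.primeCompl φ
  have hradA : maximalIdeal A ≤ (Ideal.ofList (gs.map (algebraMap R A)) ⊔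
      Module.annihilator A (LocalizedModule 𝔭.primeCompl M)).radical := by
    rw [← Localization.AtPrime.map_eq_maximalIdeal, ← Ideal.map_ofList]
    calc 𝔭.map (algebraMap R A)
        ≤ ((Ideal.ofList gs ⊔ Module.annihilator R M).map (algebraMap R A)).radical :=
          (Ideal.map_mono hrad).trans (Ideal.map_radical_le _)
      _ ≤ _ := Ideal.radical_mono ((Ideal.map_sup ..).le.trans (sup_le_sup_left hann _))
  rw [← isWeaklyRegular_map_algebraMap_iff A]
  exact isWeaklyRegular_of_maximalIdeal_le_radical _ (rs.map (algebraMap R A)) (by simp [hlen])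
    (List.forall_mem_map.mpr fun g hg => hmem (hgs g hg)) hradA
    (List.forall_mem_map.mpr fun r hr => hmem (hrs r hr)) hregA

end Localization

/-! ### Generic simplicial fans -/

section Simplex

open Module Function

section Exchange

variable {K V ι W : Type*} [Field K] [AddCommGroup V] [Module K V] [Fintype ι] [DecidableEq ι]
  {a : W → V} {b : ι → W} {w : W}

theorem sum_smul_update (d : ι → K) (k : ι) :
    ∑ i, d i • a (update b k w i) = ∑ i, update d k 0 i • a (b i) + d k • a w := by
  rw [← Finset.sum_erase_add _ _ (Finset.mem_univ k), update_self,
    ← Finset.sum_erase (a := k) (f := fun i => update d k 0 i • a (b i)) Finset.univ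
      (by rw [update_self, zero_smul])]
  congr 1
  exact Finset.sum_congr rfl fun i hi => by
    rw [update_of_ne (Finset.ne_of_mem_erase hi), update_of_ne (Finset.ne_of_mem_erase hi)]

theorem linearIndependent_comp_update (hb : LinearIndependent K (a ∘ b)) {c : ι → K}
    (hc : ∑ i, c i • a (b i) = a w) {k : ι} (hk : c k ≠ 0) :
    LinearIndependent K (a ∘ update b k w) := by
  refine Fintype.linearIndependent_iff.mpr fun d hd => ?_
  have hcoeff := Fintype.linearIndependent_iff.mp hb (fun i => update d k 0 i + d k * c i) <| by
    simpa only [add_smul, Finset.sum_add_distrib, mul_smul, ← Finset.smul_sum, comp_apply, hc,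
      ← sum_smul_update] using hd
  have hdk : d k = 0 := by simpa [hk] using hcoeff k
  intro i
  obtain rfl | hik := eq_or_ne i k
  · exact hdk
  · simpa [hdk, hik] using hcoeff i

end Exchange

variable {K V ι W : Type*} [Field K] [LinearOrder K] [IsStrictOrderedRing K]
  [AddCommGroup V] [Module K V] [Fintype ι] {a : W → V} {γ : W → K}

theorem exists_pivot (hγ : ∀ w, 0 < γ w) {b : ι → W} (hb : LinearIndependent K (a ∘ b))
    {l : ι → K} (hl : ∀ i, 0 < l i) {w : W} {c : ι → K} (hc : ∑ i, c i • a (b i) = a w)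
    (hcost : γ w < ∑ i, c i * γ (b i)) :
    ∃ (b' : ι → W) (l' : ι → K), LinearIndependent K (a ∘ b') ∧ (∀ i, 0 ≤ l' i) ∧
      ∑ i, l' i • a (b' i) = ∑ i, l i • a (b i) ∧
      ∑ i, l' i * γ (b' i) < ∑ i, l i * γ (b i) := by
  classical
  obtain ⟨j, -, hj⟩ : ∃ j ∈ Finset.univ, 0 < c j * γ (b j) :=
    Finset.exists_lt_of_sum_lt (by simpa using (hγ w).trans hcost)
  obtain ⟨k, hk, hmin⟩ := Finset.exists_min_image {i | 0 < c i} (fun i => l i / c i)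
    ⟨j, by simpa using pos_of_mul_pos_left hj (hγ _).le⟩
  simp only [Finset.mem_filter, Finset.mem_univ, true_and] at hk hmin
  set t := l k / c k
  have htk : l k - t * c k = 0 := sub_eq_zero.mpr (div_mul_cancel₀ _ hk.ne').symm
  have htpos : 0 < t := div_pos (hl k) hk
  have hrest : update (update (fun i => l i - t * c i) k t) k 0 = fun i => l i - t * c i := by
    rw [update_idem, ← htk, update_eq_self]
  refine ⟨update b k w, update (fun i => l i - t * c i) k t,
    linearIndependent_comp_update hb hc hk.ne', fun i => ?_, ?_, ?_⟩
  · obtain rfl | hik := eq_or_ne i k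
    · simpa using htpos.le
    rw [update_of_ne hik, sub_nonneg]
    obtain hi | hi := lt_or_ge 0 (c i)
    · exact (le_div_iff₀ hi).mp (hmin i hi)
    · exact (mul_nonpos_of_nonneg_of_nonpos htpos.le hi).trans (hl i).le
  · simp only [sum_smul_update, hrest, update_self, sub_smul, Finset.sum_sub_distrib, mul_smul,
      ← Finset.smul_sum, hc, sub_add_cancel]
  · have hval := sum_smul_update (a := γ) (b := b) (w := w) (update (fun i => l i - t * c i) k t) k
    simp only [smul_eq_mul, hrest, update_self, sub_mul, Finset.sum_sub_distrib, mul_assoc,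
      ← Finset.mul_sum] at hval
    linarith [mul_lt_mul_of_pos_left hcost htpos]

theorem exists_optimal_basis [Finite W] [FiniteDimensional K V]
    (hcard : Fintype.card ι = finrank K V) (hγ : ∀ w, 0 < γ w) {y : V}
    (hgenγ : ∀ b : ι → W, LinearIndependent K (a ∘ b) → ∀ w ∉ Set.range b, ∀ c : ι → K,
      ∑ i, c i • a (b i) = a w → ∑ i, c i * γ (b i) ≠ γ w)
    (hgeny : ∀ b : ι → W, LinearIndependent K (a ∘ b) → ∀ c : ι → K,
      ∑ i, c i • a (b i) = y → ∀ i, c i ≠ 0)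
    (hstart : ∃ (b : ι → W) (l : ι → K), LinearIndependent K (a ∘ b) ∧ (∀ i, 0 ≤ l i) ∧
      ∑ i, l i • a (b i) = y) :
    ∃ (b : ι → W) (u : Dual K V) (l : ι → K), LinearIndependent K (a ∘ b) ∧
      (∀ w, u (a w) ≤ γ w) ∧ Set.range b = {w | u (a w) = γ w} ∧ (∀ i, 0 < l i) ∧
      ∑ i, l i • a (b i) = y := by
  let S : Set (ι → W) := {b | LinearIndependent K (a ∘ b) ∧
    ∃ l : ι → K, (∀ i, 0 ≤ l i) ∧ ∑ i, l i • a (b i) = y}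
  have hfeasible : ∀ b ∈ S, ∃ l : ι → K, (∀ i, 0 ≤ l i) ∧ ∑ i, l i • a (b i) = y :=
    fun b hb => hb.2
  choose! l hl using hfeasible
  obtain ⟨b, ⟨hb, hbS⟩, hmin⟩ := Set.exists_min_image S (fun b => ∑ i, l b i * γ (b i)) S.toFinite
    (hstart.imp fun b ⟨l, hb, hl⟩ => ⟨hb, l, hl⟩)
  obtain ⟨hl0, hly⟩ := hl b ⟨hb, hbS⟩
  have hlpos (i : ι) : 0 < l b i := (hl0 i).lt_of_ne' (hgeny b hb _ hly i)
  let B := Basis.mk hb (hb.span_eq_top_of_card_eq_finrank' hcard).ge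
  have hB (v : V) : ∑ i, B.repr v i • a (b i) = v := by
    simpa only [B, Basis.mk_apply, comp_apply] using B.sum_repr v
  have hu (v : V) : B.constr K (γ ∘ b) v = ∑ i, B.repr v i * γ (b i) := by
    simp only [Basis.constr_apply_fintype, Basis.equivFun_apply, comp_apply, smul_eq_mul]
  refine ⟨b, B.constr K (γ ∘ b), l b, hb, fun w => ?_, Set.ext fun w => ⟨?_, fun hw => ?_⟩,
    hlpos, hly⟩
  · by_contra! hw
    obtain ⟨b', l', hb', hl'0, hl'y, hlt⟩ := exists_pivot hγ hb hlpos (hB (a w)) (hu _ ▸ hw)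
    have hb'S : b' ∈ S := ⟨hb', l', hl'0, hl'y.trans hly⟩
    have heq : l b' = l' := by
      refine sub_eq_zero.mp (funext (Fintype.linearIndependent_iff.mp hb' _ ?_))
      simp only [Pi.sub_apply, sub_smul, Finset.sum_sub_distrib, comp_apply, (hl b' hb'S).2, hl'y,
        hly, sub_self]
    exact (hmin b' hb'S).not_gt (heq ▸ hlt)
  · rintro ⟨i, rfl⟩
    have hBi : B i = a (b i) := Basis.mk_apply ..
    rw [Set.mem_ofPred_eq, ← hBi, Basis.constr_basis, comp_apply]
  · by_contra hwb
    exact hgenγ b hb w hwb _ (hB _) (hu _ ▸ hw)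

end Simplex

section Facet

open Module Function

variable {K ι W : Type*} [Field K] [LinearOrder K] [Fintype W]
  {a : W → ι → K} {γ : W → K} {u u' : Dual K (ι → K)} {y : ι → K} {l l' : W → K}

/-- `u` defines a simplicial facet of the lower hull of the points `a w` lifted to height `γ w`: it
lies below all lifted points, and touches exactly those over a basis. -/
structure IsFacet (a : W → ι → K) (γ : W → K) (u : Dual K (ι → K)) : Prop where
  le : ∀ w, u (a w) ≤ γ w
  exists_basis : ∃ b : ι → W, LinearIndependent K (a ∘ b) ∧ Set.range b = {w | u (a w) = γ w}

/-- `l` exhibits `y` as a point of the open cone over the points `a w` that `u` touches. -/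
structure IsOpenConeCoord (a : W → ι → K) (γ : W → K) (u : Dual K (ι → K)) (y : ι → K)
    (l : W → K) : Prop where
  nonneg : ∀ w, 0 ≤ l w
  ne_zero_iff : ∀ w, l w ≠ 0 ↔ u (a w) = γ w
  sum_smul : ∑ w, l w • a w = y

theorem IsOpenConeCoord.apply_eq (h : IsOpenConeCoord a γ u y l) : u y = ∑ w, l w * γ w := by
  rw [← h.sum_smul, map_sum]
  refine Finset.sum_congr rfl fun w _ => ?_
  rw [map_smul, smul_eq_mul]
  obtain hw | hw := eq_or_ne (l w) 0
  · rw [hw, zero_mul, zero_mul]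
  · rw [(h.ne_zero_iff w).mp hw]

variable [IsStrictOrderedRing K]

theorem IsOpenConeCoord.apply_le (h : IsOpenConeCoord a γ u y l) (hu' : ∀ w, u' (a w) ≤ γ w) :
    u' y ≤ u y := by
  rw [h.apply_eq, ← h.sum_smul, map_sum]
  refine Finset.sum_le_sum fun w _ => ?_
  rw [map_smul, smul_eq_mul]
  exact mul_le_mul_of_nonneg_left (hu' w) (h.nonneg w)

theorem IsFacet.eq_of_apply_eq [Finite ι] (hu : IsFacet a γ u) (h : IsOpenConeCoord a γ u y l)
    (hu' : ∀ w, u' (a w) ≤ γ w) (huy : u' y = u y) : u' = u := by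
  cases nonempty_fintype ι
  have hterm := (Finset.sum_eq_sum_iff_of_le fun w _ =>
    mul_le_mul_of_nonneg_left (hu' w) (h.nonneg w)).mp <| by
      rw [← h.apply_eq, ← huy, ← h.sum_smul, map_sum]
      simp only [map_smul, smul_eq_mul]
  obtain ⟨b, hb, hrange⟩ := hu.exists_basis
  refine LinearMap.ext_on_range (hb.span_eq_top_of_card_eq_finrank' (by simp)) fun i => ?_
  have hi : u (a (b i)) = γ (b i) := hrange.subset ⟨i, rfl⟩
  exact (mul_left_cancel₀ ((h.ne_zero_iff _).mpr hi) (hterm _ (Finset.mem_univ _))).trans hi.symm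

theorem IsFacet.eq_of_isOpenConeCoord [Finite ι] (hu : IsFacet a γ u) (hu' : IsFacet a γ u')
    (h : IsOpenConeCoord a γ u y l) (h' : IsOpenConeCoord a γ u' y l') : u' = u :=
  hu.eq_of_apply_eq h hu'.le ((h.apply_le hu'.le).antisymm (h'.apply_le hu.le))

theorem exists_isFacet [Fintype ι] (hγ : ∀ w, 0 < γ w)
    (hgenγ : ∀ b : ι → W, LinearIndependent K (a ∘ b) → ∀ w ∉ Set.range b, ∀ c : ι → K,
      ∑ i, c i • a (b i) = a w → ∑ i, c i * γ (b i) ≠ γ w)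
    (hgeny : ∀ b : ι → W, LinearIndependent K (a ∘ b) → ∀ c : ι → K,
      ∑ i, c i • a (b i) = y → ∀ i, c i ≠ 0)
    (hstart : ∃ (b : ι → W) (l : ι → K), LinearIndependent K (a ∘ b) ∧ (∀ i, 0 ≤ l i) ∧
      ∑ i, l i • a (b i) = y) :
    ∃ u, IsFacet a γ u ∧ ∃ l, IsOpenConeCoord a γ u y l := by
  obtain ⟨b, u, l, hb, hu, hrange, hl, hy⟩ :=
    exists_optimal_basis (by simp) hγ hgenγ hgeny hstart
  have hinj : Injective b := .of_comp hb.injective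
  have hext (i : ι) : extend b l 0 (b i) = l i := hinj.extend_apply l 0 i
  have hoff (w : W) (hw : w ∉ Set.range b) : extend b l 0 w = 0 := extend_apply' _ _ _ hw
  refine ⟨u, ⟨hu, b, hb, hrange⟩, extend b l 0, fun w => ?_, fun w => ?_, ?_⟩
  · by_cases hw : w ∈ Set.range b
    · obtain ⟨i, rfl⟩ := hw
      exact (hl i).le.trans_eq (hext i).symm
    · exact (hoff w hw).ge
  · refine ⟨fun hw => hrange.subset (not_imp_comm.mp (hoff w) hw), fun hw => ?_⟩
    obtain ⟨i, rfl⟩ := hrange.superset hw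
    exact (hext i).trans_ne (hl i).ne'
  · rw [← hy, Fintype.sum_of_injective b hinj (fun i => l i • a (b i))
      (fun w => extend b l 0 w • a w) (fun w hw => by rw [hoff w hw, zero_smul])
      fun i => by rw [hext]]

end Facet

section Generic

open Module Function Filter Topology

variable {I : Type*} [Fintype I] {e : I → ℕ} {d : I → ℚ}

theorem eventually_sum_div_ne_zero (he : Injective e) (hd : d ≠ 0) :
    ∀ᶠ s : ℕ in atTop, ∑ i, d i / (s + e i + 1) ≠ 0 := by
  classical
  obtain ⟨k, hk⟩ := Function.ne_iff.mp hd
  let P : Polynomial ℚ := ∑ i, .C (d i) * ∏ j ∈ Finset.univ.erase i, (.X + .C (e j + 1 : ℚ))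
  have hP : P ≠ 0 := fun h => by
    have hroot := congrArg (Polynomial.eval (-(e k + 1 : ℚ))) h
    rw [Polynomial.eval_finsetSum, Finset.sum_eq_single k] at hroot
    · simp only [Polynomial.eval_mul, Polynomial.eval_C, Polynomial.eval_prod, Polynomial.eval_add,
        Polynomial.eval_X, Polynomial.eval_zero, mul_eq_zero,
        Finset.prod_eq_zero_iff, Finset.mem_erase, Finset.mem_univ, and_true] at hroot
      obtain ⟨j, hj, hjk⟩ := hroot.resolve_left hk
      exact hj (he (by exact_mod_cast (by linarith : (e j : ℚ) = e k)))
    · intro i _ hik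
      rw [Polynomial.eval_mul, Polynomial.eval_prod,
        Finset.prod_eq_zero (Finset.mem_erase.mpr ⟨hik.symm, Finset.mem_univ k⟩) (by simp),
        mul_zero]
    · simp
  have hfin : {s : ℕ | P.IsRoot s}.Finite :=
    (Polynomial.finite_setOfPred_isRoot hP).preimage Nat.cast_injective.injOn
  filter_upwards [hfin.eventually_cofinite_notMem.filter_mono Nat.cofinite_eq_atTop.ge]
    with s hs hsum
  refine hs ?_
  have hprod : P.eval (s : ℚ) =
      (∑ i, d i / (s + e i + 1)) * ∏ j, (s + e j + 1 : ℚ) := by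
    simp only [P, Polynomial.eval_finsetSum, Polynomial.eval_mul, Polynomial.eval_C,
      Polynomial.eval_prod, Polynomial.eval_add, Polynomial.eval_X, Finset.sum_mul, ← add_assoc]
    refine Finset.sum_congr rfl fun i _ => ?_
    rw [← Finset.mul_prod_erase _ _ (Finset.mem_univ i)]
    field_simp
  exact hprod.trans (by rw [hsum, zero_mul])

theorem tendsto_sum_div (e : I → ℕ) (d : I → ℚ) :
    Tendsto (fun s : ℕ => ∑ i, d i / (s + e i + 1)) atTop (𝓝 0) := by
  rw [← Finset.sum_const_zero (s := Finset.univ (α := I))]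
  refine tendsto_finsetSum _ fun i _ => tendsto_const_nhds.div_atTop ?_
  exact tendsto_atTop_add_const_right _ _
    (tendsto_atTop_add_const_right _ _ tendsto_natCast_atTop_atTop)

theorem eventually_sum_div_pos (e : I → ℕ) (hd : 0 < ∑ i, d i) :
    ∀ᶠ s : ℕ in atTop, 0 < ∑ i, d i / (s + e i + 1) := by
  have hlim : Tendsto (fun s : ℕ => (s : ℚ) * ∑ i, d i / (s + e i + 1)) atTop (𝓝 (∑ i, d i)) := by
    simp only [Finset.mul_sum, mul_div_left_comm (_ : ℚ) (d _), add_assoc]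
    refine tendsto_finsetSum _ fun i _ => ?_
    simpa only [mul_one] using (tendsto_natCast_div_add_atTop (e i + 1 : ℚ)).const_mul (d i)
  filter_upwards [hlim.eventually (lt_mem_nhds hd)] with s hs
  exact pos_of_mul_pos_right hs s.cast_nonneg

end Generic

section GenericFan

open Module Function Filter Topology

variable {ι W : Type*}

section Cost

variable [Fintype ι] [Finite W]

theorem eventually_generic_cost {e : W → ℕ} (he : Injective e) (b : ι → W) {w : W}
    (c : ι → ℚ) :
    ∀ᶠ s : ℕ in atTop,
      (w ∉ Set.range b → ∑ i, c i / (s + e (b i) + 1) ≠ 1 / (s + e w + 1)) ∧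
      (1 < ∑ i, c i → 1 / (s + e w + 1) < ∑ i, c i / (s + e (b i) + 1)) := by
  classical
  cases nonempty_fintype W
  let d : W → ℚ := ∑ i, Pi.single (b i) (c i) - Pi.single w 1
  have hd (g : W → ℚ) : ∑ v, d v / g v = ∑ i, c i / g (b i) - 1 / g w := by
    simp only [d, Pi.sub_apply, Finset.sum_apply, sub_div, Finset.sum_sub_distrib, Finset.sum_div]
    rw [Finset.sum_comm]
    simp only [Pi.single_apply, ite_div, zero_div, Finset.sum_ite_eq', Finset.mem_univ, if_true]
  have hne : ∀ᶠ s : ℕ in atTop, w ∉ Set.range b →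
      ∑ i, c i / (s + e (b i) + 1) ≠ 1 / (s + e w + 1) := by
    refine eventually_imp_distrib_left.mpr fun hw => ?_
    have hdw : d w = -1 := by
      have hoff (i : ι) : Pi.single (M := fun _ => ℚ) (b i) (c i) w = 0 :=
        Pi.single_eq_of_ne (fun h => hw ⟨i, h.symm⟩) _
      simp only [d, Pi.sub_apply, Finset.sum_apply, hoff, Pi.single_eq_same,
        Finset.sum_const_zero, zero_sub]
    filter_upwards [eventually_sum_div_ne_zero he (d := d) fun h => by simp [h] at hdw] with s hs
    exact sub_ne_zero.mp (hd (fun v => s + e v + 1) ▸ hs)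
  have hlt : ∀ᶠ s : ℕ in atTop, 1 < ∑ i, c i →
      1 / (s + e w + 1) < ∑ i, c i / (s + e (b i) + 1) := by
    refine eventually_imp_distrib_left.mpr fun hc => ?_
    filter_upwards [eventually_sum_div_pos e (d := d)
      (by simpa using (hd 1).trans_gt (by simpa using hc))] with s hs
    exact sub_pos.mp (hd (fun v => s + e v + 1) ▸ hs)
  exact hne.and hlt

/-- Integers `N w` whose inverses are in general position as heights over the points `a w`: no
`d + 1` lifted points in linearly general position lie on a hyperplane. The last condition says that
these heights are close enough to being constant. -/
structure IsGeneric (a : W → ι → ℚ) (N : W → ℕ) : Prop where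
  pos : ∀ w, 0 < N w
  sum_ne : ∀ b : ι → W, LinearIndependent ℚ (a ∘ b) → ∀ w ∉ Set.range b, ∀ c : ι → ℚ,
    ∑ i, c i • a (b i) = a w → ∑ i, c i * (N (b i) : ℚ)⁻¹ ≠ (N w : ℚ)⁻¹
  lt_sum : ∀ b : ι → W, LinearIndependent ℚ (a ∘ b) → ∀ w, ∀ c : ι → ℚ,
    ∑ i, c i • a (b i) = a w → 1 < ∑ i, c i → (N w : ℚ)⁻¹ < ∑ i, c i * (N (b i) : ℚ)⁻¹

theorem exists_isGeneric (a : W → ι → ℚ) : ∃ N : W → ℕ, IsGeneric a N := by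
  cases nonempty_fintype W
  let e (w : W) : ℕ := Fintype.equivFin W w
  have he : Injective e := Fin.val_injective.comp (Fintype.equivFin W).injective
  have hev : ∀ᶠ s : ℕ in atTop, ∀ (b : ι → W) (w : W), LinearIndependent ℚ (a ∘ b) →
      ∀ c : ι → ℚ, ∑ i, c i • a (b i) = a w →
        (w ∉ Set.range b → ∑ i, c i / (s + e (b i) + 1) ≠ 1 / (s + e w + 1)) ∧
        (1 < ∑ i, c i → 1 / (s + e w + 1) < ∑ i, c i / (s + e (b i) + 1)) := by
    refine eventually_all.mpr fun b => eventually_all.mpr fun w =>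
      eventually_imp_distrib_left.mpr fun hb => ?_
    by_cases h : ∃ c : ι → ℚ, ∑ i, c i • a (b i) = a w
    · obtain ⟨c, hc⟩ := h
      filter_upwards [eventually_generic_cost he b c] with s hs c' hc'
      exact hb.fintypeLinearCombination_injective (hc.trans hc'.symm) ▸ hs
    · exact .of_forall fun s c hc => (h ⟨c, hc⟩).elim
  obtain ⟨s, hs⟩ := hev.exists
  refine ⟨fun w => s + e w + 1, fun w => Nat.succ_pos _, fun b hb w hw c hc => ?_,
    fun b hb w c hc hlt => ?_⟩
  · simpa only [Nat.cast_add, Nat.cast_one, div_eq_mul_inv, one_mul] using (hs b w hb c hc).1 hw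
  · simpa only [Nat.cast_add, Nat.cast_one, div_eq_mul_inv, one_mul] using (hs b w hb c hc).2 hlt

end Cost

section Shift

variable [Finite ι]

theorem exists_pos_le_abs_apply_intCast (φ : Dual ℚ (ι → ℚ)) :
    ∃ δ > 0, ∀ m : ι → ℤ, φ (fun i => m i) ≠ 0 → δ ≤ |φ fun i => m i| := by
  classical
  cases nonempty_fintype ι
  obtain ⟨D, hD⟩ := IsLocalization.exist_integer_multiples_of_finite (nonZeroDivisors ℤ)
    fun i => φ fun j => if i = j then 1 else 0
  choose z hz using hD
  have hD0 : (0 : ℚ) < |((D : ℤ) : ℚ)| := by simp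
  refine ⟨|((D : ℤ) : ℚ)|⁻¹, inv_pos.mpr hD0, fun m hm => ?_⟩
  have hint : ((D : ℤ) : ℚ) * φ (fun i => m i) = ((∑ i, m i * z i : ℤ) : ℚ) := by
    rw [LinearMap.pi_apply_eq_sum_univ φ, Finset.mul_sum, Int.cast_sum]
    refine Finset.sum_congr rfl fun i _ => ?_
    simp only [smul_eq_mul, Int.cast_mul, ← eq_intCast (algebraMap ℤ ℚ) (z i), hz,
      Algebra.smul_def]
    simp only [eq_intCast, mul_left_comm]
  have hne : ((∑ i, m i * z i : ℤ) : ℚ) ≠ 0 := hint ▸ mul_ne_zero (abs_pos.mp hD0) hm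
  rw [inv_le_iff_one_le_mul₀ hD0, mul_comm, ← abs_mul, hint, ← Int.cast_abs]
  exact_mod_cast Int.one_le_abs (Int.cast_ne_zero.mp hne)

theorem eventually_generic_shift {e : ι → ℕ} (he : Injective e) {ε : ι → ℚ} (hε : ∀ i, ε i ≠ 0)
    {φ : Dual ℚ (ι → ℚ)} (hφ : φ ≠ 0) :
    ∀ᶠ s : ℕ in atTop, ∀ m : ι → ℤ,
      φ ((fun i => (m i : ℚ)) + fun i => ε i / (s + e i + 1)) ≠ 0 ∧
      (0 < φ ((fun i => (m i : ℚ)) + fun i => ε i / (s + e i + 1)) → 0 ≤ φ fun i => m i) := by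
  classical
  cases nonempty_fintype ι
  obtain ⟨δ, hδ, hφδ⟩ := exists_pos_le_abs_apply_intCast φ
  let d : ι → ℚ := fun i => ε i * φ fun j => if i = j then 1 else 0
  have hd : d ≠ 0 := fun h => hφ <| LinearMap.ext fun x => by
    rw [LinearMap.pi_apply_eq_sum_univ φ]
    refine Finset.sum_eq_zero fun i _ => ?_
    rw [(mul_eq_zero.mp (congrFun h i)).resolve_left (hε i), smul_zero]
  filter_upwards [eventually_sum_div_ne_zero he hd,
    (tendsto_sum_div e d).abs.eventually (gt_mem_nhds (abs_zero.trans_lt hδ))] with s hne hlt m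
  have hφq : φ (fun i => ε i / (s + e i + 1)) = ∑ i, d i / (s + e i + 1) := by
    rw [LinearMap.pi_apply_eq_sum_univ φ]
    simp only [d, smul_eq_mul, mul_div_right_comm]
  rw [map_add, hφq]
  by_cases hm : φ (fun i => (m i : ℚ)) = 0
  · exact ⟨by rwa [hm, zero_add], fun _ => hm.ge⟩
  have hgap := hlt.trans_le (hφδ m hm)
  refine ⟨fun h => hgap.ne ?_, fun h => ?_⟩
  · rw [eq_neg_of_add_eq_zero_left h, abs_neg]
  · by_contra! hneg
    rw [abs_of_neg hneg] at hgap
    linarith [le_abs_self (∑ i, d i / (s + e i + 1))]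

theorem exists_generic_shift {J : Type*} [Finite J] {φ : J → Dual ℚ (ι → ℚ)} (hφ : ∀ j, φ j ≠ 0)
    (U : Finset ι) :
    ∃ q : ι → ℚ, (∀ i ∈ U, -1 < q i ∧ q i < 0) ∧ (∀ i ∉ U, 0 < q i ∧ q i < 1) ∧
      ∀ j (m : ι → ℤ), φ j ((fun i => (m i : ℚ)) + q) ≠ 0 ∧
        (0 < φ j ((fun i => (m i : ℚ)) + q) → 0 ≤ φ j fun i => m i) := by
  classical
  cases nonempty_fintype ι
  let e (i : ι) : ℕ := Fintype.equivFin ι i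
  have he : Injective e := Fin.val_injective.comp (Fintype.equivFin ι).injective
  let ε (i : ι) : ℚ := if i ∈ U then -1 else 1
  have hε (i : ι) : ε i ≠ 0 := by simp only [ε]; split_ifs <;> norm_num
  obtain ⟨s, hs, hs0⟩ := ((eventually_all.mpr fun j => eventually_generic_shift he hε (hφ j)).and
    (eventually_gt_atTop 0)).exists
  have hden (i : ι) : (1 : ℚ) < s + e i + 1 := by
    have : (1 : ℚ) ≤ s := by exact_mod_cast hs0
    linarith [(e i).cast_nonneg (α := ℚ)]
  have hlt (i : ι) : 0 < 1 / (s + e i + 1 : ℚ) ∧ 1 / (s + e i + 1 : ℚ) < 1 :=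
    ⟨by have := hden i; positivity, (div_lt_one (by linarith [hden i])).mpr (hden i)⟩
  refine ⟨fun i => ε i / (s + e i + 1), fun i hi => ?_, fun i hi => ?_, hs⟩
  · simp only [ε, if_pos hi, neg_div]
    exact ⟨neg_lt_neg (hlt i).2, neg_neg_of_pos (hlt i).1⟩
  · simp only [ε, if_neg hi]
    exact hlt i

end Shift

end GenericFan

section Triangulation

open Module Function

variable {ι W : Type*} [Fintype ι] {a : W → ι → ℚ} {N : W → ℕ}

/-- The basis of the ambient space formed by the independent points `a (b i)`. -/
noncomputable def vertexBasis {b : ι → W} (hb : LinearIndependent ℚ (a ∘ b)) :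
    Basis ι ℚ (ι → ℚ) :=
  .mk hb (hb.span_eq_top_of_card_eq_finrank' (by simp)).ge

theorem vertexBasis_apply {b : ι → W} (hb : LinearIndependent ℚ (a ∘ b)) (i : ι) :
    vertexBasis hb i = a (b i) :=
  Basis.mk_apply ..

theorem sum_coord_smul {b : ι → W} (hb : LinearIndependent ℚ (a ∘ b)) (x : ι → ℚ) :
    ∑ i, (vertexBasis hb).coord i x • a (b i) = x := by
  simpa only [vertexBasis_apply, Basis.coord_apply] using (vertexBasis hb).sum_repr x

theorem coord_sum_smul {b : ι → W} (hb : LinearIndependent ℚ (a ∘ b)) (c : ι → ℚ) (i : ι) :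
    (vertexBasis hb).coord i (∑ j, c j • a (b j)) = c i := by
  simp only [← vertexBasis_apply hb, Basis.coord_apply, Basis.repr_sum_self]

theorem coord_vertex [DecidableEq ι] {b : ι → W} (hb : LinearIndependent ℚ (a ∘ b)) (i j : ι) :
    (vertexBasis hb).coord i (a (b j)) = if j = i then 1 else 0 := by
  rw [← vertexBasis_apply hb, Basis.coord_apply, Basis.repr_self, Finsupp.single_apply]

theorem sum_coord_vertex {b : ι → W} (hb : LinearIndependent ℚ (a ∘ b)) (i : ι) :
    (∑ j, (vertexBasis hb).coord j) (a (b i)) = 1 := by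
  classical
  simp only [LinearMap.sum_apply, coord_vertex, Finset.sum_ite_eq, Finset.mem_univ, if_true]

theorem exists_basis_nonneg_of_nonneg [DecidableEq ι]
    (hconv : ∀ i, ∃ w, ∃ k > 0, a w = Pi.single i k) {y : ι → ℚ} (hy : 0 ≤ y) :
    ∃ (b : ι → W) (l : ι → ℚ), LinearIndependent ℚ (a ∘ b) ∧ (∀ i, 0 ≤ l i) ∧
      ∑ i, l i • a (b i) = y := by
  choose b k hk hb using hconv
  have hsum (l : ι → ℚ) : ∑ i, l i • a (b i) = fun i => l i * k i := by
    simp only [hb, ← Pi.single_smul', smul_eq_mul]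
    exact Finset.univ_sum_single fun i => l i * k i
  refine ⟨b, fun i => y i / k i, Fintype.linearIndependent_iff.mpr fun l hl i => ?_,
    fun i => div_nonneg (hy i) (hk i).le, ?_⟩
  · exact (mul_eq_zero.mp (congrFun ((hsum l).symm.trans hl) i)).resolve_right (hk i).ne'
  · rw [hsum]
    exact funext fun i => div_mul_cancel₀ _ (hk i).ne'

theorem sum_coord_le_one (hN : IsGeneric a N) {u : Dual ℚ (ι → ℚ)} {b : ι → W}
    (hb : LinearIndependent ℚ (a ∘ b)) (hu : ∀ w, u (a w) ≤ (N w : ℚ)⁻¹)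
    (hub : ∀ i, u (a (b i)) = (N (b i) : ℚ)⁻¹) (w : W) :
    ∑ i, (vertexBasis hb).coord i (a w) ≤ 1 := by
  by_contra! h
  refine (hN.lt_sum b hb w _ (sum_coord_smul hb (a w)) h).not_ge ((hu w).trans' ?_)
  conv_rhs => rw [← sum_coord_smul hb (a w)]
  simp only [map_sum, map_smul, hub, smul_eq_mul, le_refl]

variable [Fintype W]

theorem sum_extend_smul {b : ι → W} (hb : LinearIndependent ℚ (a ∘ b)) (x : ι → ℚ) :
    ∑ w, extend b (fun i => (vertexBasis hb).coord i x) 0 w • a w = x := by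
  have hinj : Injective b := .of_comp hb.injective
  conv_rhs => rw [← sum_coord_smul hb x]
  exact (Fintype.sum_of_injective b hinj _ _
    (fun w hw => by rw [extend_apply' _ _ _ hw, Pi.zero_apply, zero_smul])
    fun i => by rw [hinj.extend_apply]).symm

theorem IsOpenConeCoord.coord_pos {γ : W → ℚ} {u : Dual ℚ (ι → ℚ)} {y : ι → ℚ} {l : W → ℚ}
    (h : IsOpenConeCoord a γ u y l) {b : ι → W} (hb : LinearIndependent ℚ (a ∘ b))
    (hrange : Set.range b = {w | u (a w) = γ w}) (i : ι) : 0 < (vertexBasis hb).coord i y := by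
  have hinj : Injective b := .of_comp hb.injective
  have hy : ∑ i, l (b i) • a (b i) = y := by
    rw [← h.sum_smul]
    refine Fintype.sum_of_injective b hinj _ (fun w => l w • a w) (fun w hw => ?_) fun _ => rfl
    rw [not_not.mp ((h.ne_zero_iff w).not.mpr fun hu => hw (hrange.superset hu)), zero_smul]
  rw [← hy, coord_sum_smul hb fun i => l (b i)]
  exact (h.nonneg _).lt_of_ne' ((h.ne_zero_iff _).mpr (hrange.subset ⟨i, rfl⟩))

theorem isOpenConeCoord_extend {γ : W → ℚ} {u : Dual ℚ (ι → ℚ)} {y : ι → ℚ} {b : ι → W}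
    (hb : LinearIndependent ℚ (a ∘ b)) (hrange : Set.range b = {w | u (a w) = γ w})
    (hy : ∀ i, 0 < (vertexBasis hb).coord i y) :
    IsOpenConeCoord a γ u y (extend b (fun i => (vertexBasis hb).coord i y) 0) := by
  have hinj : Injective b := .of_comp hb.injective
  refine ⟨fun w => ?_, fun w => ?_, sum_extend_smul hb y⟩
  · by_cases hw : w ∈ Set.range b
    · obtain ⟨i, rfl⟩ := hw
      exact (hy i).le.trans_eq (hinj.extend_apply ..).symm
    · rw [extend_apply' _ _ _ hw, Pi.zero_apply]
  · refine ⟨fun hw => hrange.subset (not_imp_comm.mp (extend_apply' _ _ _) hw), fun hw => ?_⟩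
    obtain ⟨i, rfl⟩ := hrange.superset hw
    exact (hinj.extend_apply ..).trans_ne (hy i).ne'

theorem exists_shift [DecidableEq ι] (hN : IsGeneric a N)
    (hconv : ∀ i, ∃ w, ∃ k > 0, a w = Pi.single i k) (U : Finset ι) :
    ∃ q : ι → ℚ, (∀ i ∈ U, -1 < q i ∧ q i < 0) ∧ (∀ i ∉ U, 0 < q i ∧ q i < 1) ∧
      ∀ m : ι → ℕ, (∀ i ∈ U, m i ≠ 0) → ∃ u, IsFacet a (fun w => (N w : ℚ)⁻¹) u ∧
        (∃ l, IsOpenConeCoord a (fun w => (N w : ℚ)⁻¹) u ((fun i => (m i : ℚ)) + q) l) ∧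
        ∃ l : W → ℚ, (∀ w, 0 ≤ l w) ∧ (∀ w, l w ≠ 0 → u (a w) = (N w : ℚ)⁻¹) ∧
          ∑ w, l w • a w = fun i => (m i : ℚ) := by
  let φ (j : {b : ι → W // LinearIndependent ℚ (a ∘ b)} × ι) := (vertexBasis j.1.2).coord j.2
  have hφ (j) : φ j ≠ 0 := fun h => by
    simpa [φ, coord_vertex, -Basis.coord_apply] using DFunLike.congr_fun h (a (j.1.1 j.2))
  obtain ⟨q, hqU, hq, hgen⟩ := exists_generic_shift hφ U
  refine ⟨q, hqU, hq, fun m hm => ?_⟩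
  have hpos : 0 ≤ (fun i => (m i : ℚ)) + q := fun i => by
    by_cases hi : i ∈ U
    · have : (1 : ℚ) ≤ m i := by exact_mod_cast Nat.one_le_iff_ne_zero.mpr (hm i hi)
      simpa using by linarith [(hqU i hi).1]
    · exact add_nonneg (m i).cast_nonneg (hq i hi).1.le
  have hgenm (b hb i) := hgen (⟨b, hb⟩, i) fun i => (m i : ℤ)
  simp only [φ, Int.cast_natCast] at hgenm
  obtain ⟨u, hu, l, hl⟩ := exists_isFacet (fun w => inv_pos.mpr (Nat.cast_pos.mpr (hN.pos w)))
    hN.sum_ne (fun b hb c hc i => coord_sum_smul hb c i ▸ hc ▸ (hgenm b hb i).1)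
    (exists_basis_nonneg_of_nonneg hconv hpos)
  obtain ⟨b, hb, hrange⟩ := hu.exists_basis
  have hoff (w : W) (hw : w ∉ Set.range b) :
      extend b (fun i => (vertexBasis hb).coord i fun i => (m i : ℚ)) 0 w = 0 :=
    extend_apply' _ _ _ hw
  refine ⟨u, hu, ⟨l, hl⟩, _, fun w => ?_, fun w hw => ?_, sum_extend_smul hb _⟩
  · by_cases hw : w ∈ Set.range b
    · obtain ⟨i, rfl⟩ := hw
      rw [(Injective.of_comp hb.injective).extend_apply]
      exact (hgenm b hb i).2 (hl.coord_pos hb hrange i)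
    · exact (hoff w hw).ge
  · exact hrange.subset (not_imp_comm.mp (hoff w) hw)

/-- `u` computes the gauge of `convexHull ({0} ∪ range a)` at `x`: it is at most `1` on the points
`a w`, and `x` lies in the cone over those where it equals `1`. -/
structure IsSupportingAt (a : W → ι → ℚ) (u : Dual ℚ (ι → ℚ)) (x : ι → ℚ) : Prop where
  le_one : ∀ w, u (a w) ≤ 1
  exists_coord : ∃ l : W → ℚ, (∀ w, 0 ≤ l w) ∧ (∀ w, l w ≠ 0 → u (a w) = 1) ∧
    ∑ w, l w • a w = x

theorem IsFacet.isSupportingAt (hN : IsGeneric a N) {u : Dual ℚ (ι → ℚ)} {b : ι → W}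
    (hu : IsFacet a (fun w => (N w : ℚ)⁻¹) u) (hb : LinearIndependent ℚ (a ∘ b))
    (hrange : Set.range b = {w | u (a w) = (N w : ℚ)⁻¹}) {x : ι → ℚ}
    (hx : ∃ l : W → ℚ, (∀ w, 0 ≤ l w) ∧ (∀ w, l w ≠ 0 → u (a w) = (N w : ℚ)⁻¹) ∧
      ∑ w, l w • a w = x) :
    IsSupportingAt a (∑ i, (vertexBasis hb).coord i) x := by
  classical
  obtain ⟨l, hl, hlu, hx⟩ := hx
  refine ⟨fun w => ?_, l, hl, fun w hw => ?_, hx⟩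
  · simpa only [LinearMap.sum_apply] using
      sum_coord_le_one hN hb hu.le (fun i => hrange.subset ⟨i, rfl⟩) w
  · obtain ⟨i, rfl⟩ := hrange.superset (hlu w hw)
    exact sum_coord_vertex hb i

end Triangulation

/-! ### Box decompositions -/

section BoxDecomposition

open Module Function

variable {ι W : Type*}

/-- The exponent `m` as a rational point; the counterpart of `toR` over `ℚ`. -/
def toQ : (ι →₀ ℕ) →+ (ι → ℚ) where
  toFun m i := m i
  map_zero' := funext fun _ => Nat.cast_zero
  map_add' _ _ := funext fun _ => Nat.cast_add ..

theorem toQ_apply (m : ι →₀ ℕ) (i : ι) : toQ m i = m i := rfl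

theorem toQ_injective : Function.Injective (toQ : (ι →₀ ℕ) →+ ι → ℚ) := fun _ _ h =>
  Finsupp.ext fun i => Nat.cast_injective (congrFun h i)

theorem toQ_sum_smul [Fintype ι] (a : W → ι →₀ ℕ) (N : W → ℕ) (b : ι → W) (k : ι → ℕ) :
    toQ (∑ i, k i • N (b i) • a (b i)) = ∑ i, (k i * N (b i) : ℚ) • toQ (a (b i)) := by
  simp only [map_sum, map_nsmul, ← Nat.cast_smul_eq_nsmul ℚ, smul_smul, Nat.cast_mul]

/-- The exponents of the monomials divisible by every variable in `U`. -/
def positiveOn (U : Finset ι) : Set (ι →₀ ℕ) := {m | ∀ i ∈ U, m i ≠ 0}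

theorem add_mem_positiveOn {U : Finset ι} {m : ι →₀ ℕ} (hm : m ∈ positiveOn U) (v : ι →₀ ℕ) :
    m + v ∈ positiveOn U :=
  fun i hi h => hm i hi (Nat.eq_zero_of_add_eq_zero_right h)

theorem eq_add_of_nonneg_sub {U : Finset ι} {q : ι → ℚ} (hqU : ∀ i ∈ U, q i < 0)
    (hq : ∀ i ∉ U, q i < 1) {m : ι →₀ ℕ} (v : ι →₀ ℕ)
    (h : 0 ≤ toQ m + q - toQ v) : ∃ m' ∈ positiveOn U, m = m' + v := by
  have hi (i : ι) : (v i : ℚ) ≤ m i + q i := sub_nonneg.mp (h i)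
  have hle : v ≤ m := fun i => by
    have hvm : (v i : ℚ) < m i + 1 := (hi i).trans_lt <| add_lt_add_right (by
      by_cases hiU : i ∈ U
      · exact (hqU i hiU).trans one_pos
      · exact hq i hiU) _
    exact Nat.lt_succ_iff.mp (by exact_mod_cast hvm)
  refine ⟨m - v, fun i hiU => ?_, (tsub_add_cancel_of_le hle).symm⟩
  have hvm : (v i : ℚ) < m i := (hi i).trans_lt (by linarith [hqU i hiU])
  exact Nat.sub_ne_zero_of_lt (by exact_mod_cast hvm)

variable [Fintype ι]

theorem eq_of_add_natCast_mul_eq {N k k' : ℕ} {x x' : ℚ} (hx : 0 < x ∧ x ≤ N)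
    (hx' : 0 < x' ∧ x' ≤ N) (h : x + k * N = x' + k' * N) : k = k' := by
  have hle {k k' : ℕ} {x x' : ℚ} (hx : 0 < x) (hx' : x' ≤ N) (h : x + k * N = x' + k' * N) :
      k ≤ k' := by
    by_contra! hlt
    have hk : (k' + 1 : ℚ) * N ≤ k * N :=
      mul_le_mul_of_nonneg_right (by exact_mod_cast hlt) N.cast_nonneg
    linarith
  exact (hle hx.1 hx'.2 h).antisymm (hle hx'.1 hx.2 h.symm)

theorem exists_sub_natCast_mul_mem_Ioc {N : ℕ} {x : ℚ} (hx : 0 < x) (hN : 0 < N) :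
    ∃ k : ℕ, 0 < x - k * N ∧ x - k * N ≤ N := by
  have hN' : (0 : ℚ) < N := Nat.cast_pos.mpr hN
  have hc := div_pos hx hN'
  have hceil : ((⌈x / N⌉₊ - 1 : ℕ) : ℚ) + 1 = ⌈x / N⌉₊ := by
    exact_mod_cast Nat.sub_add_cancel (Nat.ceil_pos.mpr hc)
  have hlt := Nat.ceil_lt_add_one hc.le
  have hle := Nat.le_ceil (x / N)
  rw [← hceil, div_le_iff₀ hN', add_mul, one_mul] at hle
  rw [← hceil, add_lt_add_iff_right, lt_div_iff₀ hN'] at hlt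
  exact ⟨_, sub_pos.mpr hlt, sub_le_iff_le_add'.mpr hle⟩

section Shift

variable {a : W → ι →₀ ℕ} {N : W → ℕ} {Γ : Set (ι →₀ ℕ)} {q : ι → ℚ}
  {facet : (ι →₀ ℕ) → Dual ℚ (ι → ℚ)} {vert : Dual ℚ (ι → ℚ) → ι → W}

/-- Every shifted point `m + q`, `m ∈ Γ`, lies in the open cone over the vertices
`vert (facet m)` of the facet `facet m`. -/
structure IsShiftedFan (a : W → ι →₀ ℕ) (N : W → ℕ) (Γ : Set (ι →₀ ℕ)) (q : ι → ℚ)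
    (facet : (ι →₀ ℕ) → Dual ℚ (ι → ℚ)) (vert : Dual ℚ (ι → ℚ) → ι → W) : Prop where
  pos : ∀ w, 0 < N w
  isFacet : ∀ m ∈ Γ, IsFacet (toQ ∘ a) (fun w => (N w : ℚ)⁻¹) (facet m)
  linearIndependent : ∀ m ∈ Γ, LinearIndependent ℚ ((toQ ∘ a) ∘ vert (facet m))
  range_vert : ∀ m ∈ Γ, Set.range (vert (facet m)) = {w | facet m (toQ (a w)) = (N w : ℚ)⁻¹}
  coord_pos : ∀ m (hm : m ∈ Γ) i, 0 < (vertexBasis (linearIndependent m hm)).coord i (toQ m + q)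

namespace IsShiftedFan

variable (h : IsShiftedFan a N Γ q facet vert)
include h

theorem coord_add {m : ι →₀ ℕ} (hm : m ∈ Γ) (m' : ι →₀ ℕ) (k : ι → ℕ) (i : ι) :
    (vertexBasis (h.linearIndependent m hm)).coord i
        (toQ (m' + ∑ i, k i • N (vert (facet m) i) • a (vert (facet m) i)) + q) =
      (vertexBasis (h.linearIndependent m hm)).coord i (toQ m' + q) +
        k i * N (vert (facet m) i) := by
  rw [map_add toQ, add_right_comm, map_add (Basis.coord _ _), toQ_sum_smul]
  exact congrArg _ (coord_sum_smul (h.linearIndependent m hm)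
    (fun i => (k i * N (vert (facet m) i) : ℚ)) i)

theorem isOpenConeCoord [Fintype W] {m : ι →₀ ℕ} (hm : m ∈ Γ) :
    ∃ l, IsOpenConeCoord (toQ ∘ a) (fun w => (N w : ℚ)⁻¹) (facet m) (toQ m + q) l :=
  ⟨_, isOpenConeCoord_extend (h.linearIndependent m hm) (h.range_vert m hm) (h.coord_pos m hm)⟩

variable [Finite W]

theorem facet_eq {m m' : ι →₀ ℕ} (hm : m ∈ Γ) (hm' : m' ∈ Γ)
    (hpos : ∀ i, 0 < (vertexBasis (h.linearIndependent m hm)).coord i (toQ m' + q)) :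
    facet m' = facet m := by
  cases nonempty_fintype W
  obtain ⟨l', hl'⟩ := h.isOpenConeCoord hm'
  exact (h.isFacet m hm).eq_of_isOpenConeCoord (h.isFacet m' hm')
    (isOpenConeCoord_extend (h.linearIndependent m hm) (h.range_vert m hm) hpos) hl'

theorem facet_add {m : ι →₀ ℕ} (hm : m ∈ Γ) (k : ι → ℕ)
    (hmk : m + ∑ i, k i • N (vert (facet m) i) • a (vert (facet m) i) ∈ Γ) :
    facet (m + ∑ i, k i • N (vert (facet m) i) • a (vert (facet m) i)) = facet m := by
  refine h.facet_eq hm hmk fun i => ?_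
  rw [h.coord_add hm]
  have := h.coord_pos m hm i
  positivity

theorem facet_apply_add {m : ι →₀ ℕ} (hm : m ∈ Γ) {i : ι}
    (hmi : m + N (vert (facet m) i) • a (vert (facet m) i) ∈ Γ) :
    facet (m + N (vert (facet m) i) • a (vert (facet m) i))
        (toQ (m + N (vert (facet m) i) • a (vert (facet m) i)) + q) =
      facet m (toQ m + q) + 1 := by
  classical
  have hsingle : ∑ j, Pi.single (M := fun _ => ℕ) i 1 j • N (vert (facet m) j) •
      a (vert (facet m) j) = N (vert (facet m) i) • a (vert (facet m) i) := by
    simp only [Pi.single_apply, ite_smul, one_smul, zero_smul, Finset.sum_ite_eq',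
      Finset.mem_univ, if_true]
  have htight : facet m (toQ (a (vert (facet m) i))) = (N (vert (facet m) i) : ℚ)⁻¹ :=
    (h.range_vert m hm).subset ⟨i, rfl⟩
  have hfacet := h.facet_add hm (Pi.single i 1) (hsingle ▸ hmi)
  rw [hsingle] at hfacet
  rw [hfacet, map_add toQ, add_right_comm, map_add, map_nsmul, map_nsmul, htight, nsmul_eq_mul,
    mul_inv_cancel₀ (Nat.cast_ne_zero.mpr (h.pos _).ne')]

theorem facet_apply_add_lt {m : ι →₀ ℕ} (hm : m ∈ Γ) {w : W} (hmw : m + N w • a w ∈ Γ)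
    (hw : w ∉ Set.range (vert (facet m))) :
    facet (m + N w • a w) (toQ (m + N w • a w) + q) < facet m (toQ m + q) + 1 := by
  cases nonempty_fintype W
  obtain ⟨l, hl⟩ := h.isOpenConeCoord hm
  have hN : (0 : ℚ) < N w := Nat.cast_pos.mpr (h.pos w)
  have hu' := (h.isFacet _ hmw).le
  rw [map_add toQ, add_right_comm, map_add, map_nsmul, map_nsmul, nsmul_eq_mul]
  have hle : (N w : ℚ) * facet (m + N w • a w) (toQ (a w)) ≤ 1 := by
    rw [← le_inv_mul_iff₀ hN, mul_one]
    exact hu' w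
  refine (add_le_add (hl.apply_le hu') hle).lt_of_ne fun heq => hw ?_
  have hfacet := (h.isFacet m hm).eq_of_apply_eq hl hu'
    ((hl.apply_le hu').antisymm (by linarith))
  rw [h.range_vert m hm]
  rw [hfacet] at heq
  exact eq_inv_of_mul_eq_one_right (add_left_cancel heq)

theorem finite_facet_apply_lt (c : ℚ) : {m ∈ Γ | facet m (toQ m + q) < c}.Finite := by
  classical
  cases nonempty_fintype W
  let C (i : ι) : ℚ := ∑ w, N w * toQ (a w) i
  have hC (i : ι) : 0 ≤ C i := Finset.sum_nonneg fun w _ => by rw [toQ_apply]; positivity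
  let B : ι →₀ ℕ := Finsupp.equivFunOnFinite.symm fun i => ⌈C i * c - q i⌉₊
  refine (Set.finite_Icc 0 B).subset fun m ⟨hm, hmc⟩ => ⟨zero_le, fun i => ?_⟩
  obtain ⟨l, hl⟩ := h.isOpenConeCoord hm
  have hterm (w : W) : l w * toQ (a w) i ≤ C i * (l w * (N w : ℚ)⁻¹) := by
    have hN : (N w : ℚ) ≠ 0 := Nat.cast_ne_zero.mpr (h.pos w).ne'
    have hle : N w * toQ (a w) i ≤ C i := Finset.single_le_sum
      (f := fun w => N w * toQ (a w) i) (fun w _ => by rw [toQ_apply]; positivity)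
      (Finset.mem_univ w)
    calc l w * toQ (a w) i = (N w * toQ (a w) i) * (l w * (N w : ℚ)⁻¹) := by field_simp
      _ ≤ _ := mul_le_mul_of_nonneg_right hle (mul_nonneg (hl.nonneg w) (by positivity))
  have hsum : toQ m i + q i ≤ C i * facet m (toQ m + q) := by
    rw [hl.apply_eq, Finset.mul_sum, ← Pi.add_apply, ← hl.sum_smul, Finset.sum_apply]
    exact Finset.sum_le_sum fun w _ => hterm w
  have hmi : (m i : ℚ) ≤ C i * c - q i := by
    rw [← toQ_apply]
    linarith [mul_le_mul_of_nonneg_left hmc.le (hC i)]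
  exact Nat.cast_le.mp (hmi.trans (Nat.le_ceil _))

/-- The half-open fundamental parallelepipeds of the cones. -/
def box : Set (ι →₀ ℕ) :=
  {m | ∃ hm : m ∈ Γ, ∀ i, (vertexBasis (h.linearIndependent m hm)).coord i (toQ m + q) ≤
    N (vert (facet m) i)}

theorem finite_box : h.box.Finite := by
  refine (h.finite_facet_apply_lt (Fintype.card ι + 1)).subset fun m ⟨hm, hbox⟩ =>
    ⟨hm, lt_of_le_of_lt ?_ (lt_add_one _)⟩
  rw [← sum_coord_smul (h.linearIndependent m hm) (toQ m + q), map_sum, ← nsmul_one,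
    ← Finset.card_univ]
  refine Finset.sum_le_card_nsmul _ _ _ fun i _ => ?_
  have htight : facet m (toQ (a (vert (facet m) i))) = (N (vert (facet m) i) : ℚ)⁻¹ :=
    (h.range_vert m hm).subset ⟨i, rfl⟩
  rw [map_smul, Function.comp_apply, htight, smul_eq_mul, ← div_eq_mul_inv]
  exact div_le_one_of_le₀ (hbox i) (Nat.cast_nonneg _)

theorem injOn_box (hΓ : ∀ m ∈ Γ, ∀ v, m + v ∈ Γ) :
    Set.InjOn (fun p : (ι →₀ ℕ) × (ι →₀ ℕ) =>
      p.1 + ∑ i, p.2 i • N (vert (facet p.1) i) • a (vert (facet p.1) i))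
      (h.box ×ˢ Set.univ) := by
  rintro ⟨m, k⟩ ⟨⟨hm, hbox⟩, -⟩ ⟨m', k'⟩ ⟨⟨hm', hbox'⟩, -⟩ heq
  dsimp only at heq hbox hbox'
  have hfacet : facet m = facet m' := by
    rw [← h.facet_add hm k (hΓ m hm _), ← h.facet_add hm' k' (hΓ m' hm' _), heq]
  simp only [hfacet] at hbox heq
  obtain rfl : k = k' := Finsupp.ext fun i => by
    have hpos := h.coord_pos m hm i
    simp only [hfacet] at hpos
    refine eq_of_add_natCast_mul_eq ⟨hpos, hbox i⟩ ⟨h.coord_pos m' hm' i, hbox' i⟩ ?_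
    rw [← h.coord_add hm', ← h.coord_add hm', heq]
  rw [add_right_cancel heq]

theorem surjOn_box (hΓ : ∀ m ∈ Γ, ∀ v, 0 ≤ toQ m + q - toQ v → ∃ m' ∈ Γ, m = m' + v) :
    Set.SurjOn (fun p : (ι →₀ ℕ) × (ι →₀ ℕ) =>
      p.1 + ∑ i, p.2 i • N (vert (facet p.1) i) • a (vert (facet p.1) i))
      (h.box ×ˢ Set.univ) Γ := by
  intro m hm
  let B := vertexBasis (h.linearIndependent m hm)
  choose k hk using fun i => exists_sub_natCast_mul_mem_Ioc (h.coord_pos m hm i)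
    (h.pos (vert (facet m) i))
  have hsub : toQ m + q - toQ (∑ i, k i • N (vert (facet m) i) • a (vert (facet m) i)) =
      ∑ i, (B.coord i (toQ m + q) - k i * N (vert (facet m) i)) •
        toQ (a (vert (facet m) i)) := by
    simp only [sub_smul, Finset.sum_sub_distrib, toQ_sum_smul]
    exact congrArg (· - _) (sum_coord_smul (h.linearIndependent m hm) _).symm
  obtain ⟨m', hm', hmm'⟩ := hΓ m hm _ <| hsub ▸ Finset.sum_nonneg fun i _ =>
    smul_nonneg (hk i).1.le fun j => Nat.cast_nonneg _
  have hcoord (i : ι) : B.coord i (toQ m' + q) =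
      B.coord i (toQ m + q) - k i * N (vert (facet m) i) := by
    rw [eq_sub_iff_add_eq, ← h.coord_add hm m' k i, ← hmm']
  have hfacet := h.facet_eq hm hm' fun i => (hcoord i).symm ▸ (hk i).1
  refine ⟨(m', Finsupp.equivFunOnFinite.symm k), ⟨⟨hm', fun i => ?_⟩, Set.mem_univ _⟩, ?_⟩
  · simp only [hfacet]
    exact (hcoord i).trans_le (hk i).2
  · simp only [hfacet]
    exact hmm'.symm

end IsShiftedFan

end Shift

/-- A decomposition of the translation-stable set `Γ` of exponents coming from a simplicial
fan: `star m` lists the vertices of the cone of `m`, and moving `m` by `N w • a w` increases the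
weight of `m` by at most `1`, with equality exactly for the vertices `w` of its cone. Every exponent
in `Γ` is reached in exactly one way by such moves, inside one cone, from a point of `box`. -/
structure BoxDecomposition [Fintype W] (a : W → ι →₀ ℕ) (N : W → ℕ) (Γ : Set (ι →₀ ℕ)) where
  wt : (ι →₀ ℕ) → ℚ
  star : (ι →₀ ℕ) → ι → W
  box : Set (ι →₀ ℕ)
  linearIndependent : ∀ m ∈ Γ, LinearIndependent ℚ ((toQ ∘ a) ∘ star m)
  exists_isSupportingAt : ∀ m ∈ Γ, ∃ u, IsSupportingAt (toQ ∘ a) u (toQ m) ∧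
    ∀ i, u (toQ (a (star m i))) = 1
  star_add : ∀ m ∈ Γ, ∀ k : ι → ℕ, star (m + ∑ i, k i • N (star m i) • a (star m i)) = star m
  wt_add : ∀ m ∈ Γ, ∀ i, wt (m + N (star m i) • a (star m i)) = wt m + 1
  wt_add_lt : ∀ m ∈ Γ, ∀ w ∉ Set.range (star m), wt (m + N w • a w) < wt m + 1
  finite_box : box.Finite
  finite_wt_lt : ∀ c, {m ∈ Γ | wt m < c}.Finite
  bijOn : Set.BijOn
    (fun p : (ι →₀ ℕ) × (ι →₀ ℕ) => p.1 + ∑ i, p.2 i • N (star p.1 i) • a (star p.1 i))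
    (box ×ˢ Set.univ) Γ

variable [Fintype W] {a : W → ι →₀ ℕ} {N : W → ℕ}

namespace BoxDecomposition

variable {Γ : Set (ι →₀ ℕ)} (D : BoxDecomposition a N Γ)

theorem box_subset : D.box ⊆ Γ := fun m hm => by
  simpa only [Finsupp.coe_zero, Pi.zero_apply, zero_smul, Finset.sum_const_zero, add_zero] using
    D.bijOn.mapsTo (Set.mk_mem_prod hm (Set.mem_univ 0))

/-- The bijection `bijOn` as an equivalence. -/
noncomputable def sigmaEquiv : (Σ _ : D.box, ι →₀ ℕ) ≃ Γ :=
  (Equiv.sigmaEquivProd ..).trans <| ((Equiv.refl _).prodCongr (Equiv.Set.univ _).symm).trans <|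
    (Equiv.Set.prod ..).symm.trans (D.bijOn.equiv _)

theorem finite_wt_lt_wt (m : Γ) : {j : Γ | D.wt j < D.wt m}.Finite :=
  ((D.finite_wt_lt (D.wt m)).preimage Subtype.val_injective.injOn).subset fun j hj => ⟨j.2, hj⟩

end BoxDecomposition

theorem exists_isShiftedFan (hN : IsGeneric (toQ ∘ a) N)
    (hconv : ∀ i, ∃ w, ∃ k > 0, a w = Finsupp.single i k) (U : Finset ι) :
    ∃ q facet vert, (∀ i ∈ U, q i < 0) ∧ (∀ i ∉ U, q i < 1) ∧
      IsShiftedFan a N (positiveOn U) q facet vert ∧ ∀ m ∈ positiveOn U,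
        ∃ l : W → ℚ, (∀ w, 0 ≤ l w) ∧ (∀ w, l w ≠ 0 → facet m (toQ (a w)) = (N w : ℚ)⁻¹) ∧
          ∑ w, l w • toQ (a w) = toQ m := by
  classical
  have hconvQ (i : ι) : ∃ w, ∃ k > 0, (toQ ∘ a) w = Pi.single i k := by
    obtain ⟨w, k, hk, hw⟩ := hconv i
    refine ⟨w, k, Nat.cast_pos.mpr hk, funext fun j => ?_⟩
    simp only [comp_apply, hw, toQ_apply, Finsupp.single_apply, Pi.single_apply, eq_comm (a := i),
      Nat.cast_ite, Nat.cast_zero]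
  obtain ⟨q, hqU, hq, hfan⟩ := exists_shift hN hconvQ U
  choose! facet hfacet hopen hclosed using fun m hm => hfan m hm
  have : Nonempty (ι → W) := ⟨fun i => (hconv i).choose⟩
  choose! vert hvert using fun u (hu : IsFacet (toQ ∘ a) (fun w => (N w : ℚ)⁻¹) u) =>
    hu.exists_basis
  refine ⟨q, fun m => facet m, vert, fun i hi => (hqU i hi).2, fun i hi => (hq i hi).2,
    ⟨hN.pos, fun m hm => hfacet m hm, fun m hm => (hvert _ (hfacet m hm)).1,
      fun m hm => (hvert _ (hfacet m hm)).2, fun m hm i => ?_⟩, fun m hm => hclosed m hm⟩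
  obtain ⟨l, hl⟩ := hopen m hm
  exact hl.coord_pos (hvert _ (hfacet m hm)).1 (hvert _ (hfacet m hm)).2 i

theorem nonempty_boxDecomposition (hN : IsGeneric (toQ ∘ a) N)
    (hconv : ∀ i, ∃ w, ∃ k > 0, a w = Finsupp.single i k) (U : Finset ι) :
    Nonempty (BoxDecomposition a N (positiveOn U)) := by
  obtain ⟨q, facet, vert, hqU, hq, h, hclosed⟩ := exists_isShiftedFan hN hconv U
  have hadd {m : ι →₀ ℕ} (hm : m ∈ positiveOn U) (v) := add_mem_positiveOn hm v
  exact ⟨{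
    wt m := facet m (toQ m + q)
    star m := vert (facet m)
    box := h.box
    linearIndependent := h.linearIndependent
    exists_isSupportingAt m hm := ⟨_, (h.isFacet m hm).isSupportingAt hN (h.linearIndependent m hm)
      (h.range_vert m hm) (hclosed m hm), sum_coord_vertex (h.linearIndependent m hm)⟩
    star_add m hm k := congrArg vert (h.facet_add hm k (hadd hm _))
    wt_add m hm i := h.facet_apply_add hm (hadd hm _)
    wt_add_lt m hm w := h.facet_apply_add_lt hm (hadd hm _)
    finite_box := h.finite_box
    finite_wt_lt := h.finite_facet_apply_lt
    bijOn := ⟨fun p hp => hadd hp.1.1 _, h.injOn_box fun m hm v => hadd hm v,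
      h.surjOn_box fun m _ v => eq_add_of_nonneg_sub hqU hq v⟩ }⟩

end BoxDecomposition

/-! ### The Newton function and the graded module of its filtration -/

section NewtonFunction

open Module Pointwise

section

variable {ι W : Type*} [Fintype W] {a : W → ι → ℚ} {u u' : Dual ℚ (ι → ℚ)} {x : ι → ℚ}

theorem IsSupportingAt.apply_eq_sum {l : W → ℚ} (hlu : ∀ w, l w ≠ 0 → u (a w) = 1)
    (hx : ∑ w, l w • a w = x) : u x = ∑ w, l w := by
  rw [← hx, map_sum]
  refine Finset.sum_congr rfl fun w _ => ?_
  rw [map_smul, smul_eq_mul]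
  obtain hw | hw := eq_or_ne (l w) 0
  · rw [hw, zero_mul]
  · rw [hlu w hw, mul_one]

theorem IsSupportingAt.apply_le (h : IsSupportingAt a u x) (hu' : ∀ w, u' (a w) ≤ 1) :
    u' x ≤ u x := by
  obtain ⟨l, hl, hlu, hx⟩ := h.exists_coord
  rw [apply_eq_sum hlu hx, ← hx, map_sum]
  refine Finset.sum_le_sum fun w _ => ?_
  rw [map_smul, smul_eq_mul]
  exact mul_le_of_le_one_right (hl w) (hu' w)

theorem IsSupportingAt.add_smul (h : IsSupportingAt a u x) {w : W} (hw : u (a w) = 1) {c : ℚ}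
    (hc : 0 ≤ c) : IsSupportingAt a u (x + c • a w) := by
  classical
  obtain ⟨l, hl, hlu, hx⟩ := h.exists_coord
  refine ⟨h.le_one, l + Pi.single w c, add_nonneg (α := W → ℚ) hl (Pi.single_nonneg.mpr hc),
    fun v hv => ?_, ?_⟩
  · obtain rfl | hvw := eq_or_ne v w
    · exact hw
    · exact hlu v (by simpa [hvw] using hv)
  · simp only [Pi.add_apply, _root_.add_smul, Finset.sum_add_distrib, hx, Pi.single_apply, ite_smul,
      zero_smul, Finset.sum_ite_eq', Finset.mem_univ, if_true]

theorem exists_finite_isSupportingAt [Finite ι] {a : W → ι →₀ ℕ}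
    (hconv : ∀ i, ∃ w, ∃ k > 0, a w = Finsupp.single i k) :
    ∃ T : Set (Dual ℚ (ι → ℚ)), T.Finite ∧ ∀ m, ∃ u ∈ T, IsSupportingAt (toQ ∘ a) u (toQ m) := by
  cases nonempty_fintype ι
  obtain ⟨N, hN⟩ := exists_isGeneric (toQ ∘ a)
  obtain ⟨q, facet, vert, -, -, h, hclosed⟩ := exists_isShiftedFan hN hconv ∅
  refine ⟨Set.range fun b : {b : ι → W // LinearIndependent ℚ ((toQ ∘ a) ∘ b)} =>
    ∑ i, (vertexBasis b.2).coord i, Set.finite_range _, fun m => ?_⟩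
  have hm : m ∈ positiveOn (∅ : Finset ι) := fun i hi => (Finset.notMem_empty i hi).elim
  exact ⟨_, ⟨⟨_, h.linearIndependent m hm⟩, rfl⟩, (h.isFacet m hm).isSupportingAt hN _
    (h.range_vert m hm) (hclosed m hm)⟩

end

variable {σ : Type*}

section Rational

variable [Fintype σ]

/-- The extension of scalars of a rational functional to `ℝ`. -/
noncomputable def realDual (u : Dual ℚ (σ → ℚ)) : Dual ℝ (σ → ℝ) := by
  classical exact Fintype.linearCombination ℝ fun i => (u (Pi.single i 1) : ℝ)

theorem realDual_toR (u : Dual ℚ (σ → ℚ)) (m : σ →₀ ℕ) : realDual u (toR m) = u (toQ m) := by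
  classical
  conv_rhs => rw [LinearMap.pi_apply_eq_sum_univ u]
  rw [realDual, Fintype.linearCombination_apply, Rat.cast_sum]
  refine Finset.sum_congr rfl fun i _ => ?_
  have hsingle : Pi.single i 1 = fun j => if i = j then (1 : ℚ) else 0 :=
    funext fun j => by simp only [Pi.single_apply, eq_comm]
  rw [hsingle, smul_eq_mul, smul_eq_mul, Rat.cast_mul, toR, toQ_apply, Rat.cast_natCast]

end Rational

variable {f : MvPolynomial σ ℂ} {u u' : Dual ℚ (σ → ℚ)} {m : σ →₀ ℕ}

/-- `u` computes the Newton function of `f` at the exponent `m`. -/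
abbrev SupportsNewtonAt (f : MvPolynomial σ ℂ) (u : Dual ℚ (σ → ℚ)) (m : σ →₀ ℕ) : Prop :=
  IsSupportingAt (toQ ∘ ((↑) : f.support → σ →₀ ℕ)) u (toQ m)

theorem apply_le_one_of_mem_newtonPolytope {φ : Dual ℝ (σ → ℝ)}
    (hφ : ∀ w ∈ f.support, φ (toR w) ≤ 1) {x : σ → ℝ} (hx : x ∈ newtonPolytope f) : φ x ≤ 1 := by
  refine convexHull_min ?_ (convex_halfSpace_le φ.isLinear 1) hx
  rintro _ (rfl | ⟨w, hw, rfl⟩)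
  · exact (map_zero φ).trans_le zero_le_one
  · exact hφ w hw

theorem zero_mem_newtonPolytope : (0 : σ → ℝ) ∈ newtonPolytope f :=
  subset_convexHull ℝ _ (.inl rfl)

theorem toR_mem_newtonPolytope (w : f.support) : toR (w : σ →₀ ℕ) ∈ newtonPolytope f :=
  subset_convexHull ℝ _ (.inr ⟨w, w.2, rfl⟩)

theorem sum_smul_toR_mem {l : f.support → ℝ} (hl : ∀ w, 0 ≤ l w) :
    ∑ w, l w • toR (w : σ →₀ ℕ) ∈ (∑ w, l w) • newtonPolytope f := by
  obtain hsum | hsum := (Finset.sum_nonneg fun w _ => hl w).eq_or_lt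
  · have hl0 := (Finset.sum_eq_zero_iff_of_nonneg fun w _ => hl w).mp hsum.symm
    rw [← hsum, Finset.sum_eq_zero fun w hw => by rw [hl0 w hw, zero_smul]]
    exact ⟨0, zero_mem_newtonPolytope, smul_zero 0⟩
  · rw [Set.mem_smul_set_iff_inv_smul_mem₀ hsum.ne', Finset.smul_sum]
    simp only [smul_smul]
    refine (convex_convexHull ℝ _).sum_mem (fun w _ => mul_nonneg (inv_nonneg.mpr hsum.le) (hl w))
      ?_ fun w _ => toR_mem_newtonPolytope w
    rw [← Finset.mul_sum, inv_mul_cancel₀ hsum.ne']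

theorem Convenient.exists_single (hf : Convenient f) (i : σ) :
    ∃ w : f.support, ∃ k > 0, (w : σ →₀ ℕ) = Finsupp.single i k := by
  obtain ⟨k, hk, hfk⟩ := hf i
  exact ⟨⟨_, mem_support_iff.mpr hfk⟩, k, hk, rfl⟩

variable [Finite σ]

theorem SupportsNewtonAt.nu_eq (h : SupportsNewtonAt f u m) : nu f (toR m) = u (toQ m) := by
  cases nonempty_fintype σ
  obtain ⟨l, hl, hlu, hx⟩ := h.exists_coord
  have hsum := IsSupportingAt.apply_eq_sum hlu hx
  have hmem : toR m ∈ (u (toQ m) : ℝ) • newtonPolytope f := by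
    have hmR : toR m = ∑ w, (l w : ℝ) • toR (w : σ →₀ ℕ) := funext fun i => by
      simpa [toQ_apply, toR] using (congrArg (Rat.cast : ℚ → ℝ) (congrFun hx i)).symm
    rw [hsum, hmR, Rat.cast_sum]
    exact sum_smul_toR_mem fun w => Rat.cast_nonneg.mpr (hl w)
  have hnonneg : 0 ≤ u (toQ m) := hsum ▸ Finset.sum_nonneg fun w _ => hl w
  refine (gauge_le_of_mem (Rat.cast_nonneg.mpr hnonneg) hmem).antisymm
    (le_csInf ⟨u (toQ m) + 1, by positivity, ?_⟩ ?_)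
  · have hconvex : Convex ℝ (newtonPolytope f) := convex_convexHull ℝ _
    rw [hconvex.add_smul (Rat.cast_nonneg.mpr hnonneg) zero_le_one, one_smul]
    exact ⟨_, hmem, 0, zero_mem_newtonPolytope, add_zero _⟩
  · rintro r ⟨hr, y, hy, hym⟩
    have hy1 := apply_le_one_of_mem_newtonPolytope (φ := realDual u)
      (fun w hw => realDual_toR u w ▸ by exact_mod_cast h.le_one ⟨w, hw⟩) hy
    rw [← realDual_toR, ← hym, map_smul, smul_eq_mul]
    exact mul_le_of_le_one_right hr.le hy1

theorem Convenient.exists_supportsNewtonAt (hf : Convenient f) (m : σ →₀ ℕ) :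
    ∃ u, SupportsNewtonAt f u m := by
  obtain ⟨T, -, hT⟩ := exists_finite_isSupportingAt hf.exists_single
  exact (hT m).imp fun _ hu => hu.2

theorem Convenient.apply_le_nu (hf : Convenient f) (hu : ∀ w ∈ f.support, u (toQ w) ≤ 1)
    (m : σ →₀ ℕ) : u (toQ m) ≤ nu f (toR m) := by
  obtain ⟨u', hu'⟩ := hf.exists_supportsNewtonAt m
  rw [hu'.nu_eq]
  exact_mod_cast hu'.apply_le fun w => hu w w.2

theorem SupportsNewtonAt.nu_add_nsmul (h : SupportsNewtonAt f u m) {w : f.support}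
    (hw : u (toQ (w : σ →₀ ℕ)) = 1) (N : ℕ) :
    nu f (toR (m + N • (w : σ →₀ ℕ))) = nu f (toR m) + N := by
  have h' : SupportsNewtonAt f u (m + N • (w : σ →₀ ℕ)) := by
    rw [SupportsNewtonAt, map_add, map_nsmul, ← Nat.cast_smul_eq_nsmul ℚ]
    exact h.add_smul hw N.cast_nonneg
  rw [h'.nu_eq, h.nu_eq, map_add, map_add, map_nsmul, map_nsmul, hw, nsmul_one, Rat.cast_add,
    Rat.cast_natCast]

theorem Convenient.apply_le_mul_nu (hf : Convenient f) (m : σ →₀ ℕ) (i : σ) :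
    (m i : ℝ) ≤ (degreeOf i f + 1) * nu f (toR m) := by
  have hd : (0 : ℚ) < degreeOf i f + 1 := by positivity
  have hle := hf.apply_le_nu (u := (degreeOf i f + 1 : ℚ)⁻¹ • LinearMap.proj i) (m := m)
    fun w hw => by
      rw [LinearMap.smul_apply, LinearMap.proj_apply, toQ_apply, smul_eq_mul, inv_mul_le_one₀ hd]
      exact_mod_cast (monomial_le_degreeOf i hw).trans (Nat.le_succ _)
  rw [LinearMap.smul_apply, LinearMap.proj_apply, toQ_apply, smul_eq_mul] at hle
  push_cast at hle
  rwa [inv_mul_le_iff₀ (by positivity)] at hle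

theorem Convenient.finite_nu_le (hf : Convenient f) (c : ℝ) :
    {m : σ →₀ ℕ | nu f (toR m) ≤ c}.Finite := by
  classical
  refine (Set.finite_Icc 0
    (Finsupp.equivFunOnFinite.symm fun i => ⌈(degreeOf i f + 1) * c⌉₊)).subset
    fun m hm => ⟨zero_le, fun i => ?_⟩
  have hmi := (hf.apply_le_mul_nu m i).trans (mul_le_mul_of_nonneg_left hm (by positivity))
  exact Nat.cast_le.mp (hmi.trans (Nat.le_ceil _))

end NewtonFunction

section NewtonGraded

variable {σ : Type*} {f : MvPolynomial σ ℂ}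

/-- The exponent of the product of the monomials of `f` recorded by `k`. -/
noncomputable def shift : (f.support →₀ ℕ) →ₗ[ℕ] σ →₀ ℕ :=
  Finsupp.linearCombination ℕ ((↑) : f.support → σ →₀ ℕ)

theorem shift_single (w : f.support) (N : ℕ) : shift (Finsupp.single w N) = N • (w : σ →₀ ℕ) :=
  Finsupp.linearCombination_single ..

theorem apply_toQ_shift (u : Module.Dual ℚ (σ → ℚ)) (k : f.support →₀ ℕ) :
    u (toQ (shift k)) = ∑ w ∈ k.support, k w * u (toQ (w : σ →₀ ℕ)) := by
  rw [shift, Finsupp.linearCombination_apply, Finsupp.sum, map_sum, map_sum]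
  exact Finset.sum_congr rfl fun w _ => by rw [map_nsmul, map_nsmul, nsmul_eq_mul]

theorem apply_toQ_shift_le {u : Module.Dual ℚ (σ → ℚ)}
    (hu : ∀ w : f.support, u (toQ (w : σ →₀ ℕ)) ≤ 1) (k : f.support →₀ ℕ) :
    u (toQ (shift k)) ≤ k.degree := by
  rw [apply_toQ_shift, Finsupp.degree_apply, Nat.cast_sum]
  exact Finset.sum_le_sum fun w _ => mul_le_of_le_one_right (Nat.cast_nonneg _) (hu w)

/-- Multiplying the monomial of exponent `m` by the monomials recorded by `k` raises the Newton
function as much as the subadditivity of `ν` permits. -/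
def IsTight (k : f.support →₀ ℕ) (m : σ →₀ ℕ) : Prop :=
  nu f (toR (m + shift k)) = nu f (toR m) + k.degree

theorem isTight_zero (m : σ →₀ ℕ) : IsTight (0 : f.support →₀ ℕ) m := by
  rw [IsTight, map_zero, map_zero, Nat.cast_zero, add_zero, add_zero]

variable [Finite σ]

theorem Convenient.nu_add_shift_le (hf : Convenient f) (m : σ →₀ ℕ) (k : f.support →₀ ℕ) :
    nu f (toR (m + shift k)) ≤ nu f (toR m) + k.degree := by
  obtain ⟨u, hu⟩ := hf.exists_supportsNewtonAt (m + shift k)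
  rw [hu.nu_eq, map_add, map_add, Rat.cast_add]
  exact add_le_add (hf.apply_le_nu (fun w hw => hu.le_one ⟨w, hw⟩) m)
    (by exact_mod_cast apply_toQ_shift_le (fun w => hu.le_one w) k)

theorem Convenient.isTight_add_iff (hf : Convenient f) {k k' : f.support →₀ ℕ} {m : σ →₀ ℕ} :
    IsTight (k + k') m ↔ IsTight k' m ∧ IsTight k (m + shift k') := by
  have h' := hf.nu_add_shift_le m k'
  have h := hf.nu_add_shift_le (m + shift k') k
  rw [IsTight, IsTight, IsTight, map_add, map_add, Nat.cast_add, add_comm (shift k), ← add_assoc]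
  constructor
  · intro
    constructor <;> linarith
  · rintro ⟨htight', htight⟩
    linarith

/-- The associated graded module of the Newton filtration of the polynomial ring. The
class of the monomial of exponent `m` is `NewtonGraded.basis hf m`; that `f` is convenient is part
of the type because it makes the polynomial ring on the monomials of `f` act. -/
def NewtonGraded (_ : Convenient f) : Type _ := (σ →₀ ℕ) →₀ ℂ

namespace NewtonGraded

variable (hf : Convenient f)

noncomputable instance : AddCommGroup (NewtonGraded hf) :=
  inferInstanceAs (AddCommGroup ((σ →₀ ℕ) →₀ ℂ))

noncomputable instance : Module ℂ (NewtonGraded hf) :=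
  inferInstanceAs (Module ℂ ((σ →₀ ℕ) →₀ ℂ))

/-- The classes of the monomials. -/
noncomputable def basis : Module.Basis (σ →₀ ℕ) ℂ (NewtonGraded hf) :=
  Finsupp.basisSingleOne

open Classical in
/-- Multiplication of the associated graded module by the classes, in degree `1`, of
the monomials of `f` recorded by `k`. -/
noncomputable def mulMonomials :
    Multiplicative (f.support →₀ ℕ) →* Module.End ℂ (NewtonGraded hf) where
  toFun k := (basis hf).constr ℂ fun m =>
    if IsTight k.toAdd m then basis hf (m + shift k.toAdd) else 0
  map_one' := (basis hf).ext fun m => by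
    rw [Module.Basis.constr_basis, toAdd_one, if_pos (isTight_zero m), map_zero, add_zero,
      Module.End.one_apply]
  map_mul' k k' := (basis hf).ext fun m => by
    simp only [Module.End.mul_apply, Module.Basis.constr_basis, toAdd_mul, hf.isTight_add_iff]
    by_cases h : IsTight k'.toAdd m
    · simp only [h, true_and, if_true, Module.Basis.constr_basis, map_add,
        add_comm (shift k.toAdd), add_assoc]
    · simp only [h, false_and, if_false, map_zero]

/-- The action of the polynomial ring with one variable for each monomial of `f`; the variables
act as the classes of these monomials in degree `1`. -/
noncomputable def action :
    MvPolynomial f.support ℂ →ₐ[ℂ] Module.End ℂ (NewtonGraded hf) :=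
  AddMonoidAlgebra.lift ℂ _ _ (mulMonomials hf)

noncomputable instance : Module (MvPolynomial f.support ℂ) (NewtonGraded hf) :=
  Module.compHom _ (action hf).toRingHom

instance : IsScalarTower ℂ (MvPolynomial f.support ℂ) (NewtonGraded hf) where
  smul_assoc c s x := congrArg (· x) (map_smul (action hf) c s)

open Classical in
theorem monomial_smul_basis (k : f.support →₀ ℕ) (c : ℂ) (m : σ →₀ ℕ) :
    monomial k c • basis hf m = if IsTight k m then c • basis hf (m + shift k) else 0 := by
  have haction : action hf (monomial k c) = c • mulMonomials hf (.ofAdd k) := by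
    rw [← single_eq_monomial]
    exact AddMonoidAlgebra.lift_single _ _ _
  change action hf (monomial k c) (basis hf m) = _
  rw [haction, LinearMap.smul_apply]
  change c • (basis hf).constr ℂ _ (basis hf m) = _
  rw [Module.Basis.constr_basis, toAdd_ofAdd, smul_ite, smul_zero]

theorem smul_basis (s : MvPolynomial f.support ℂ) (m : σ →₀ ℕ) :
    s • basis hf m = ∑ k ∈ s.support, monomial k (s.coeff k) • basis hf m := by
  conv_lhs => rw [s.as_sum, Finset.sum_smul]

open Classical in
theorem X_pow_smul_basis (w : f.support) (N : ℕ) (m : σ →₀ ℕ) :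
    (X w ^ N : MvPolynomial f.support ℂ) • basis hf m =
      if IsTight (Finsupp.single w N) m then basis hf (m + N • (w : σ →₀ ℕ)) else 0 := by
  rw [X_pow_eq_monomial, monomial_smul_basis, one_smul, shift_single]

/-- The submodule spanned by the classes of the monomials divisible by `∏ i ∈ U, X i`. -/
noncomputable def divisibleBy (U : Finset σ) :
    Submodule (MvPolynomial f.support ℂ) (NewtonGraded hf) where
  __ := Submodule.span ℂ (basis hf '' positiveOn U)
  smul_mem' s x hx := by
    induction hx using Submodule.span_induction with
    | mem _ h =>
      obtain ⟨m, hm, rfl⟩ := h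
      rw [smul_basis]
      refine Submodule.sum_mem _ fun k _ => ?_
      classical
      rw [monomial_smul_basis]
      split_ifs
      · exact Submodule.smul_mem _ _ (Submodule.subset_span ⟨_, add_mem_positiveOn hm _, rfl⟩)
      · exact Submodule.zero_mem _
    | zero => rw [smul_zero]; exact Submodule.zero_mem _
    | add x y _ _ hx hy => rw [smul_add]; exact Submodule.add_mem _ hx hy
    | smul c x _ hx => rw [smul_comm]; exact Submodule.smul_mem _ c hx

end NewtonGraded

end NewtonGraded

/-! ### Freeness over the power symbols -/

section PowerSymbol

open Module Function

theorem exists_basis_sum_mul_eq_ite {ι : Type*} [Fintype ι] [DecidableEq ι] {v : ι → ι → ℚ}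
    (hv : LinearIndependent ℚ v) :
    ∃ h : Basis ι ℂ (ι → ℂ), ∀ i j, ∑ x, h i x * (v j x : ℂ) = if i = j then 1 else 0 := by
  let V : Matrix ι ι ℂ := (Matrix.of v).map (algebraMap ℚ ℂ)
  have hV : IsUnit V := (Matrix.linearIndependent_rows_iff_isUnit.mp hv).map
    (algebraMap ℚ ℂ).mapMatrix
  have hV' : IsUnit V⁻¹ := (Matrix.isUnit_nonsing_inv_iff).mpr hV
  have hli := Matrix.linearIndependent_cols_iff_isUnit.mpr hV'
  refine ⟨Basis.mk hli (hli.span_eq_top_of_card_eq_finrank' (by simp)).ge, fun i j => ?_⟩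
  rw [Basis.mk_apply]
  simp only [eq_comm (a := i)]
  have hmul := congrFun₂ (Matrix.mul_nonsing_inv V ((Matrix.isUnit_iff_isUnit_det V).mp hV)) j i
  rw [← Matrix.one_apply, ← hmul, Matrix.mul_apply]
  exact Finset.sum_congr rfl fun x _ => mul_comm ..

variable {σ : Type*} {f : MvPolynomial σ ℂ} {N : f.support → ℕ}

/-- The sum `∑ w, w i • X w ^ N w` over the exponents `w` of `f`. For suitable exponents `N` these
elements form a regular sequence on the associated graded module of the Newton filtration, which
the combinatorics of a simplicial fan makes visible. -/
noncomputable def powerSymbol (N : f.support → ℕ) (i : σ) : MvPolynomial f.support ℂ :=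
  ∑ w : f.support, ((w : σ →₀ ℕ) i : ℂ) • X w ^ N w

theorem sum_smul_powerSymbol [Fintype σ] (h : σ → ℂ) :
    ∑ i, h i • powerSymbol N i = ∑ w : f.support, (∑ i, h i * (w : σ →₀ ℕ) i) • X w ^ N w := by
  simp only [powerSymbol, Finset.smul_sum, Finset.sum_smul, smul_smul]
  exact Finset.sum_comm

variable [Fintype σ] (hf : Convenient f) {U : Finset σ}
  (D : BoxDecomposition ((↑) : f.support → σ →₀ ℕ) N (positiveOn U))

namespace NewtonGraded

/-- The span of the classes of the monomials of weight less than `c`. -/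
noncomputable def weightLT (c : ℚ) : Submodule ℂ (NewtonGraded hf) :=
  Submodule.span ℂ (basis hf '' {m ∈ positiveOn U | D.wt m < c})

variable {hf D}

theorem basis_mem_weightLT {m : σ →₀ ℕ} (hm : m ∈ positiveOn U) {c : ℚ} (hc : D.wt m < c) :
    basis hf m ∈ weightLT hf D c :=
  Submodule.subset_span ⟨m, ⟨hm, hc⟩, rfl⟩

theorem weightLT_mono {c c' : ℚ} (h : c ≤ c') : weightLT hf D c ≤ weightLT hf D c' :=
  Submodule.span_mono (Set.image_mono fun _ hm => ⟨hm.1, hm.2.trans_le h⟩)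

theorem X_pow_star_smul_basis {m : σ →₀ ℕ} (hm : m ∈ positiveOn U) (i : σ) :
    (X (D.star m i) ^ N (D.star m i) : MvPolynomial f.support ℂ) • basis hf m =
      basis hf (m + N (D.star m i) • (D.star m i : σ →₀ ℕ)) := by
  classical
  obtain ⟨u, hu, hstar⟩ := D.exists_isSupportingAt m hm
  rw [X_pow_smul_basis, if_pos]
  rw [IsTight, shift_single, SupportsNewtonAt.nu_add_nsmul hu (hstar i), Finsupp.degree_single]

theorem X_pow_smul_basis_mem_weightLT {m : σ →₀ ℕ} (hm : m ∈ positiveOn U) {w : f.support}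
    (hw : w ∉ Set.range (D.star m)) :
    (X w ^ N w : MvPolynomial f.support ℂ) • basis hf m ∈ weightLT hf D (D.wt m + 1) := by
  classical
  rw [X_pow_smul_basis]
  split_ifs
  · exact basis_mem_weightLT (add_mem_positiveOn hm _) (D.wt_add_lt m hm w hw)
  · exact Submodule.zero_mem _

theorem X_pow_smul_mem_weightLT {c : ℚ} {x : NewtonGraded hf} (hx : x ∈ weightLT hf D c)
    (w : f.support) :
    (X w ^ N w : MvPolynomial f.support ℂ) • x ∈ weightLT hf D (c + 1) := by
  induction hx using Submodule.span_induction with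
  | mem _ h =>
    obtain ⟨m, ⟨hm, hmc⟩, rfl⟩ := h
    by_cases hw : w ∈ Set.range (D.star m)
    · obtain ⟨i, rfl⟩ := hw
      rw [X_pow_star_smul_basis hm]
      exact basis_mem_weightLT (add_mem_positiveOn hm _)
        ((D.wt_add m hm i).trans_lt (add_lt_add_left hmc 1))
    · exact weightLT_mono (add_lt_add_left hmc 1).le (X_pow_smul_basis_mem_weightLT hm hw)
  | zero => rw [smul_zero]; exact Submodule.zero_mem _
  | add x y _ _ hx hy => rw [smul_add]; exact Submodule.add_mem _ hx hy
  | smul z x _ hx => rw [smul_comm]; exact Submodule.smul_mem _ z hx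

/-- On the classes of the monomials whose cone has vertices `b`, multiplication by `s` is the
translation of exponents by `v` up to terms of smaller weight; it raises weights by at most
`d`. -/
structure HasLeadingShift (hf : Convenient f)
    (D : BoxDecomposition ((↑) : f.support → σ →₀ ℕ) N (positiveOn U)) (b : σ → f.support)
    (s : MvPolynomial f.support ℂ) (v : σ →₀ ℕ) (d : ℚ) : Prop where
  smul_mem : ∀ c, ∀ x ∈ weightLT hf D c, s • x ∈ weightLT hf D (c + d)
  star_add : ∀ m ∈ positiveOn U, D.star m = b → D.star (m + v) = b
  wt_add : ∀ m ∈ positiveOn U, D.star m = b → D.wt (m + v) = D.wt m + d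
  sub_mem : ∀ m ∈ positiveOn U, D.star m = b →
    s • basis hf m - basis hf (m + v) ∈ weightLT hf D (D.wt m + d)

namespace HasLeadingShift

variable {b : σ → f.support} {s s' : MvPolynomial f.support ℂ} {v v' : σ →₀ ℕ} {d d' : ℚ}

theorem one : HasLeadingShift hf D b 1 0 0 where
  smul_mem c x hx := by rwa [one_smul, add_zero]
  star_add m _ hb := by rwa [add_zero]
  wt_add m _ _ := by rw [add_zero, add_zero]
  sub_mem m _ _ := by
    rw [one_smul, add_zero m, sub_self (G := NewtonGraded hf)]
    exact Submodule.zero_mem _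

theorem mul (h : HasLeadingShift hf D b s v d) (h' : HasLeadingShift hf D b s' v' d') :
    HasLeadingShift hf D b (s * s') (v + v') (d + d') where
  smul_mem c x hx := by
    rw [mul_smul, add_comm d, ← add_assoc]
    exact h.smul_mem _ _ (h'.smul_mem c x hx)
  star_add m hm hb := by
    rw [add_comm v, ← add_assoc]
    exact h.star_add _ (add_mem_positiveOn hm v') (h'.star_add m hm hb)
  wt_add m hm hb := by
    rw [add_comm v, ← add_assoc, h.wt_add _ (add_mem_positiveOn hm v') (h'.star_add m hm hb),
      h'.wt_add m hm hb, add_comm d, add_assoc]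
  sub_mem m hm hb := by
    have hv := h.sub_mem _ (add_mem_positiveOn hm v') (h'.star_add m hm hb)
    have hs := h.smul_mem _ _ (h'.sub_mem m hm hb)
    rw [h'.wt_add m hm hb] at hv
    rw [smul_sub, smul_smul] at hs
    rw [add_comm v, ← add_assoc m, add_comm d, ← add_assoc (D.wt m)]
    exact sub_add_sub_cancel (G := NewtonGraded hf) .. ▸ Submodule.add_mem _ hs hv

theorem pow (h : HasLeadingShift hf D b s v d) (n : ℕ) :
    HasLeadingShift hf D b (s ^ n) (n • v) (n * d) := by
  induction n with
  | zero => simpa only [pow_zero, zero_smul, Nat.cast_zero, zero_mul] using one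
  | succ n ih =>
    simpa only [pow_succ, add_smul, one_smul, Nat.cast_succ, add_mul, one_mul] using ih.mul h

theorem prod {ι : Type*} (S : Finset ι) {s : ι → MvPolynomial f.support ℂ} {v : ι → σ →₀ ℕ}
    {d : ι → ℚ} (h : ∀ i, HasLeadingShift hf D b (s i) (v i) (d i)) :
    HasLeadingShift hf D b (∏ i ∈ S, s i) (∑ i ∈ S, v i) (∑ i ∈ S, d i) := by
  classical
  induction S using Finset.induction_on with
  | empty => exact one
  | insert i S hi ih =>
    rw [Finset.prod_insert hi, Finset.sum_insert hi, Finset.sum_insert hi]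
    exact (h i).mul ih

end HasLeadingShift

theorem hasLeadingShift_sum_smul_powerSymbol [DecidableEq σ] {b : σ → f.support}
    (hb : Injective b) {i : σ} {h : σ → ℂ}
    (hh : ∀ j, ∑ x, h x * (b j : σ →₀ ℕ) x = if i = j then 1 else 0) :
    HasLeadingShift hf D b (∑ j, h j • powerSymbol N j) (N (b i) • (b i : σ →₀ ℕ)) 1 where
  smul_mem c x hx := by
    rw [sum_smul_powerSymbol, Finset.sum_smul]
    refine Submodule.sum_mem _ fun w _ => ?_
    rw [smul_assoc]
    exact Submodule.smul_mem _ _ (X_pow_smul_mem_weightLT hx w)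
  star_add m hm := by
    rintro rfl
    simpa only [Pi.single_apply, ite_smul, one_smul, zero_smul, Finset.sum_ite_eq',
      Finset.mem_univ, if_true] using D.star_add m hm (Pi.single i 1)
  wt_add m hm := by
    rintro rfl
    exact D.wt_add m hm i
  sub_mem m hm := by
    rintro rfl
    classical
    rw [sum_smul_powerSymbol, Finset.sum_smul, ← Finset.add_sum_erase _ _ (Finset.mem_univ _),
      hh i, if_pos rfl, one_smul, X_pow_star_smul_basis hm i, add_sub_cancel_left]
    refine Submodule.sum_mem _ fun w hw => ?_
    rw [smul_assoc]
    by_cases hwr : w ∈ Set.range (D.star m)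
    · obtain ⟨j, rfl⟩ := hwr
      have hij : i ≠ j := fun hij => Finset.ne_of_mem_erase hw (congrArg _ hij.symm)
      rw [hh j, if_neg hij, zero_smul]
      exact Submodule.zero_mem _
    · exact Submodule.smul_mem _ _ (X_pow_smul_basis_mem_weightLT hm hwr)

/-- The class of the monomial of exponent `m` as an element of `divisibleBy hf U`. -/
noncomputable def divisibleByMonomial (hf : Convenient f) (U : Finset σ) (m : positiveOn U) :
    divisibleBy hf U :=
  ⟨basis hf m, Submodule.subset_span ⟨m, m.2, rfl⟩⟩

theorem mem_span_divisibleByMonomial {S : Set (positiveOn U)} {x : divisibleBy hf U}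
    (hx : (x : NewtonGraded hf) ∈ Submodule.span ℂ (basis hf '' ((↑) '' S))) :
    x ∈ Submodule.span ℂ (divisibleByMonomial hf U '' S) := by
  have himage : basis hf '' ((↑) '' S) =
      (divisibleBy hf U).subtype.restrictScalars ℂ '' (divisibleByMonomial hf U '' S) := by
    rw [Set.image_image, Set.image_image]
    rfl
  rw [himage, Submodule.span_image] at hx
  obtain ⟨y, hy, hxy⟩ := hx
  exact Subtype.val_injective hxy ▸ hy

/-- The basis of `divisibleBy hf U` given by the classes of monomials. -/
noncomputable def divisibleByBasis (hf : Convenient f) (U : Finset σ) :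
    Basis (positiveOn U) ℂ (divisibleBy hf U) :=
  Basis.mk (v := divisibleByMonomial hf U)
    (.of_comp ((divisibleBy hf U).subtype.restrictScalars ℂ)
      ((basis hf).linearIndependent.comp _ Subtype.val_injective))
    fun x _ => Set.image_univ ▸ mem_span_divisibleByMonomial (by
      rw [Set.image_univ, Subtype.range_coe]
      exact x.2)

theorem coe_divisibleByBasis : ⇑(divisibleByBasis hf U) = divisibleByMonomial hf U :=
  Basis.coe_mk ..

theorem prod_powerSymbol_smul_sub_mem_span [DecidableEq σ] {m : σ →₀ ℕ} (hm : m ∈ positiveOn U)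
    {h : σ → σ → ℂ}
    (hh : ∀ i j, ∑ x, h i x * (D.star m j : σ →₀ ℕ) x = if i = j then 1 else 0) (k : σ → ℕ) :
    (∏ i, (∑ j, h i j • powerSymbol N j) ^ k i) • divisibleByMonomial hf U ⟨m, hm⟩ -
        divisibleByMonomial hf U ⟨_, add_mem_positiveOn hm
          (∑ i, k i • N (D.star m i) • (D.star m i : σ →₀ ℕ))⟩ ∈
      Submodule.span ℂ (divisibleByMonomial hf U ''
        {j | D.wt j < D.wt (m + ∑ i, k i • N (D.star m i) • (D.star m i : σ →₀ ℕ))}) := by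
  have hlead : HasLeadingShift hf D (D.star m) _ _ _ := .prod Finset.univ fun i =>
    (hasLeadingShift_sum_smul_powerSymbol
      (D.linearIndependent m hm).injective.of_comp (hh i)).pow (k i)
  have himage (c : ℚ) : ((↑) : positiveOn U → σ →₀ ℕ) '' {j | D.wt j < c} =
      {j ∈ positiveOn U | D.wt j < c} :=
    Subtype.image_preimage_coe (positiveOn U) {j | D.wt j < c}
  refine mem_span_divisibleByMonomial ?_
  rw [himage, hlead.wt_add m hm rfl]
  exact hlead.sub_mem m hm rfl

theorem finite_divisibleBy (D : BoxDecomposition ((↑) : f.support → σ →₀ ℕ) N (positiveOn U)) :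
    Module.Finite (MvPolynomial f.support ℂ) (divisibleBy hf U) := by
  classical
  let start (m : D.box) := divisibleByMonomial hf U ⟨m, D.box_subset m.2⟩
  have := D.finite_box.to_subtype
  let P := Submodule.span (MvPolynomial f.support ℂ) (Set.range start)
  have htop : P.restrictScalars ℂ = ⊤ :=
    eq_top_of_sub_mem_span_lt (e := divisibleByBasis hf U) D.finite_wt_lt_wt fun m => by
      obtain ⟨⟨m, k⟩, rfl⟩ := D.sigmaEquiv.surjective m
      obtain ⟨h, hh⟩ := exists_basis_sum_mul_eq_ite (D.linearIndependent m (D.box_subset m.2))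
      rw [coe_divisibleByBasis]
      exact ⟨_, P.smul_mem _ (Submodule.subset_span ⟨m, rfl⟩),
        prod_powerSymbol_smul_sub_mem_span (D.box_subset m.2) hh k⟩
  exact ⟨Submodule.fg_def.mpr ⟨_, Set.finite_range start,
    (Submodule.restrictScalars_eq_top_iff ℂ _ _).mp htop⟩⟩

theorem isWeaklyRegular_powerSymbol
    (D : BoxDecomposition ((↑) : f.support → σ →₀ ℕ) N (positiveOn U)) {l : List σ}
    (hl : l.Nodup) :
    RingTheory.Sequence.IsWeaklyRegular (divisibleBy hf U) (l.map (powerSymbol N)) := by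
  classical
  choose h hh using fun m : D.box =>
    exists_basis_sum_mul_eq_ite (D.linearIndependent m (D.box_subset m.2))
  choose 𝓑 h𝓑 using fun m : D.box => exists_basis_prod_pow (h m)
  refine isWeaklyRegular_of_sub_mem_span_lt D.finite_wt_lt_wt (divisibleByBasis hf U) 𝓑 D.sigmaEquiv
    (fun m => divisibleByMonomial hf U ⟨m, D.box_subset m.2⟩) (fun ⟨m, k⟩ => ?_) hl
  rw [h𝓑, coe_divisibleByBasis]
  simp only [map_prod, map_pow, map_sum, map_smul, aeval_X]
  exact prod_powerSymbol_smul_sub_mem_span (D.box_subset m.2) (hh m) k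

end NewtonGraded

end PowerSymbol

/-! ### Common zeros of the logarithmic symbols -/

section Character

open Module

variable {K : Type*} [Field K] [IsAlgClosed K]

variable (K) in
theorem baer_additive_units : Baer ℤ (Additive Kˣ) := by
  have hsurj {n : ℕ} (hn : n ≠ 0) : Function.Surjective fun a : Additive Kˣ => n • a := fun a => by
    obtain ⟨z, hz⟩ := IsAlgClosed.exists_pow_nat_eq (a.toMul : K) (Nat.pos_of_ne_zero hn)
    have hz0 : z ≠ 0 := (pow_ne_zero_iff hn).mp (hz ▸ a.toMul.ne_zero)
    exact ⟨.ofMul (.mk0 z hz0), Additive.toMul.injective (Units.ext hz)⟩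
  let : DivisibleBy (Additive Kˣ) ℕ := divisibleByOfSMulRightSurj _ _ hsurj
  let : DivisibleBy (Additive Kˣ) ℤ := AddGroup.divisibleByIntOfDivisibleByNat _
  exact Baer.of_divisible _

theorem exists_linearMap_apply_eq_of_baer {R Q M E : Type*} [CommRing R] [AddCommGroup M]
    [Module R M] [AddCommGroup E] [Module R E] (hE : Baer R E) (b : Q → M) (y : Q → E)
    (h : ∀ a : Q →₀ R, a.linearCombination R b = 0 → a.linearCombination R y = 0) :
    ∃ φ : M →ₗ[R] E, ∀ q, φ (b q) = y q := by
  let A := Finsupp.linearCombination R b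
  have hker : LinearMap.ker A ≤ LinearMap.ker (Finsupp.linearCombination R y) := h
  obtain ⟨φ, hφ⟩ := hE.extension_property ((LinearMap.ker A).liftQ A le_rfl)
    (LinearMap.ker_eq_bot.mp (Submodule.ker_liftQ_eq_bot _ _ le_rfl le_rfl))
    ((LinearMap.ker A).liftQ (Finsupp.linearCombination R y) hker)
  refine ⟨φ, fun q => ?_⟩
  have hq := LinearMap.congr_fun hφ (Submodule.Quotient.mk (.single q 1))
  rwa [LinearMap.comp_apply, Submodule.liftQ_apply, Submodule.liftQ_apply,
    Finsupp.linearCombination_single, Finsupp.linearCombination_single, one_smul, one_smul] at hq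

theorem linearCombination_mapRange_natCast {Q E : Type*} [AddCommGroup E] (z : Q → E)
    (k : Q →₀ ℕ) :
    (k.mapRange Nat.cast Nat.cast_zero).linearCombination ℤ z = k.linearCombination ℕ z := by
  rw [Finsupp.linearCombination_apply, Finsupp.linearCombination_apply,
    Finsupp.sum_mapRange_index fun q => zero_smul ℤ (z q)]
  simp only [natCast_zsmul]

theorem exists_prod_pow_eq {Q σ : Type*} [Fintype σ] (b : Q → σ →₀ ℕ) (y : Q → Kˣ)
    (h : ∀ k k' : Q →₀ ℕ, k.linearCombination ℕ b = k'.linearCombination ℕ b →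
      (k.prod fun q n => y q ^ n) = k'.prod fun q n => y q ^ n) :
    ∃ x : σ → Kˣ, ∀ q, ∏ i, x i ^ b q i = y q := by
  classical
  let c : (σ →₀ ℕ) →+ σ →₀ ℤ := Finsupp.mapRange.addMonoidHom (Nat.castAddMonoidHom ℤ)
  have hc : Function.Injective c := Finsupp.mapRange_injective _ (map_zero _) Nat.cast_injective
  have hrel (a : Q →₀ ℤ) (ha : a.linearCombination ℤ (c ∘ b) = 0) :
      a.linearCombination ℤ (Additive.ofMul ∘ y) = 0 := by
    let k := a.mapRange Int.toNat Int.toNat_zero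
    let k' := (-a).mapRange Int.toNat Int.toNat_zero
    have hak : a = k.mapRange Nat.cast Nat.cast_zero - k'.mapRange Nat.cast Nat.cast_zero :=
      Finsupp.ext fun q => (Int.toNat_sub_toNat_neg (a q)).symm
    rw [hak, map_sub, linearCombination_mapRange_natCast, linearCombination_mapRange_natCast,
      sub_eq_zero] at ha ⊢
    have hkb (k : Q →₀ ℕ) : k.linearCombination ℕ (c ∘ b) = c (k.linearCombination ℕ b) :=
      (Finsupp.apply_linearCombination ℕ c.toNatLinearMap b k).symm
    have hky (k : Q →₀ ℕ) : (k.linearCombination ℕ (Additive.ofMul ∘ y)) =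
        .ofMul (k.prod fun q n => y q ^ n) := rfl
    rw [hky, hky, h k k' (hc (by rwa [hkb, hkb] at ha))]
  obtain ⟨φ, hφ⟩ := exists_linearMap_apply_eq_of_baer (baer_additive_units K) _ _ hrel
  refine ⟨fun i => (φ (.single i 1)).toMul, fun q => ?_⟩
  have hq : c (b q) = ∑ i, b q i • .single i 1 := by
    conv_lhs => rw [← Finsupp.univ_sum_single (c (b q))]
    exact Finset.sum_congr rfl fun i _ => by simp [c]
  have hφq := hφ q
  rw [Function.comp_apply, hq, map_sum] at hφq
  simp only [map_nsmul] at hφq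
  exact congrArg Additive.toMul hφq

end Character

section Nondegeneracy

variable {σ : Type*} {f : MvPolynomial σ ℂ}

theorem eval_monomial_one_ne_zero {y : f.support → ℂ} {k : f.support →₀ ℕ}
    (hk : ∀ w, k w ≠ 0 → y w ≠ 0) : eval y (monomial k 1) ≠ 0 := by
  rw [eval_monomial, one_mul, Finsupp.prod_ne_zero_iff]
  exact fun w hw => pow_ne_zero _ (hk w (Finsupp.mem_support_iff.mp hw))

theorem apply_eq_one_of_degree_le {u : Module.Dual ℚ (σ → ℚ)}
    (hu : ∀ w : f.support, u (toQ (w : σ →₀ ℕ)) ≤ 1) {k : f.support →₀ ℕ}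
    (hk : k.degree ≤ u (toQ (shift k))) {w : f.support} (hw : k w ≠ 0) :
    u (toQ (w : σ →₀ ℕ)) = 1 := by
  rw [apply_toQ_shift, Finsupp.degree_apply, Nat.cast_sum] at hk
  have hle (v : f.support) : (k v : ℚ) * u (toQ (v : σ →₀ ℕ)) ≤ k v :=
    mul_le_of_le_one_right (Nat.cast_nonneg _) (hu v)
  have heq := (Finset.sum_eq_sum_iff_of_le fun v _ => hle v).mp
    ((Finset.sum_le_sum fun v _ => hle v).antisymm hk) w (Finsupp.mem_support_iff.mpr hw)
  exact (mul_eq_left₀ (Nat.cast_ne_zero.mpr hw)).mp heq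

theorem exists_nsmul_eq_natCast {W : Type*} [Finite W] {l : W → ℚ} (hl : ∀ w, 0 ≤ l w) :
    ∃ D : ℕ, 0 < D ∧ ∃ n : W → ℕ, ∀ w, (n w : ℚ) = D * l w := by
  cases nonempty_fintype W
  suffices h : ∀ w, ∃ n : ℕ, (n : ℚ) = ↑(∏ v, (l v).den) * l w from
    ⟨_, Finset.prod_pos fun w _ => (l w).den_pos, Classical.skolem.mp h⟩
  intro w
  obtain ⟨e, he⟩ := Finset.dvd_prod_of_mem (fun w => (l w).den) (Finset.mem_univ w)
  refine ⟨e * (l w).num.natAbs, ?_⟩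
  rw [he, Nat.cast_mul, Nat.cast_mul, mul_comm _ (e : ℚ), mul_assoc, Rat.den_mul_eq_num,
    Nat.cast_natAbs, abs_of_nonneg (Rat.num_nonneg.mpr (hl w))]

theorem SupportsNewtonAt.exists_nsmul_eq_shift {u : Module.Dual ℚ (σ → ℚ)} {m : σ →₀ ℕ}
    (h : SupportsNewtonAt f u m) :
    ∃ D : ℕ, 0 < D ∧ ∃ k : f.support →₀ ℕ, D • m = shift k ∧ (k.degree : ℚ) = D * u (toQ m) := by
  obtain ⟨l, hl, hlu, hx⟩ := h.exists_coord
  obtain ⟨D, hD, n, hn⟩ := exists_nsmul_eq_natCast hl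
  refine ⟨D, hD, Finsupp.equivFunOnFinite.symm n, ?_, ?_⟩
  · refine toQ_injective ?_
    have hshift : shift (Finsupp.equivFunOnFinite.symm n) = ∑ w, n w • (w : σ →₀ ℕ) :=
      Finsupp.sum_fintype _ _ fun w => zero_smul ℕ (w : σ →₀ ℕ)
    rw [hshift, map_sum, map_nsmul, ← hx, ← Nat.cast_smul_eq_nsmul ℚ, Finset.smul_sum]
    refine Finset.sum_congr rfl fun w _ => ?_
    rw [map_nsmul, ← Nat.cast_smul_eq_nsmul ℚ, hn, smul_smul, Function.comp_apply]
  · rw [IsSupportingAt.apply_eq_sum hlu hx, Finsupp.degree_eq_sum, Nat.cast_sum, Finset.mul_sum]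
    exact Finset.sum_congr rfl fun w _ => hn w

variable [Finite σ]

namespace NewtonGraded

variable (hf : Convenient f)

theorem mem_annihilator_iff {s : MvPolynomial f.support ℂ} :
    s ∈ Module.annihilator (MvPolynomial f.support ℂ) (NewtonGraded hf) ↔
      ∀ m, s • basis hf m = 0 := by
  rw [Module.mem_annihilator]
  exact ⟨fun h m => h _, fun h x => LinearMap.congr_fun ((basis hf).ext
    (f₁ := action hf s) (f₂ := 0) h) x⟩

theorem monomial_mem_annihilator {k : f.support →₀ ℕ} (hk : ∀ m, ¬ IsTight k m) :
    monomial k 1 ∈ Module.annihilator (MvPolynomial f.support ℂ) (NewtonGraded hf) :=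
  (mem_annihilator_iff hf).mpr fun m => by
    classical rw [monomial_smul_basis, if_neg (hk m)]

variable {hf} {y : f.support → ℂ}

section

variable (hy : ∀ s ∈ Module.annihilator (MvPolynomial f.support ℂ) (NewtonGraded hf), eval y s = 0)
  {k k' : f.support →₀ ℕ} (hshift : shift k = shift k')

include hy hshift

theorem eval_monomial_congr (hdegree : k.degree = k'.degree) :
    eval y (monomial k 1) = eval y (monomial k' 1) := by
  classical
  rw [← sub_eq_zero, ← map_sub]
  refine hy _ ((mem_annihilator_iff hf).mpr fun m => ?_)
  rw [sub_smul, monomial_smul_basis, monomial_smul_basis, IsTight, IsTight, hshift, hdegree,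
    sub_self (G := NewtonGraded hf)]

theorem eval_monomial_eq_zero (hdegree : k'.degree < k.degree) : eval y (monomial k 1) = 0 := by
  refine hy _ (monomial_mem_annihilator hf fun m hm => ?_)
  have hle := hf.nu_add_shift_le m k'
  rw [← hshift, hm] at hle
  exact hdegree.not_ge (by exact_mod_cast (add_le_add_iff_left _).mp hle)

theorem degree_eq_of_shift_eq (hk : ∀ w, k w ≠ 0 → y w ≠ 0) (hk' : ∀ w, k' w ≠ 0 → y w ≠ 0) :
    k.degree = k'.degree := by
  obtain h | h | h := lt_trichotomy k.degree k'.degree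
  · exact absurd (eval_monomial_eq_zero hy hshift.symm h) (eval_monomial_one_ne_zero hk')
  · exact h
  · exact absurd (eval_monomial_eq_zero hy hshift h) (eval_monomial_one_ne_zero hk)

end

end NewtonGraded

theorem Convenient.eventually_exists_supportsNewtonAt (hf : Convenient f)
    {u₀ : Module.Dual ℚ (σ → ℚ)} (hu₀ : ∀ w : f.support, u₀ (toQ (w : σ →₀ ℕ)) ≤ 1)
    {k : f.support →₀ ℕ} (hk : k.degree ≤ u₀ (toQ (shift k))) (v : σ →₀ ℕ) :
    ∀ᶠ L : ℕ in Filter.atTop, ∀ m, m + v = L • shift k →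
      ∃ u, SupportsNewtonAt f u m ∧ k.degree ≤ u (toQ (shift k)) := by
  obtain ⟨T, hTfin, hT⟩ := exists_finite_isSupportingAt hf.exists_single
  have hlarge : ∀ᶠ L : ℕ in Filter.atTop, ∀ u ∈ T, u (toQ (shift k)) < k.degree →
      u₀ (toQ v) - u (toQ v) < (k.degree - u (toQ (shift k))) * L := by
    refine (Filter.eventually_all_finite hTfin).mpr fun u _ => ?_
    obtain hu | hu := lt_or_ge (u (toQ (shift k))) k.degree
    · have hlim := tendsto_natCast_atTop_atTop.const_mul_atTop (sub_pos.mpr hu)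
      filter_upwards [hlim.eventually_gt_atTop (u₀ (toQ v) - u (toQ v))] with L hL _ using hL
    · exact .of_forall fun L h => absurd hu h.not_ge
  filter_upwards [hlarge] with L hL m hm
  obtain ⟨u, huT, hu⟩ := hT m
  refine ⟨u, hu, not_lt.mp fun hlt => ?_⟩
  have hle := hu.apply_le hu₀
  have hm' := congrArg toQ hm
  rw [map_add, map_nsmul] at hm'
  have h₀ := congrArg u₀ hm'
  have h₁ := congrArg u hm'
  rw [map_add, map_nsmul, nsmul_eq_mul] at h₀ h₁
  have := hL u huT hlt
  have := mul_le_mul_of_nonneg_left hk (Nat.cast_nonneg (α := ℚ) L)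
  linarith

namespace NewtonGraded

variable {hf : Convenient f} {y : f.support → ℂ}

theorem exists_degree_le_apply
    (hy : ∀ s ∈ Module.annihilator (MvPolynomial f.support ℂ) (NewtonGraded hf), eval y s = 0)
    {k : f.support →₀ ℕ} (hk : ∀ w, k w ≠ 0 → y w ≠ 0) :
    ∃ u : Module.Dual ℚ (σ → ℚ), (∀ w : f.support, u (toQ (w : σ →₀ ℕ)) ≤ 1) ∧
      k.degree ≤ u (toQ (shift k)) := by
  obtain ⟨m, hm⟩ : ∃ m, IsTight k m := by
    by_contra! h
    exact eval_monomial_one_ne_zero hk (hy _ (monomial_mem_annihilator hf h))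
  obtain ⟨u, hu⟩ := hf.exists_supportsNewtonAt (m + shift k)
  have hle := hf.apply_le_nu (fun w hw => hu.le_one ⟨w, hw⟩) m
  rw [IsTight, hu.nu_eq, map_add, map_add, Rat.cast_add] at hm
  have h : (k.degree : ℝ) ≤ u (toQ (shift k)) := by linarith
  exact ⟨u, hu.le_one, by exact_mod_cast h⟩

theorem apply_lt_one_of_add_eq_nsmul_shift
    (hy : ∀ s ∈ Module.annihilator (MvPolynomial f.support ℂ) (NewtonGraded hf), eval y s = 0)
    {k : f.support →₀ ℕ} (hk : ∀ w, k w ≠ 0 → y w ≠ 0) {v : f.support} (hv : y v = 0)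
    {m : σ →₀ ℕ} {L : ℕ} (hm : m + v = L • shift k) {u : Module.Dual ℚ (σ → ℚ)}
    (hu : SupportsNewtonAt f u m) (huk : k.degree ≤ u (toQ (shift k))) :
    u (toQ (v : σ →₀ ℕ)) < 1 := by
  refine lt_of_le_of_ne (hu.le_one v) fun huv => ?_
  obtain ⟨D, hD, κ, hκ, hdegree⟩ := hu.exists_nsmul_eq_shift
  have huk' := (apply_toQ_shift_le hu.le_one k).antisymm huk
  have hum : u (toQ m) + 1 = L * k.degree := by
    rw [← huv, ← map_add, ← map_add, hm, map_nsmul, map_nsmul, nsmul_eq_mul, huk']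
  have hne : eval y (monomial ((D * L) • k) 1) ≠ 0 :=
    eval_monomial_one_ne_zero fun w hw => hk w (right_ne_zero_of_mul hw)
  have hzero : eval y (monomial (κ + Finsupp.single v D) 1) = 0 := by
    rw [← mul_one (1 : ℂ), ← monomial_mul, map_mul, ← X_pow_eq_monomial, map_pow, eval_X, hv,
      zero_pow hD.ne', mul_zero]
  refine hne ((eval_monomial_congr hy ?_ ?_).trans hzero)
  · rw [map_add, shift_single, ← hκ, ← nsmul_add, hm, map_nsmul, mul_nsmul']
  · have : ((D * L * k.degree : ℕ) : ℚ) = (κ.degree + D : ℕ) := by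
      push_cast
      linear_combination D * -hum - hdegree
    rw [map_nsmul, map_add, Finsupp.degree_single, smul_eq_mul]
    exact_mod_cast this

theorem exists_apply_lt_one
    (hy : ∀ s ∈ Module.annihilator (MvPolynomial f.support ℂ) (NewtonGraded hf), eval y s = 0)
    {k : f.support →₀ ℕ} (hk : ∀ w, k w ≠ 0 → y w ≠ 0) {v : f.support} (hv : y v = 0) :
    ∃ u : Module.Dual ℚ (σ → ℚ), (∀ w : f.support, u (toQ (w : σ →₀ ℕ)) ≤ 1) ∧
      k.degree ≤ u (toQ (shift k)) ∧ u (toQ (v : σ →₀ ℕ)) < 1 := by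
  obtain ⟨u₀, hu₀, hk₀⟩ := exists_degree_le_apply hy hk
  by_cases hsupp : ∃ j, (v : σ →₀ ℕ) j ≠ 0 ∧ shift k j = 0
  · obtain ⟨j, hvj, hj⟩ := hsupp
    let u : Module.Dual ℚ (σ → ℚ) := u₀ - LinearMap.proj j
    have hu (m : σ →₀ ℕ) : u (toQ m) = u₀ (toQ m) - m j := rfl
    refine ⟨u, fun w => ?_, ?_, ?_⟩
    · exact (hu w).trans_le ((sub_le_self _ (Nat.cast_nonneg _)).trans (hu₀ w))
    · rwa [hu, hj, Nat.cast_zero, sub_zero]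
    · exact (hu v).trans_lt
        ((sub_lt_self _ (Nat.cast_pos.mpr (Nat.pos_of_ne_zero hvj))).trans_le (hu₀ v))
  · push Not at hsupp
    obtain ⟨L, hL, hvL⟩ := ((hf.eventually_exists_supportsNewtonAt hu₀ hk₀ v).and
      (Filter.eventually_ge_atTop (v : σ →₀ ℕ).degree)).exists
    have hle : (v : σ →₀ ℕ) ≤ L • shift k := fun j => by
      obtain hvj | hvj := eq_or_ne ((v : σ →₀ ℕ) j) 0
      · exact hvj.trans_le (Nat.zero_le _)
      · exact ((Finsupp.le_degree j _).trans hvL).trans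
          (Nat.le_mul_of_pos_right L (Nat.pos_of_ne_zero (hsupp j hvj)))
    obtain ⟨u, hu, huk⟩ := hL _ (tsub_add_cancel_of_le hle)
    exact ⟨u, hu.le_one, huk,
      apply_lt_one_of_add_eq_nsmul_shift hy hk hv (tsub_add_cancel_of_le hle) hu huk⟩

theorem exists_apply_eq_one_iff
    (hy : ∀ s ∈ Module.annihilator (MvPolynomial f.support ℂ) (NewtonGraded hf), eval y s = 0) :
    ∃ u : Module.Dual ℚ (σ → ℚ), ∀ w : f.support, u (toQ (w : σ →₀ ℕ)) ≤ 1 ∧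
      (u (toQ (w : σ →₀ ℕ)) = 1 ↔ y w ≠ 0) := by
  classical
  let k : f.support →₀ ℕ := Finsupp.equivFunOnFinite.symm fun w => if y w = 0 then 0 else 1
  have hk (w : f.support) : k w ≠ 0 ↔ y w ≠ 0 := by simp [k]
  have hu (v : f.support) : ∃ u : Module.Dual ℚ (σ → ℚ),
      (∀ w : f.support, u (toQ (w : σ →₀ ℕ)) ≤ 1) ∧ k.degree ≤ u (toQ (shift k)) ∧
        (y v = 0 → u (toQ (v : σ →₀ ℕ)) < 1) := by
    by_cases hv : y v = 0
    · obtain ⟨u, hu, huk, huv⟩ := exists_apply_lt_one hy (fun w => (hk w).mp) hv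
      exact ⟨u, hu, huk, fun _ => huv⟩
    · obtain ⟨u, hu, huk⟩ := exists_degree_le_apply hy fun w => (hk w).mp
      exact ⟨u, hu, huk, fun h => absurd h hv⟩
  choose u hu huk huv using hu
  refine ⟨(Fintype.card f.support : ℚ)⁻¹ • ∑ v, u v, fun w => ?_⟩
  have hcard : (Fintype.card f.support : ℚ) = ∑ v : f.support, 1 := by simp
  have hpos : (0 : ℚ) < Fintype.card f.support := Nat.cast_pos.mpr (Fintype.card_pos_iff.mpr ⟨w⟩)
  rw [LinearMap.smul_apply, smul_eq_mul, LinearMap.sum_apply, inv_mul_le_one₀ hpos,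
    inv_mul_eq_one₀ hpos.ne', eq_comm, hcard]
  refine ⟨Finset.sum_le_sum fun v _ => hu v w, fun heq hw => ?_, fun hw => ?_⟩
  · exact (Finset.sum_lt_sum (fun v _ => hu v w) ⟨w, Finset.mem_univ w, huv w hw⟩).ne heq
  · exact Finset.sum_congr rfl fun v _ => apply_eq_one_of_degree_le (hu v) (huk v) ((hk w).mpr hw)

end NewtonGraded

end Nondegeneracy

section LogSymbol

variable {σ : Type*} (f : MvPolynomial σ ℂ)

/-- The symbol of the logarithmic derivative `X i * pderiv i f`: the element of the polynomial ring
on the monomials of `f` that acts on the associated graded module as its leading part. -/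
noncomputable def logSymbol (i : σ) : MvPolynomial f.support ℂ :=
  ∑ w : f.support, (f.coeff w * (w : σ →₀ ℕ) i) • X w

theorem X_mul_pderiv_eq_sum (i : σ) :
    X i * pderiv i f = ∑ w : f.support, monomial (w : σ →₀ ℕ) (f.coeff w * (w : σ →₀ ℕ) i) := by
  conv_lhs => rw [f.as_sum, map_sum, Finset.mul_sum]
  rw [← Finset.sum_coe_sort f.support]
  exact Finset.sum_congr rfl fun w _ => by
    rw [X_mul_pderiv_monomial, smul_monomial, nsmul_eq_mul, mul_comm]

theorem coeff_X_mul_pderiv (i : σ) (m : σ →₀ ℕ) :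
    (X i * pderiv i f).coeff m = f.coeff m * m i := by
  classical
  rw [X_mul_pderiv_eq_sum, coeff_sum, Finset.sum_coe_sort f.support
    fun w => coeff m (monomial w (f.coeff w * (w i : ℂ)))]
  simp only [coeff_monomial, Finset.sum_ite_eq', mem_support_iff]
  exact ite_eq_left_iff.mpr fun h => by rw [not_not.mp h, zero_mul]

open Classical in
theorem faceRestrict_X_mul_pderiv [Finite σ] (Δ : Set (σ → ℝ)) (i : σ) :
    faceRestrict Δ (X i * pderiv i f) = ∑ w : f.support,
      if toR (w : σ →₀ ℕ) ∈ Δ then monomial (w : σ →₀ ℕ) (f.coeff w * (w : σ →₀ ℕ) i) else 0 := by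
  rw [Finset.sum_coe_sort f.support
    fun w => if toR w ∈ Δ then monomial w (f.coeff w * (w i : ℂ)) else 0, faceRestrict]
  simp only [coeff_X_mul_pderiv]
  refine Finset.sum_subset (fun w hw => ?_) fun w _ hw => ?_
  · rw [mem_support_iff, coeff_X_mul_pderiv] at hw
    exact mem_support_iff.mpr (left_ne_zero_of_mul hw)
  · rw [mem_support_iff, not_not, coeff_X_mul_pderiv] at hw
    rw [hw, map_zero, ite_self]

variable {f}

variable {hf : Convenient f} {y : f.support → ℂ}

theorem exists_prod_pow_eq_of_annihilator [Fintype σ]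
    (hy : ∀ s ∈ Module.annihilator (MvPolynomial f.support ℂ) (NewtonGraded hf), eval y s = 0) :
    ∃ x : σ → ℂˣ, ∀ w : f.support, y w ≠ 0 → ∏ i, (x i : ℂ) ^ (w : σ →₀ ℕ) i = y w := by
  let b (q : {w // y w ≠ 0}) : σ →₀ ℕ := q.1
  let e (k : {w // y w ≠ 0} →₀ ℕ) : f.support →₀ ℕ := k.embDomain (.subtype _)
  have hev (k) : eval y (monomial (e k) 1) = ((k.prod fun q n => .mk0 (y q) q.2 ^ n : ℂˣ) : ℂ) := by
    rw [eval_monomial, one_mul, Finsupp.prod_embDomain, Finsupp.prod, Finsupp.prod, Units.coe_prod]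
    rfl
  have he (k : {w // y w ≠ 0} →₀ ℕ) (w) (hw : e k w ≠ 0) : y w ≠ 0 := by
    by_contra h
    exact hw (Finsupp.embDomain_of_notMem_range _ _ _ (by simpa using h))
  have hshift (k) : shift (e k) = k.linearCombination ℕ b := Finsupp.linearCombination_embDomain ..
  obtain ⟨x, hx⟩ := exists_prod_pow_eq b (fun q => .mk0 (y q) q.2) fun k k' h => by
    have hkk' : shift (e k) = shift (e k') := by rw [hshift, hshift, h]
    refine Units.ext ?_
    rw [← hev, ← hev]
    exact NewtonGraded.eval_monomial_congr hy hkk'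
      (NewtonGraded.degree_eq_of_shift_eq hy hkk' (he k) (he k'))
  refine ⟨x, fun w hw => ?_⟩
  have := congrArg Units.val (hx ⟨w, hw⟩)
  rwa [Units.coe_prod] at this

variable [Finite σ]

theorem eq_zero_of_eval_logSymbol_eq_zero (hnd : Nondegenerate f)
    (hy : ∀ s ∈ Module.annihilator (MvPolynomial f.support ℂ) (NewtonGraded hf), eval y s = 0)
    (hlog : ∀ i, eval y (logSymbol f i) = 0) : y = 0 := by
  have := Fintype.ofFinite σ
  by_contra hy0
  obtain ⟨w₀, hw₀⟩ := Function.ne_iff.mp hy0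
  obtain ⟨u, hu⟩ := NewtonGraded.exists_apply_eq_one_iff hy
  obtain ⟨x, hx⟩ := exists_prod_pow_eq_of_annihilator hy
  let Δ : Set (σ → ℝ) := {z ∈ newtonPolytope f | realDual u z = 1}
  have hΔ (w : f.support) : toR (w : σ →₀ ℕ) ∈ Δ ↔ y w ≠ 0 := by
    rw [← (hu w).2, Set.mem_ofPred_eq, and_iff_right (toR_mem_newtonPolytope w), realDual_toR]
    exact_mod_cast Iff.rfl
  have hface : NBFace f Δ := by
    refine ⟨⟨⟨_, (hΔ w₀).mpr hw₀⟩, realDual u, 1, fun z hz => ?_, rfl⟩, fun h => ?_⟩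
    · exact apply_le_one_of_mem_newtonPolytope
        (fun w hw => by rw [realDual_toR]; exact_mod_cast (hu ⟨w, hw⟩).1) hz
    · exact zero_ne_one ((map_zero _).symm.trans h.2)
  refine hnd Δ hface ⟨fun i => x i, fun i => (x i).ne_zero, fun i => ?_⟩
  rw [← hlog i, faceRestrict_X_mul_pderiv, logSymbol, map_sum, map_sum]
  refine Finset.sum_congr rfl fun w _ => ?_
  rw [smul_eval, eval_X]
  by_cases hw : y w = 0
  · rw [if_neg ((hΔ w).not.mpr (not_not.mpr hw)), map_zero, hw, mul_zero]
  · rw [if_pos ((hΔ w).mpr hw), eval_monomial, Finsupp.prod_fintype _ _ fun _ => pow_zero _,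
      hx w hw]

theorem X_mem_radical (hf : Convenient f) (hnd : Nondegenerate f) (w : f.support) :
    X w ∈ (Ideal.span (Set.range (logSymbol f)) ⊔
      Module.annihilator (MvPolynomial f.support ℂ) (NewtonGraded hf)).radical := by
  rw [← vanishingIdeal_zeroLocus_eq_radical (K := ℂ), mem_vanishingIdeal_iff]
  intro y hy
  simp only [mem_zeroLocus_iff, aeval_eq_eval] at hy
  have hy0 : y = 0 := eq_zero_of_eval_logSymbol_eq_zero hnd (hf := hf)
    (fun s hs => hy s (Ideal.mem_sup_right hs))
    fun i => hy _ (Ideal.mem_sup_left (Ideal.subset_span ⟨i, rfl⟩))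
  rw [aeval_X, hy0, Pi.zero_apply]

end LogSymbol

/-! ### Regularity and strictness -/

section Symbol

variable {σ : Type*} {f : MvPolynomial σ ℂ}

theorem X_mul_pderiv_mul (i : σ) (g : MvPolynomial σ ℂ) : X i * pderiv i f * g =
    ∑ w : f.support, (f.coeff w * (w : σ →₀ ℕ) i) • (monomial (w : σ →₀ ℕ) 1 * g) := by
  simp only [X_mul_pderiv_eq_sum, Finset.sum_mul, ← smul_mul_assoc, smul_monomial, smul_eq_mul,
    mul_one]

theorem Convenient.nu_add_le [Finite σ] (hf : Convenient f) (m : σ →₀ ℕ) (w : f.support) :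
    nu f (toR (m + w)) ≤ nu f (toR m) + 1 := by
  have h := hf.nu_add_shift_le m (Finsupp.single w 1)
  rwa [shift_single, one_nsmul, Finsupp.degree_single, Nat.cast_one] at h

namespace NewtonGraded

variable (hf : Convenient f)

/-- The isomorphism of the underlying vector spaces that sends the class of a monomial to this
monomial. -/
noncomputable def lift : NewtonGraded hf ≃ₗ[ℂ] MvPolynomial σ ℂ :=
  (basis hf).equiv (basisMonomials σ ℂ) (Equiv.refl _)

open Classical in
/-- The symbol in degree `γ`: the class of the part of degree `γ` of a polynomial. -/
noncomputable def symbol (γ : ℝ) : MvPolynomial σ ℂ →ₗ[ℂ] NewtonGraded hf :=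
  (basisMonomials σ ℂ).constr ℂ fun m => if nu f (toR m) = γ then basis hf m else 0

theorem lift_basis (m : σ →₀ ℕ) : lift hf (basis hf m) = monomial m 1 := by
  rw [lift, Module.Basis.equiv_apply, Equiv.refl_apply, coe_basisMonomials]

theorem coeff_lift (x : NewtonGraded hf) (m : σ →₀ ℕ) :
    (lift hf x).coeff m = (basis hf).repr x m := by
  classical
  have h : lcoeff ℂ m ∘ₗ (lift hf).toLinearMap = (basis hf).coord m := (basis hf).ext fun k => by
    rw [LinearMap.comp_apply, LinearEquiv.coe_coe, lift_basis, lcoeff_apply, coeff_monomial,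
      Module.Basis.coord_apply, Module.Basis.repr_self, Finsupp.single_apply]
  exact congrArg (· x) h

open Classical in
theorem symbol_monomial (γ : ℝ) (m : σ →₀ ℕ) (c : ℂ) :
    symbol hf γ (monomial m c) = if nu f (toR m) = γ then c • basis hf m else 0 := by
  have h : monomial m c = c • basisMonomials σ ℂ m := by
    rw [coe_basisMonomials, smul_monomial, smul_eq_mul, mul_one]
  rw [h, map_smul, symbol, Module.Basis.constr_basis, smul_ite, smul_zero]

open Classical in
theorem repr_symbol (γ : ℝ) (g : MvPolynomial σ ℂ) (m : σ →₀ ℕ) :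
    (basis hf).repr (symbol hf γ g) m = if nu f (toR m) = γ then g.coeff m else 0 := by
  induction g using MvPolynomial.induction_on' with
  | monomial k c =>
    rw [symbol_monomial, coeff_monomial, apply_ite (basis hf).repr, map_smul,
      Module.Basis.repr_self, map_zero, Finsupp.smul_single, smul_eq_mul, mul_one]
    by_cases h : k = m
    · simp only [h, if_true, apply_ite (fun x : (σ →₀ ℕ) →₀ ℂ => x m), Finsupp.single_eq_same,
        Finsupp.zero_apply]
    · simp only [if_neg h, ite_self, apply_ite (fun x : (σ →₀ ℕ) →₀ ℂ => x m),
        Finsupp.single_eq_of_ne' h, Finsupp.zero_apply]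
  | add p q hp hq =>
    rw [map_add, map_add, Finsupp.add_apply, hp, hq, coeff_add, ← ite_add_zero]

theorem symbol_lift_symbol (γ : ℝ) (g : MvPolynomial σ ℂ) :
    symbol hf γ (lift hf (symbol hf γ g)) = symbol hf γ g := by
  classical
  refine (basis hf).ext_elem fun m => ?_
  rw [repr_symbol, coeff_lift, repr_symbol]
  split_ifs <;> rfl

theorem lift_symbol_mem_Nle [DecidableEq σ] (γ : ℝ) (g : MvPolynomial σ ℂ) :
    lift hf (symbol hf γ g) ∈ Nle f γ := by
  classical
  intro m hm
  rw [mem_support_iff, coeff_lift, repr_symbol] at hm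
  exact (of_not_not fun h => hm (if_neg h) : nu f (toR m) = γ).le

theorem symbol_eq_zero_iff [DecidableEq σ] {γ : ℝ} {g : MvPolynomial σ ℂ} (hg : g ∈ Nle f γ) :
    symbol hf γ g = 0 ↔ g ∈ Nlt f γ := by
  classical
  rw [(basis hf).ext_elem_iff]
  simp only [repr_symbol, map_zero, Finsupp.zero_apply, ite_eq_right_iff]
  refine ⟨fun h m hm => (hg m hm).lt_of_ne fun hγ => mem_support_iff.mp hm (h m hγ),
    fun h m hγ => ?_⟩
  by_contra hm
  exact (h m (mem_support_iff.mpr hm)).ne hγ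

theorem mem_of_forall_symbol_mem {P : Submodule ℂ (NewtonGraded hf)} {x : NewtonGraded hf}
    (h : ∀ γ, symbol hf γ (lift hf x) ∈ P) : x ∈ P := by
  classical
  have hx : x = ∑ γ ∈ (lift hf x).support.image fun m => nu f (toR m),
      symbol hf γ (lift hf x) := by
    refine (basis hf).ext_elem fun m => ?_
    rw [map_sum, Finsupp.finsetSum_apply, ← coeff_lift]
    simp only [repr_symbol, Finset.sum_ite_eq]
    refine (ite_eq_left_iff.mpr fun hm => ?_).symm
    by_contra h0
    exact hm (Finset.mem_image_of_mem _ (mem_support_iff.mpr (Ne.symm h0)))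
  rw [hx]
  exact Submodule.sum_mem _ fun γ _ => h γ

variable [Finite σ]

theorem mem_divisibleBy_iff {U : Finset σ} {x : NewtonGraded hf} :
    x ∈ divisibleBy hf U ↔ ∀ m ∈ (lift hf x).support, m ∈ positiveOn U := by
  have h : x ∈ divisibleBy hf U ↔ x ∈ Submodule.span ℂ (basis hf '' positiveOn U) := Iff.rfl
  simp only [h, Module.Basis.mem_span_image, Set.subset_def, Finset.mem_coe,
    Finsupp.mem_support_iff, mem_support_iff, coeff_lift]

theorem symbol_mem_divisibleBy {U : Finset σ} {γ : ℝ} {g : MvPolynomial σ ℂ}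
    (hg : ∀ m ∈ g.support, m ∈ positiveOn U) : symbol hf γ g ∈ divisibleBy hf U := by
  classical
  rw [mem_divisibleBy_iff]
  intro m hm
  rw [mem_support_iff, coeff_lift, repr_symbol] at hm
  exact hg m (mem_support_iff.mpr (ite_ne_right_iff.mp hm).2)

theorem prod_X_dvd_lift {U : Finset σ} {x : NewtonGraded hf} (hx : x ∈ divisibleBy hf U) :
    ∏ i ∈ U, X i ∣ lift hf x := by
  rw [mem_divisibleBy_iff] at hx
  rw [(lift hf x).as_sum]
  refine Finset.dvd_sum fun m hm => ?_
  have hU : U ⊆ m.support := fun i hi => Finsupp.mem_support_iff.mpr (hx m hm i hi)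
  rw [monomial_eq, Finsupp.prod]
  refine Dvd.dvd.mul_left (dvd_trans ?_ (Finset.prod_dvd_prod_of_subset _ _ _ hU)) _
  exact Finset.prod_dvd_prod_of_dvd _ _ fun i hi => dvd_pow_self _ (hx m hm i hi)

open Classical in
theorem symbol_lift_monomial_smul_basis (k : f.support →₀ ℕ) (c : ℂ) (m : σ →₀ ℕ) :
    symbol hf (nu f (toR m)) (lift hf (monomial k c • basis hf m)) =
      if k = 0 then c • basis hf m else 0 := by
  rw [monomial_smul_basis]
  by_cases hk : IsTight k m
  · have h0 : nu f (toR (m + shift k)) = nu f (toR m) ↔ k = 0 := by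
      rw [hk, add_eq_left, Nat.cast_eq_zero, Finsupp.degree_eq_zero_iff]
    rw [if_pos hk, map_smul, lift_basis, map_smul, symbol_monomial, one_smul, smul_ite, smul_zero,
      if_congr h0 rfl rfl]
    split_ifs with h
    · rw [h, map_zero, add_zero]
    · rfl
  · rw [if_neg hk, map_zero, map_zero, if_neg (ne_of_apply_ne (IsTight · m) ?_)]
    exact fun h => hk (h ▸ isTight_zero m)

theorem symbol_lift_smul_symbol (s : MvPolynomial f.support ℂ) (γ : ℝ) (g : MvPolynomial σ ℂ) :
    symbol hf γ (lift hf (s • symbol hf γ g)) = constantCoeff s • symbol hf γ g := by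
  classical
  have h : symbol hf γ ∘ₗ (lift hf).toLinearMap ∘ₗ action hf s ∘ₗ symbol hf γ =
      constantCoeff s • symbol hf γ := by
    refine (basisMonomials σ ℂ).ext fun m => ?_
    simp only [coe_basisMonomials, LinearMap.comp_apply, LinearEquiv.coe_coe, LinearMap.smul_apply,
      symbol_monomial, one_smul]
    split_ifs with hm
    · change symbol hf γ (lift hf (s • basis hf m)) = _
      simp_rw [smul_basis hf s, map_sum, ← hm, symbol_lift_monomial_smul_basis,
        Finset.sum_ite_eq', mem_support_iff]
      exact ite_eq_left_iff.mpr fun h => by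
        rw [not_not.mp h, zero_smul]
    · simp only [map_zero, smul_zero]
  exact congrArg (· g) h

variable {hf}

open Classical in
theorem X_smul_basis (w : f.support) (m : σ →₀ ℕ) :
    (X w : MvPolynomial f.support ℂ) • basis hf m =
      if nu f (toR (m + w)) = nu f (toR m) + 1 then basis hf (m + w) else 0 := by
  have h := X_pow_smul_basis hf w 1 m
  rwa [pow_one, one_nsmul, IsTight, shift_single, one_nsmul, Finsupp.degree_single,
    Nat.cast_one] at h

theorem symbol_lift_X_smul (γ : ℝ) (w : f.support) (x : NewtonGraded hf) :
    symbol hf (γ + 1) (lift hf ((X w : MvPolynomial f.support ℂ) • x)) =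
      (X w : MvPolynomial f.support ℂ) • symbol hf γ (lift hf x) := by
  classical
  have h : symbol hf (γ + 1) ∘ₗ (lift hf).toLinearMap ∘ₗ action hf (X w) =
      action hf (X w) ∘ₗ symbol hf γ ∘ₗ (lift hf).toLinearMap := by
    refine (basis hf).ext fun m => ?_
    change symbol hf (γ + 1) (lift hf ((X w : MvPolynomial f.support ℂ) • basis hf m)) =
      (X w : MvPolynomial f.support ℂ) • symbol hf γ (lift hf (basis hf m))
    rw [X_smul_basis, lift_basis, symbol_monomial, one_smul, smul_ite, smul_zero, X_smul_basis]
    by_cases hm : nu f (toR (m + w)) = nu f (toR m) + 1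
    · rw [if_pos hm, lift_basis, symbol_monomial, one_smul, hm]
      exact if_congr (add_left_inj 1) rfl rfl
    · simp only [if_neg hm, map_zero, ite_self]
  exact congrArg (· x) h

theorem symbol_monomial_mul [DecidableEq σ] {γ : ℝ} (w : f.support) {g : MvPolynomial σ ℂ}
    (hg : g ∈ Nle f γ) :
    symbol hf (γ + 1) (monomial (w : σ →₀ ℕ) 1 * g) =
      (X w : MvPolynomial f.support ℂ) • symbol hf γ g := by
  rw [g.as_sum, Finset.mul_sum, map_sum, map_sum, Finset.smul_sum]
  refine Finset.sum_congr rfl fun m hm => ?_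
  rw [monomial_mul, one_mul, symbol_monomial, symbol_monomial, smul_ite, smul_zero, smul_comm,
    X_smul_basis, smul_ite, smul_zero, add_comm m]
  have hle := hf.nu_add_le m w
  have hm' := hg m hm
  rw [add_comm] at hle
  by_cases h : nu f (toR m) = γ
  · rw [if_pos h, h]
  · rw [if_neg h, if_neg fun h' => h (by linarith)]

theorem logSymbol_smul (i : σ) (x : NewtonGraded hf) :
    logSymbol f i • x =
      ∑ w : f.support, (f.coeff w * (w : σ →₀ ℕ) i) • (X w : MvPolynomial f.support ℂ) • x := by
  simp only [logSymbol, Finset.sum_smul, smul_assoc]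

theorem symbol_lift_logSymbol_smul (γ : ℝ) (i : σ) (x : NewtonGraded hf) :
    symbol hf (γ + 1) (lift hf (logSymbol f i • x)) =
      logSymbol f i • symbol hf γ (lift hf x) := by
  simp only [logSymbol_smul, map_sum, map_smul, symbol_lift_X_smul]

theorem symbol_X_mul_pderiv_mul [DecidableEq σ] {γ : ℝ} (i : σ) {g : MvPolynomial σ ℂ}
    (hg : g ∈ Nle f γ) :
    symbol hf (γ + 1) (X i * pderiv i f * g) = logSymbol f i • symbol hf γ g := by
  simp only [X_mul_pderiv_mul, logSymbol_smul, map_sum, map_smul, symbol_monomial_mul _ hg]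

end NewtonGraded

theorem Convenient.X_mul_pderiv_mul_mem_Nle [Finite σ] [DecidableEq σ] (hf : Convenient f)
    {γ : ℝ} (i : σ) {g : MvPolynomial σ ℂ} (hg : g ∈ Nle f γ) :
    X i * pderiv i f * g ∈ Nle f (γ + 1) := by
  rw [X_mul_pderiv_mul]
  refine Submodule.sum_mem _ fun w _ => Submodule.smul_mem _ _ fun m hm => ?_
  rw [mem_support_iff, coeff_monomial_mul', one_mul, ite_ne_right_iff] at hm
  have hle := hf.nu_add_le (m - w) w
  rw [tsub_add_cancel_of_le hm.1] at hle
  exact hle.trans (by gcongr; exact hg _ (mem_support_iff.mpr hm.2))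

end Symbol

section Regular

open RingTheory.Sequence Pointwise

theorem mem_iSup_smul_iff {R M ι : Type*} [CommRing R] [AddCommGroup M] [Module R M] {F : ι → R}
    {T : Finset ι} {N : ι → Submodule R M} {x : M} :
    x ∈ ⨆ i ∈ T, F i • N i ↔ ∃ c : ι → M, (∀ i, c i ∈ N i) ∧ ∑ i ∈ T, F i • c i = x := by
  rw [Submodule.mem_iSup_finset_iff_exists_sum]
  constructor
  · rintro ⟨y, rfl⟩
    choose c hc hy using fun i => (y i).2
    exact ⟨c, hc, Finset.sum_congr rfl fun i _ => hy i⟩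
  · rintro ⟨c, hc, rfl⟩
    exact ⟨fun i => ⟨F i • c i, Submodule.smul_mem_pointwise_smul _ _ _ (hc i)⟩, rfl⟩

theorem map_ofList_smul_top_subtype {R M ι : Type*} [CommRing R] [AddCommGroup M] [Module R M]
    (F : ι → R) (T : Finset ι) (N : Submodule R M) :
    (Ideal.ofList (T.toList.map F) • (⊤ : Submodule R N)).map N.subtype = ⨆ i ∈ T, F i • N := by
  have hspan : Ideal.ofList (T.toList.map F) = ⨆ i ∈ T, Ideal.span {F i} := by
    rw [Ideal.ofList, ← Submodule.span_iUnion₂]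
    congr 1
    ext r
    simp [eq_comm]
  rw [Submodule.map_smul'', Submodule.map_subtype_top, hspan]
  simp only [Submodule.iSup_smul, Submodule.ideal_span_singleton_smul]

theorem ker_constantCoeff_le {ι R : Type*} [CommRing R] {I : Ideal (MvPolynomial ι R)}
    (hI : ∀ i, X i ∈ I) : RingHom.ker (constantCoeff : MvPolynomial ι R →+* R) ≤ I := by
  intro p hp
  refine Ideal.span_le.mpr (Set.image_subset_iff.mpr fun i _ => hI i)
    (mem_ideal_span_X_image (s := Set.univ).mpr fun m hm => ?_)
  have hm0 : m ≠ 0 := by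
    rintro rfl
    exact mem_support_iff.mp hm hp
  obtain ⟨i, hi⟩ := DFunLike.ne_iff.mp hm0
  exact ⟨i, trivial, hi⟩

instance {ι R : Type*} [CommRing R] [IsDomain R] :
    (RingHom.ker (constantCoeff : MvPolynomial ι R →+* R)).IsPrime :=
  RingHom.ker_isPrime _

variable {σ : Type*} {f : MvPolynomial σ ℂ}

theorem constantCoeff_powerSymbol {N : f.support → ℕ} (hN : ∀ w, 0 < N w) (i : σ) :
    constantCoeff (powerSymbol N i) = 0 := by
  simp only [powerSymbol, map_sum, constantCoeff_smul, map_pow, constantCoeff_X,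
    zero_pow (hN _).ne', smul_zero, Finset.sum_const_zero]

theorem constantCoeff_logSymbol (i : σ) : constantCoeff (logSymbol f i) = 0 := by
  simp only [logSymbol, map_sum, constantCoeff_smul, constantCoeff_X, smul_zero,
    Finset.sum_const_zero]

namespace NewtonGraded

variable [Finite σ] {hf : Convenient f} {U T : Finset σ} {j : σ} {x : NewtonGraded hf}

theorem isWeaklyRegular_localizedModule_logSymbol (hnd : Nondegenerate f) {l : List σ}
    (hl : l.Nodup) (hmem : ∀ i, i ∈ l) :
    IsWeaklyRegular (LocalizedModule (RingHom.ker
      (constantCoeff : MvPolynomial f.support ℂ →+* ℂ)).primeCompl (divisibleBy hf U))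
      (l.map (logSymbol f)) := by
  classical
  have := Fintype.ofFinite σ
  obtain ⟨N, hN⟩ := exists_isGeneric (toQ ∘ ((↑) : f.support → σ →₀ ℕ))
  obtain ⟨D⟩ := nonempty_boxDecomposition hN hf.exists_single U
  have := finite_divisibleBy (hf := hf) D
  refine isWeaklyRegular_localizedModule_of_le_radical (rs := l.map (powerSymbol N)) (by simp)
    (List.forall_mem_map.mpr fun i _ => constantCoeff_logSymbol i)
    (ker_constantCoeff_le fun w => Ideal.radical_mono ?_ (X_mem_radical hf hnd w))
    (List.forall_mem_map.mpr fun i _ => constantCoeff_powerSymbol hN.pos i)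
    (isWeaklyRegular_powerSymbol D hl)
  refine sup_le_sup (Ideal.span_mono ?_)
    ((divisibleBy hf U).subtype.annihilator_le_of_injective Subtype.val_injective)
  rintro _ ⟨i, rfl⟩
  exact List.mem_map_of_mem (hmem i)

theorem exists_smul_mem_iSup_logSymbol_smul (hnd : Nondegenerate f) (hj : j ∉ T)
    (hx : x ∈ divisibleBy hf U)
    (h : logSymbol f j • x ∈ ⨆ i ∈ T, logSymbol f i • divisibleBy hf U) :
    ∃ s : MvPolynomial f.support ℂ, constantCoeff s ≠ 0 ∧
      s • x ∈ ⨆ i ∈ T, logSymbol f i • divisibleBy hf U := by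
  classical
  have := Fintype.ofFinite σ
  have hreg := isWeaklyRegular_localizedModule_logSymbol (hf := hf) (U := U) hnd
    (l := T.toList ++ j :: ((insert j T)ᶜ).toList)
    (by simp +contextual [List.nodup_append', Finset.nodup_toList, hj, List.disjoint_left])
    (by simp; grind)
  rw [List.map_append, List.map_cons] at hreg
  rw [← map_ofList_smul_top_subtype] at h ⊢
  obtain ⟨y, hy, hyx⟩ := h
  lift x to divisibleBy hf U using hx
  obtain rfl : y = logSymbol f j • x := Subtype.ext hyx
  obtain ⟨s, hs, hsx⟩ := exists_smul_mem_of_isWeaklyRegular_localizedModule hreg hy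
  exact ⟨s, hs, s • x, hsx, rfl⟩

theorem symbol_lift_mem_divisibleBy (hx : x ∈ divisibleBy hf U) (γ : ℝ) :
    symbol hf γ (lift hf x) ∈ divisibleBy hf U :=
  symbol_mem_divisibleBy hf ((mem_divisibleBy_iff hf).mp hx)

theorem symbol_lift_mem_iSup_logSymbol_smul
    (hx : x ∈ ⨆ i ∈ T, logSymbol f i • divisibleBy hf U) (γ : ℝ) :
    symbol hf γ (lift hf x) ∈ ⨆ i ∈ T, logSymbol f i • divisibleBy hf U := by
  obtain ⟨c, hc, rfl⟩ := mem_iSup_smul_iff.mp hx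
  refine mem_iSup_smul_iff.mpr ⟨fun i => symbol hf (γ - 1) (lift hf (c i)),
    fun i => symbol_lift_mem_divisibleBy (hc i) _, ?_⟩
  simp only [map_sum, ← symbol_lift_logSymbol_smul, sub_add_cancel]

theorem mem_iSup_logSymbol_smul_of_smul_mem (hnd : Nondegenerate f) (hj : j ∉ T)
    (hx : x ∈ divisibleBy hf U)
    (h : logSymbol f j • x ∈ ⨆ i ∈ T, logSymbol f i • divisibleBy hf U) :
    x ∈ ⨆ i ∈ T, logSymbol f i • divisibleBy hf U := by
  let P := (⨆ i ∈ T, logSymbol f i • divisibleBy hf U).restrictScalars ℂ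
  refine mem_of_forall_symbol_mem hf (P := P) fun γ => ?_
  have hγ := symbol_lift_mem_iSup_logSymbol_smul h (γ + 1)
  rw [symbol_lift_logSymbol_smul] at hγ
  obtain ⟨s, hs, hsx⟩ :=
    exists_smul_mem_iSup_logSymbol_smul hnd hj (symbol_lift_mem_divisibleBy hx γ) hγ
  have := symbol_lift_mem_iSup_logSymbol_smul hsx γ
  rw [symbol_lift_smul_symbol] at this
  exact (P.smul_mem_iff hs).mp this

end NewtonGraded

end Regular

section Strictness

open Pointwise

variable {σ : Type*} {f : MvPolynomial σ ℂ}

/-- The ideal generated by the elements `u_i ∂f/∂u_i` with `i ∈ T`. -/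
noncomputable def logJacobian (f : MvPolynomial σ ℂ) (T : Finset σ) : Ideal (MvPolynomial σ ℂ) :=
  Ideal.span ((fun i => X i * pderiv i f) '' T)

theorem sum_X_mul_pderiv_mul_mem_logJacobian (T : Finset σ) (a : σ → MvPolynomial σ ℂ) :
    ∑ i ∈ T, X i * pderiv i f * a i ∈ logJacobian f T :=
  Ideal.sum_mem _ fun _ hi =>
    Ideal.mul_mem_right _ _ (Ideal.subset_span (Set.mem_image_of_mem _ hi))

variable [Finite σ] {hf : Convenient f}

theorem NewtonGraded.mem_divisibleBy_empty (x : NewtonGraded hf) : x ∈ divisibleBy hf ∅ :=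
  (mem_divisibleBy_iff hf).mpr fun _ _ i hi => (Finset.notMem_empty i hi).elim

theorem NewtonGraded.divisibleBy_antitone : Antitone (divisibleBy hf) := fun _ _ h _ hx =>
  (mem_divisibleBy_iff hf).mpr fun m hm i hi => (mem_divisibleBy_iff hf).mp hx m hm i (h hi)

variable [DecidableEq σ]

theorem Convenient.exists_mem_Nle_of_forall_exists_mem_Nlt (hf : Convenient f)
    {P : MvPolynomial σ ℂ → Prop} {α : ℝ}
    (h : ∀ γ > α, ∀ b ∈ Nle f γ, P b → ∃ b' ∈ Nlt f γ, P b') {b : MvPolynomial σ ℂ} (hb : P b) :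
    ∃ b' ∈ Nle f α, P b' := by
  let below (b : MvPolynomial σ ℂ) : Set (σ →₀ ℕ) :=
    {m | ∃ k ∈ b.support, nu f (toR m) ≤ nu f (toR k)}
  induction hcard : (below b).ncard using Nat.strong_induction_on generalizing b with
  | _ c ih =>
  subst hcard
  by_cases hbα : b ∈ Nle f α
  · exact ⟨b, hbα, hb⟩
  obtain ⟨m, hm, hmα⟩ : ∃ m ∈ b.support, α < nu f (toR m) := by
    by_contra! hle
    exact hbα hle
  obtain ⟨k, hk, hmax⟩ := b.support.exists_max_image (fun m => nu f (toR m)) ⟨m, hm⟩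
  obtain ⟨b', hb'k, hb'⟩ := h (nu f (toR k)) (hmα.trans_le (hmax m hm)) b hmax hb
  refine ih _ (Set.ncard_lt_ncard ⟨?_, fun hle => ?_⟩ (hf.finite_nu_le (nu f (toR k)) |>.subset ?_))
    hb' rfl
  · rintro m' ⟨k', hk', hle⟩
    exact ⟨k, hk, hle.trans (hb'k k' hk').le⟩
  · obtain ⟨k', hk', hkk'⟩ := hle ⟨k, hk, le_rfl⟩
    exact hkk'.not_gt (hb'k k' hk')
  · rintro m' ⟨k', hk', hle⟩
    exact hle.trans (hmax k' hk')

namespace NewtonGraded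

theorem exists_symbol_sum_X_mul_pderiv_mul_eq {V : σ → Finset σ} {T : Finset σ} {α : ℝ}
    {g : MvPolynomial σ ℂ} (hg : symbol hf α g ∈ ⨆ i ∈ T, logSymbol f i • divisibleBy hf (V i)) :
    ∃ a : σ → NewtonGraded hf, (∀ i, a i ∈ divisibleBy hf (V i)) ∧
      ∑ i ∈ T, X i * pderiv i f * lift hf (a i) ∈ Nle f α ∧
      symbol hf α (∑ i ∈ T, X i * pderiv i f * lift hf (a i)) = symbol hf α g := by
  obtain ⟨c, hc, hcg⟩ := mem_iSup_smul_iff.mp hg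
  have hle (i : σ) := lift_symbol_mem_Nle hf (α - 1) (lift hf (c i))
  refine ⟨fun i => symbol hf (α - 1) (lift hf (c i)),
    fun i => symbol_lift_mem_divisibleBy (hc i) _, Submodule.sum_mem _ fun i _ => ?_, ?_⟩
  · simpa only [sub_add_cancel] using hf.X_mul_pderiv_mul_mem_Nle i (hle i)
  · have hmul (i : σ) := symbol_X_mul_pderiv_mul (hf := hf) i (hle i)
    simp only [sub_add_cancel, symbol_lift_symbol, ← symbol_lift_logSymbol_smul] at hmul
    rw [map_sum, Finset.sum_congr rfl fun i _ => hmul i, ← map_sum, ← map_sum, hcg,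
      symbol_lift_symbol]

theorem exists_mem_Nlt_sub_mul_mem_logJacobian (hnd : Nondegenerate f) {T : Finset σ} {j : σ}
    (hj : j ∉ T) {α γ : ℝ} (hαγ : α - 1 < γ)
    (hstrict : ∀ y ∈ logJacobian f T, y ∈ Nle f (γ + 1) →
      symbol hf (γ + 1) y ∈ ⨆ i ∈ T, logSymbol f i • divisibleBy hf ∅)
    {x b : MvPolynomial σ ℂ} (hx : x ∈ Nle f α) (hb : b ∈ Nle f γ)
    (hxb : x - X j * pderiv j f * b ∈ logJacobian f T) :
    ∃ b' ∈ Nlt f γ, x - X j * pderiv j f * b' ∈ logJacobian f T := by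
  have hxlt : x ∈ Nlt f (γ + 1) := fun m hm => (hx m hm).trans_lt (by linarith)
  have hxle : x ∈ Nle f (γ + 1) := fun m hm => (hxlt m hm).le
  have hjb : logSymbol f j • symbol hf γ b ∈ ⨆ i ∈ T, logSymbol f i • divisibleBy hf ∅ := by
    have h := hstrict _ hxb (Submodule.sub_mem _ hxle (hf.X_mul_pderiv_mul_mem_Nle j hb))
    rw [map_sub, (symbol_eq_zero_iff hf hxle).mpr hxlt, symbol_X_mul_pderiv_mul j hb,
      zero_sub (G := NewtonGraded hf)] at h
    exact (neg_mem_iff (G := NewtonGraded hf)).mp h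
  obtain ⟨a, -, hale, haeq⟩ := exists_symbol_sum_X_mul_pderiv_mul_eq
    (mem_iSup_logSymbol_smul_of_smul_mem hnd hj (mem_divisibleBy_empty _) hjb)
  refine ⟨b - ∑ i ∈ T, X i * pderiv i f * lift hf (a i),
    (symbol_eq_zero_iff hf (Submodule.sub_mem _ hb hale)).mp ?_, ?_⟩
  · rw [map_sub, haeq, sub_self (G := NewtonGraded hf)]
  · rw [mul_sub, sub_sub_eq_add_sub, add_sub_right_comm]
    exact add_mem hxb (Ideal.mul_mem_left _ _ (sum_X_mul_pderiv_mul_mem_logJacobian T _))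

theorem symbol_mem_iSup_logSymbol_smul (hnd : Nondegenerate f) (T : Finset σ) {α : ℝ}
    {x : MvPolynomial σ ℂ} (hxT : x ∈ logJacobian f T) (hxα : x ∈ Nle f α) :
    symbol hf α x ∈ ⨆ i ∈ T, logSymbol f i • divisibleBy hf ∅ := by
  induction T using Finset.induction_on generalizing α x with
  | empty =>
    rw [logJacobian, Finset.coe_empty, Set.image_empty, Ideal.span_empty, Ideal.mem_bot] at hxT
    rw [hxT, map_zero]
    exact Submodule.zero_mem _
  | insert j T hj ih =>
    rw [logJacobian, Finset.coe_insert, Set.image_insert_eq, Ideal.mem_span_insert] at hxT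
    obtain ⟨b₀, y, hy, hxy⟩ := hxT
    have hb₀ : x - X j * pderiv j f * b₀ ∈ logJacobian f T := by
      rwa [hxy, mul_comm b₀, add_sub_cancel_left]
    obtain ⟨b, hbα, hb⟩ := hf.exists_mem_Nle_of_forall_exists_mem_Nlt
      (P := fun b => x - X j * pderiv j f * b ∈ logJacobian f T) (α := α - 1)
      (fun γ hγ b hbγ hb => exists_mem_Nlt_sub_mul_mem_logJacobian hnd hj hγ
        (fun _ => ih) hxα hbγ hb) hb₀
    have hjb := hf.X_mul_pderiv_mul_mem_Nle j hbα
    have hsymbol := symbol_X_mul_pderiv_mul (hf := hf) j hbα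
    rw [sub_add_cancel] at hjb hsymbol
    rw [← add_sub_cancel (X j * pderiv j f * b) x, map_add, hsymbol, Finset.iSup_insert]
    exact Submodule.add_mem_sup
      (Submodule.smul_mem_pointwise_smul _ _ _ (mem_divisibleBy_empty _))
      (ih hb (Submodule.sub_mem _ hxα hjb))

theorem X_smul_mem_divisibleBy_insert {U : Finset σ} {k : σ} {w : f.support}
    (hw : (w : σ →₀ ℕ) k ≠ 0) {x : NewtonGraded hf} (hx : x ∈ divisibleBy hf U) :
    (X w : MvPolynomial f.support ℂ) • x ∈ divisibleBy hf (insert k U) := by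
  suffices h : Submodule.span ℂ (basis hf '' positiveOn U) ≤
      ((divisibleBy hf (insert k U)).restrictScalars ℂ).comap (action hf (X w)) from h hx
  rw [Submodule.span_le]
  rintro _ ⟨m, hm, rfl⟩
  change (X w : MvPolynomial f.support ℂ) • basis hf m ∈ divisibleBy hf (insert k U)
  rw [X_smul_basis]
  split_ifs
  · refine Submodule.subset_span (Set.mem_image_of_mem _ fun i hi => ?_)
    obtain rfl | hi := Finset.mem_insert.mp hi
    · exact fun h => hw (Nat.eq_zero_of_add_eq_zero_left h)
    · exact add_mem_positiveOn hm _ i hi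
  · exact zero_mem _

theorem logSymbol_smul_mem_divisibleBy_insert {U : Finset σ} (k : σ) {x : NewtonGraded hf}
    (hx : x ∈ divisibleBy hf U) : logSymbol f k • x ∈ divisibleBy hf (insert k U) := by
  rw [logSymbol_smul]
  refine Submodule.sum_mem ((divisibleBy hf (insert k U)).restrictScalars ℂ) fun w _ => ?_
  by_cases hw : (w : σ →₀ ℕ) k = 0
  · rw [hw, Nat.cast_zero, mul_zero, zero_smul]
    exact Submodule.zero_mem _
  · exact Submodule.smul_mem _ _ (X_smul_mem_divisibleBy_insert hw hx)

theorem mem_iSup_logSymbol_smul_divisibleBy_erase (hnd : Nondegenerate f) {x : NewtonGraded hf}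
    {T V : Finset σ} (hxV : x ∈ divisibleBy hf V)
    (hxT : x ∈ ⨆ i ∈ T, logSymbol f i • divisibleBy hf ∅) :
    x ∈ ⨆ i ∈ T, logSymbol f i • divisibleBy hf (V.erase i) :=
  mem_iSup_smul_erase divisibleBy_antitone
    (fun k _ _ => logSymbol_smul_mem_divisibleBy_insert k)
    (fun _ _ _ hj _ => mem_iSup_logSymbol_smul_of_smul_mem hnd hj) T V hxV hxT

end NewtonGraded

end Strictness

section Division

open NewtonGraded Pointwise

variable {σ : Type*} [Fintype σ] {f : MvPolynomial σ ℂ}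

theorem coeff_prod_X_mul_add_one (g : MvPolynomial σ ℂ) (m : σ →₀ ℕ) :
    ((∏ i, X i) * g).coeff (Finsupp.equivFunOnFinite.symm 1 + m) = g.coeff m := by
  have h : (∏ i, X i : MvPolynomial σ ℂ) = monomial (Finsupp.equivFunOnFinite.symm 1) 1 := by
    rw [monomial_eq, Finsupp.prod_fintype _ _ fun _ => pow_zero _, C_1, one_mul]
    exact Finset.prod_congr rfl fun i _ => (pow_one _).symm
  rw [h, coeff_monomial_mul, one_mul]

theorem mem_positiveOn_univ_of_mem_support_prod_X_mul {g : MvPolynomial σ ℂ} {m : σ →₀ ℕ}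
    (hm : m ∈ ((∏ i, X i) * g).support) : m ∈ positiveOn (Finset.univ : Finset σ) := by
  classical
  intro i _ hi
  refine mem_support_iff.mp hm ?_
  rw [← Finset.mul_prod_erase _ _ (Finset.mem_univ i), mul_assoc, coeff_X_mul',
    if_neg (Finsupp.notMem_support_iff.mpr hi)]

theorem forall_mem_support_prod_X_mul {g : MvPolynomial σ ℂ} {P : (σ → ℝ) → Prop} :
    (∀ m ∈ ((∏ i, X i) * g).support, P (toR m)) ↔ ∀ m ∈ g.support, P (toR m + 1) := by
  have htoR (m : σ →₀ ℕ) : toR (Finsupp.equivFunOnFinite.symm 1 + m) = toR m + 1 := by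
    ext i
    simp only [toR, Finsupp.coe_add, Pi.add_apply, Finsupp.equivFunOnFinite_symm_apply_apply,
      Pi.one_apply, Nat.cast_add, Nat.cast_one, add_comm]
  constructor
  · intro h m hm
    rw [← htoR]
    exact h _ (by rwa [mem_support_iff, coeff_prod_X_mul_add_one, ← mem_support_iff])
  · intro h m hm
    have hle : Finsupp.equivFunOnFinite.symm 1 ≤ m := fun i =>
      Nat.one_le_iff_ne_zero.mpr
        (mem_positiveOn_univ_of_mem_support_prod_X_mul hm i (Finset.mem_univ i))
    rw [← add_tsub_cancel_of_le hle, mem_support_iff, coeff_prod_X_mul_add_one,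
      ← mem_support_iff] at hm
    rw [← add_tsub_cancel_of_le hle, htoR]
    exact h _ hm

variable [DecidableEq σ]

theorem symbol_prod_X_mul_mem_iSup (hf : Convenient f) (hnd : Nondegenerate f) {α : ℝ}
    {g : MvPolynomial σ ℂ} (hg : (∏ i, X i) * g ∈ Nle f α)
    (hgL : (∏ i, X i) * g ∈ Nlt f α ⊔ (LIdeal f).restrictScalars ℂ) :
    symbol hf α ((∏ i, X i) * g) ∈
      ⨆ i ∈ Finset.univ, logSymbol f i • divisibleBy hf (Finset.univ.erase i) := by
  obtain ⟨y, hy, l, hl, hyl⟩ := Submodule.mem_sup.mp hgL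
  have hyle : y ∈ Nle f α := fun m hm => (hy m hm).le
  have hlle : l ∈ Nle f α := by
    rw [← add_sub_cancel_left y l, hyl]
    exact Submodule.sub_mem _ hg hyle
  have hlL : l ∈ logJacobian f Finset.univ := by
    rw [logJacobian, Finset.coe_univ, Set.image_univ]
    exact hl
  have hsymbol : symbol hf α ((∏ i, X i) * g) = symbol hf α l := by
    rw [← hyl, map_add, (symbol_eq_zero_iff hf hyle).mpr hy, zero_add (M := NewtonGraded hf)]
  exact mem_iSup_logSymbol_smul_divisibleBy_erase hnd
    (symbol_mem_divisibleBy hf fun _ => mem_positiveOn_univ_of_mem_support_prod_X_mul)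
    (hsymbol ▸ symbol_mem_iSup_logSymbol_smul hnd Finset.univ hlL hlle)

theorem exists_prod_X_mul_sub_mem_Nlt (hf : Convenient f) (hnd : Nondegenerate f) {α : ℝ}
    {g : MvPolynomial σ ℂ} (hg : (∏ i, X i) * g ∈ Nle f α)
    (hgL : (∏ i, X i) * g ∈ Nlt f α ⊔ (LIdeal f).restrictScalars ℂ) :
    ∃ q ∈ IIdeal f, (∏ i, X i) * q ∈ Nle f α ∧ (∏ i, X i) * (g - q) ∈ Nlt f α := by
  obtain ⟨a, ha, hale, haeq⟩ :=
    exists_symbol_sum_X_mul_pderiv_mul_eq (symbol_prod_X_mul_mem_iSup hf hnd hg hgL)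
  choose q hq using fun i => prod_X_dvd_lift hf (ha i)
  have hsum : ∑ i, X i * pderiv i f * lift hf (a i) =
      (∏ i, X i) * ∑ i, pderiv i f * q i := by
    rw [Finset.mul_sum]
    refine Finset.sum_congr rfl fun i _ => ?_
    rw [hq i, ← Finset.mul_prod_erase _ _ (Finset.mem_univ i)]
    ring
  rw [hsum] at hale haeq
  refine ⟨∑ i, pderiv i f * q i, Ideal.sum_mem _ fun i _ =>
    Ideal.mul_mem_right _ _ (Ideal.subset_span ⟨i, rfl⟩), hale, ?_⟩
  rw [mul_sub, ← symbol_eq_zero_iff hf (Submodule.sub_mem _ hg hale), map_sub, haeq,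
    sub_self (G := NewtonGraded hf)]

end Division

section Quotients

/-- The isomorphism `S/(S ∩ (T + K)) ≃ (S + K)/(T + K)`, the right hand side being realised inside
the quotient of the whole module by `T + K`. -/
noncomputable def quotientComapEquivMapMkQ {R M : Type*} [Ring R] [AddCommGroup M] [Module R M]
    (S T K : Submodule R M) :
    (S ⧸ (T ⊔ K).comap S.subtype) ≃ₗ[R] (S ⊔ K).map (T ⊔ K).mkQ :=
  have hker : (T ⊔ K).comap S.subtype = LinearMap.ker ((T ⊔ K).mkQ ∘ₗ S.subtype) := by
    rw [LinearMap.ker_comp, Submodule.ker_mkQ]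
  have hrange : LinearMap.range ((T ⊔ K).mkQ ∘ₗ S.subtype) = (S ⊔ K).map (T ⊔ K).mkQ := by
    have hK : K.map (T ⊔ K).mkQ = ⊥ := by
      rw [← le_bot_iff, Submodule.map_le_iff_le_comap, Submodule.comap_bot, Submodule.ker_mkQ]
      exact le_sup_right
    rw [LinearMap.range_comp, Submodule.range_subtype, Submodule.map_sup, hK, sup_bot_eq]
  Submodule.quotEquivOfEq _ _ hker ≪≫ₗ LinearMap.quotKerEquivRange _ ≪≫ₗ LinearEquiv.ofEq _ _ hrange

variable {n : ℕ} {f : MvPolynomial (Fin n) ℂ} {α : ℝ} {g : MvPolynomial (Fin n) ℂ}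

theorem uProd_mul_mem_Nle : uProd n * g ∈ Nle f α ↔ g ∈ Wle f α :=
  forall_mem_support_prod_X_mul (P := fun x => nu f x ≤ α)

theorem uProd_mul_mem_Nlt : uProd n * g ∈ Nlt f α ↔ g ∈ Wlt f α :=
  forall_mem_support_prod_X_mul (P := fun x => nu f x < α)

theorem uProd_mul_mem_LIdeal (hg : g ∈ IIdeal f) : uProd n * g ∈ LIdeal f := by
  suffices h : IIdeal f ≤ Submodule.comap (LinearMap.mulLeft _ (uProd n)) (LIdeal f) from h hg
  refine Submodule.span_le.mpr (Set.range_subset_iff.mpr fun i => ?_)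
  change uProd n * pderiv i f ∈ LIdeal f
  rw [uProd, ← Finset.prod_erase_mul _ _ (Finset.mem_univ i), mul_assoc]
  exact Ideal.mul_mem_left _ _ (Ideal.subset_span ⟨i, rfl⟩)

theorem uProd_mul_mem_NcapU (hg : g ∈ Wle f α) : uProd n * g ∈ NcapU f α :=
  ⟨uProd_mul_mem_Nle.mpr hg, g, rfl⟩

variable (f α)

/-- Multiplication by `u₁⋯uₙ` as an isomorphism `W_α ℬ ≃ 𝒩_α ℬ ∩ u₁⋯uₙ·ℬ`. -/
noncomputable def mulUProdEquiv : Wle f α ≃ₗ[ℂ] NcapU f α :=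
  LinearEquiv.ofBijective
    ((LinearMap.mulLeft ℂ (uProd n)).restrict fun _ => uProd_mul_mem_NcapU) <| by
    constructor
    · intro g h hgh
      exact Subtype.ext (mul_left_cancel₀ (Finset.prod_ne_zero_iff.mpr fun i _ => X_ne_zero i)
        (congrArg Subtype.val hgh))
    · rintro ⟨_, hx, g, rfl⟩
      exact ⟨⟨g, uProd_mul_mem_Nle.mp hx⟩, rfl⟩

theorem D1_eq_comap :
    D1 f α = (Wlt f α ⊔ (IIdeal f).restrictScalars ℂ).comap (Wle f α).subtype := by
  have hlt : Wlt f α ≤ Wle f α := fun _ hg m hm => (hg m hm).le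
  rw [D1, sup_comm, ← sup_inf_assoc_of_le _ hlt, Submodule.comap_inf, Submodule.comap_subtype_self,
    inf_top_eq]

theorem map_mulUProdEquiv_D1_le :
    (D1 f α).map (mulUProdEquiv f α : Wle f α →ₗ[ℂ] NcapU f α) ≤ D2 f α := by
  rintro _ ⟨⟨g, hg⟩, hgD, rfl⟩
  obtain ⟨q, hq, h, hh, hqh⟩ := Submodule.mem_sup.mp hgD
  change uProd n * g ∈ (LIdeal f).restrictScalars ℂ ⊓ Nle f α ⊓ uB n ⊔ Nlt f α ⊓ uB n
  rw [show g = q + h from hqh.symm, mul_add]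
  exact Submodule.add_mem_sup
    ⟨⟨uProd_mul_mem_LIdeal hq.1, uProd_mul_mem_Nle.mpr hq.2⟩, q, rfl⟩
    ⟨uProd_mul_mem_Nlt.mpr hh, h, rfl⟩

theorem D2_le_comap :
    D2 f α ≤ (Nlt f α ⊔ (LIdeal f).restrictScalars ℂ).comap (NcapU f α).subtype :=
  Submodule.comap_mono (sup_le ((inf_le_left.trans inf_le_left).trans le_sup_right)
    (inf_le_left.trans le_sup_left))

variable {f}

theorem comap_le_map_mulUProdEquiv_D1 (hf : Convenient f) (hnd : Nondegenerate f) :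
    (Nlt f α ⊔ (LIdeal f).restrictScalars ℂ).comap (NcapU f α).subtype ≤
      (D1 f α).map (mulUProdEquiv f α : Wle f α →ₗ[ℂ] NcapU f α) := by
  rintro ⟨_, hx, g, rfl⟩ hxL
  obtain ⟨q, hq, hqle, hlt⟩ := exists_prod_X_mul_sub_mem_Nlt hf hnd hx hxL
  refine ⟨⟨g, uProd_mul_mem_Nle.mp hx⟩, ?_, rfl⟩
  change g ∈ (IIdeal f).restrictScalars ℂ ⊓ Wle f α ⊔ Wlt f α
  rw [← add_sub_cancel q g]
  exact Submodule.add_mem_sup ⟨hq, uProd_mul_mem_Nle.mp hqle⟩ (uProd_mul_mem_Nlt.mp hlt)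

theorem map_mulUProdEquiv_D1 (hf : Convenient f) (hnd : Nondegenerate f) :
    (D1 f α).map (mulUProdEquiv f α : Wle f α →ₗ[ℂ] NcapU f α) = D2 f α :=
  (map_mulUProdEquiv_D1_le f α).antisymm
    ((D2_le_comap f α).trans (comap_le_map_mulUProdEquiv_D1 α hf hnd))

theorem D2_eq_comap (hf : Convenient f) (hnd : Nondegenerate f) :
    D2 f α = (Nlt f α ⊔ (LIdeal f).restrictScalars ℂ).comap (NcapU f α).subtype :=
  (D2_le_comap f α).antisymm
    ((comap_le_map_mulUProdEquiv_D1 α hf hnd).trans (map_mulUProdEquiv_D1_le f α))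

end Quotients

end ToricNewton

open ToricNewton in
/-- multiplication by `u₁⋯uₙ` maps `W_α ℬ` into `𝒩_α ℬ ∩ u₁⋯uₙ·ℬ` and
induces an isomorphism
`λ_α : W_α ℬ/(ℐ ∩ W_α ℬ + W_{<α} ℬ) ≅ (𝒩_α ℬ ∩ u₁⋯uₙ·ℬ)/(ℒ ∩ 𝒩_α ℬ ∩ u₁⋯uₙ·ℬ + 𝒩_{<α} ℬ ∩ u₁⋯uₙ·ℬ)`.
In particular `gr^W_α(ℬ/ℐ) ≅ gr^𝒩_α((ℬ·u₁⋯uₙ + ℒ)/ℒ)`. -/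
theorem mult_by_u_induces_iso {n : ℕ} (hn : 1 ≤ n) (f : MvPolynomial (Fin n) ℂ)
    (hconv : Convenient f) (hnd : Nondegenerate f) :
    ∀ α : ℚ,
      (∀ g ∈ Wle f (α : ℝ), uProd n * g ∈ NcapU f (α : ℝ)) ∧
      (∃ e : (↥(Wle f (α : ℝ)) ⧸ D1 f (α : ℝ)) ≃ₗ[ℂ] (↥(NcapU f (α : ℝ)) ⧸ D2 f (α : ℝ)),
        ∀ (g : MvPolynomial (Fin n) ℂ) (hg : g ∈ Wle f (α : ℝ))
          (hg' : uProd n * g ∈ NcapU f (α : ℝ)),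
          e (Submodule.Quotient.mk ⟨g, hg⟩) = Submodule.Quotient.mk ⟨uProd n * g, hg'⟩) ∧
      Nonempty ((grW f (α : ℝ)) ≃ₗ[ℂ]
        (Submodule.map (Nlt f (α : ℝ) ⊔ (LIdeal f).restrictScalars ℂ).mkQ
          (NcapU f (α : ℝ) ⊔ (LIdeal f).restrictScalars ℂ))) := by
  intro α
  let lam : (Wle f (α : ℝ) ⧸ D1 f α) ≃ₗ[ℂ] NcapU f (α : ℝ) ⧸ D2 f α :=
    Submodule.Quotient.equiv _ _ (mulUProdEquiv f α) (map_mulUProdEquiv_D1 α hconv hnd)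
  have grW_equiv : grW f α ≃ₗ[ℂ] Wle f (α : ℝ) ⧸ D1 f α :=
    (Submodule.quotEquivOfEq _ _ (D1_eq_comap f α) ≪≫ₗ quotientComapEquivMapMkQ _ _ _).symm
  have grNcapU_equiv := Submodule.quotEquivOfEq _ _ (D2_eq_comap (α : ℝ) hconv hnd) ≪≫ₗ
    quotientComapEquivMapMkQ _ _ _
  exact ⟨fun _ => uProd_mul_mem_NcapU, ⟨lam, fun _ _ _ => rfl⟩,
    ⟨grW_equiv ≪≫ₗ lam ≪≫ₗ grNcapU_equiv⟩⟩
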